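/- Let a > 0, ε ∈ (0,1), m ≥ 1 an integer, and let ψ(t,x_h), Ψ(t,x_h) be smooth functions on ℝ×ℝ², Schwartz in x_h for each t, solving the acoustic system ε∂_t ψ + Δ_hΨ = 0, ε∂_t ∇_hΨ + a²∇_h ψ = 0 with initial data ψ₀, ∇_hΨ₀ ∈ W^{m,2}(ℝ²). Let p ∈ (2,∞) and q be given by 2/q = 1/2 − 1/p (so q ∈ (4,∞)). Then for every integer 0 ≤ k ≤ m−1 there is a constant c (independent of ε) such that ‖ψ‖_{L^q(ℝ; W^{k,p}(ℝ²))} + ‖∇_hΨ‖_{L^q(ℝ; W^{k,p}(ℝ²))} ≤ c ε^{1/q} ( ‖ψ₀‖_{W^{m,2}(ℝ²)} + ‖∇_hΨ₀‖_{W^{m,2}(ℝ²)} ). -/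

import Mathlib

/-!
Both `ψ` and the components of `∇_hΨ` are sums of real parts of two half waves
`u(t, x) = ∫ exp(-2πi(κ t |ξ| + ξ·x)) g(ξ) dξ` with `κ = ±a/ε`. Such half waves solve the acoustic
system (`acSol_halfWave`), and the solution is determined by its data: an energy weighted by a
smooth function supported in a space-time region that shrinks fast enough does not increase
(`acoustic_unique`). Together this gives `acoustic_repr`. It remains to estimate one half wave.

The endpoint of the argument is a bound in `L⁴` in time and the sup norm in space (`supWave_four`),
obtained by a `TT*` argument. For `κ = 1` one evaluates `u` along a measurable curve `X(t)` that
nearly realises the supremum, and by duality (`halfWave_duality`) is led to the weighted `L²` norm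
of the extension operator `extOp`. With the weight `exp(-2πs|ξ|) / |ξ|` the square of that norm is a
double time integral against the kernel
`∫ exp(-2π(s + it)|ξ| - 2πi ξ·x) |ξ|⁻¹ dξ`, whose modulus is `|(s + it)² + |x|²|^(-1/2)`, and this is
at most `(2 s |t|)^(-1/2)` uniformly in `x` (`norm_angular`, `norm_waveKernel`). The
Hardy–Littlewood–Sobolev inequality with exponent `1/2` (`hls`) bounds the double integral.
Integrating over the damping `s` with density `2π exp(-2πs)` turns the weight into
`1 / (|ξ|(1 + |ξ|))` (`extOp_bound`), so that `g` is measured in `L²` with weight `|ξ|(1 + |ξ|)`;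
at most one derivative is spent.

Interpolating this with the Plancherel inequality (`four_L2`) by `‖u‖_p^p ≤ ‖u‖_∞^(p-2) ‖u‖_2^2` gives
the `L^q` in time, `L^p` in space bound (`eLpNorm_halfWave_le`, `LqTimeNorm_maj_le`), because
`(1 - 2/p) q = 4`. Rescaling time by `κ` produces the factor `|κ⁻¹|^(1/q) = (ε/a)^(1/q)`. Derivatives of
half waves are half waves with polynomially modified amplitudes, so the bound extends to
`W^{k,p}` at the price of `k + 1 ≤ m` derivatives of the data (`halfWave_strichartz`,
`superposition_strichartz`), and the weighted norms of the amplitudes are controlled by the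
Sobolev norms of the data (`wn_le_sobNorm`).
-/

open MeasureTheory Topology Filter ENNReal

noncomputable section

/-- The horizontal plane `ℝ²`. -/
abbrev Plane : Type := EuclideanSpace ℝ (Fin 2)

/-- The Laplacian `Δ_h F = ∂_{x₁x₁}F + ∂_{x₂x₂}F` on `ℝ²`. -/
def lap2 (F : Plane → ℝ) (x : Plane) : ℝ :=
  ∑ i : Fin 2,
    fderiv ℝ (fun y => fderiv ℝ F y (EuclideanSpace.single i 1)) x (EuclideanSpace.single i 1)

/-- Schwartz-type decay: all derivatives decay faster than any polynomial. -/
def SchwartzLike {F : Type*} [NormedAddCommGroup F] [NormedSpace ℝ F] (f : Plane → F) : Prop :=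
  ∀ k n : ℕ, ∃ C : ℝ, ∀ x : Plane, ‖x‖ ^ k * ‖iteratedFDeriv ℝ n f x‖ ≤ C

/-- The `W^{k,p}(ℝ²)` Sobolev norm (as an extended real), i.e. the sum of the `L^p` norms of
the derivatives of order `0,…,k`. -/
def sobNorm {F : Type*} [NormedAddCommGroup F] [NormedSpace ℝ F]
    (k : ℕ) (p : ℝ≥0∞) (f : Plane → F) : ℝ≥0∞ :=
  ∑ i ∈ Finset.range (k + 1), eLpNorm (fun x => ‖iteratedFDeriv ℝ i f x‖) p volume

/-- The `L^q(ℝ; X)` norm `(∫_ℝ N(t)^q dt)^{1/q}` of a time-dependent norm `N`. -/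
def LqTimeNorm (q : ℝ) (N : ℝ → ℝ≥0∞) : ℝ≥0∞ := (∫⁻ t : ℝ, N t ^ q) ^ (1 / q)

/-- `(ψ, Ψ)` is a smooth, spatially Schwartz solution of the acoustic system
`ε∂_t ψ + Δ_hΨ = 0`, `ε∂_t ∇_hΨ + a²∇_h ψ = 0` on `ℝ × ℝ²`. -/
def IsAcousticSolution (a ε : ℝ) (ψ Ψ : ℝ → Plane → ℝ) : Prop :=
  ContDiff ℝ (⊤ : ℕ∞) (fun p : ℝ × Plane => ψ p.1 p.2) ∧
  ContDiff ℝ (⊤ : ℕ∞) (fun p : ℝ × Plane => Ψ p.1 p.2) ∧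
  (∀ t, SchwartzLike (ψ t)) ∧ (∀ t, SchwartzLike (Ψ t)) ∧
  (∀ t x, ε * deriv (fun s => ψ s x) t + lap2 (Ψ t) x = 0) ∧
  (∀ t x, ε • deriv (fun s => gradient (Ψ s) x) t + (a ^ 2) • gradient (ψ t) x = 0)

/-! ### The Hardy–Littlewood–Sobolev inequality on the line -/

theorem lintegral_abs_sub (f : ℝ → ℝ≥0∞) (t : ℝ) :
    ∫⁻ s, f |t - s| = 2 * ∫⁻ v in Set.Ioi 0, f v := by
  rw [lintegral_sub_left_eq_self (fun s => f |s|) t]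
  rw [← lintegral_add_compl (fun s => f |s|) (measurableSet_Ioi (a := (0:ℝ))), two_mul]
  congr 1
  · exact setLIntegral_congr_fun measurableSet_Ioi (fun s hs => by rw [abs_of_pos hs])
  · rw [Set.compl_Ioi, ← setLIntegral_congr Iio_ae_eq_Iic]
    have h := (Measure.measurePreserving_neg (volume : Measure ℝ)).setLIntegral_comp_preimage_emb
      (MeasurableEquiv.neg ℝ).measurableEmbedding (fun s => f |s|) (Set.Iio 0)
    rw [← h, show (Neg.neg ⁻¹' Set.Iio (0:ℝ)) = Set.Ioi 0 by ext; simp]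
    simp only [abs_neg]
    exact setLIntegral_congr_fun measurableSet_Ioi (fun s hs => by rw [abs_of_pos hs])

/-- The near part of the fractional integral: the kernel `|t - s|^(-1/2)` over `|t - s| ≤ R`. -/
theorem hls_near (t R : ℝ) (hR : 0 < R) :
    ∫⁻ s in {s | |t - s| ≤ R}, ENNReal.ofReal (|t - s| ^ (-(1/2) : ℝ))
      = ENNReal.ofReal (4 * R ^ (1/2 : ℝ)) := by
  have hm : MeasurableSet {s : ℝ | |t - s| ≤ R} :=
    measurableSet_le (by fun_prop) (by fun_prop)
  rw [← lintegral_indicator hm]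
  have := lintegral_abs_sub ((Set.Iic R).indicator fun v => ENNReal.ofReal (v ^ (-(1/2) : ℝ))) t
  refine (lintegral_congr fun s => ?_).trans (this.trans ?_)
  · simp [Set.indicator_apply]
  · rw [lintegral_indicator measurableSet_Iic, Measure.restrict_restrict measurableSet_Iic,
      Set.inter_comm, Set.Ioi_inter_Iic, ← ofReal_integral_eq_lintegral_ofReal]
    · rw [← intervalIntegral.integral_of_le hR.le, integral_rpow (by left; norm_num),
        Real.zero_rpow (by norm_num)]
      rw [show (2 : ℝ≥0∞) = ENNReal.ofReal 2 by simp, ← ENNReal.ofReal_mul (by norm_num)]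
      congr 1
      norm_num
      ring
    · rw [← IntegrableOn, ← intervalIntegrable_iff_integrableOn_Ioc_of_le hR.le]
      exact intervalIntegral.intervalIntegrable_rpow' (by norm_num)
    · filter_upwards [ae_restrict_mem measurableSet_Ioc] with v hv
      exact Real.rpow_nonneg hv.1.le _

/-- The far part of the kernel: its fourth power over `|t - s| > R`. The exponent `4` is the Hölder
conjugate of `4/3`. -/
theorem hls_far (t R : ℝ) (hR : 0 < R) :
    ∫⁻ s in {s | |t - s| ≤ R}ᶜ, ENNReal.ofReal (|t - s| ^ (-(1/2) : ℝ)) ^ (4:ℝ)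
      = ENNReal.ofReal (2 * R⁻¹) := by
  have hm : MeasurableSet {s : ℝ | |t - s| ≤ R} :=
    measurableSet_le (by fun_prop) (by fun_prop)
  rw [← lintegral_indicator hm.compl]
  have := lintegral_abs_sub ((Set.Ioi R).indicator
    fun v => ENNReal.ofReal (v ^ (-(1/2) : ℝ)) ^ (4:ℝ)) t
  refine (lintegral_congr fun s => ?_).trans (this.trans ?_)
  · simp [Set.indicator_apply]
  · rw [lintegral_indicator measurableSet_Ioi, Measure.restrict_restrict measurableSet_Ioi,
      Set.inter_eq_left.2 (Set.Ioi_subset_Ioi hR.le)]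
    rw [setLIntegral_congr_fun (g := fun v => ENNReal.ofReal (v ^ (-2 : ℝ))) measurableSet_Ioi,
      ← ofReal_integral_eq_lintegral_ofReal]
    · rw [integral_Ioi_rpow_of_lt (by norm_num) hR,
        show (2 : ℝ≥0∞) = ENNReal.ofReal 2 by simp, ← ENNReal.ofReal_mul (by norm_num)]
      congr 1
      norm_num
      rw [Real.rpow_neg_one]
    · exact integrableOn_Ioi_rpow_of_lt (by norm_num) hR
    · filter_upwards [ae_restrict_mem measurableSet_Ioi] with v hv
      exact Real.rpow_nonneg (hR.trans hv).le _
    · intro v hv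
      have : 0 < v := hR.trans hv
      simp only
      rw [ENNReal.ofReal_rpow_of_nonneg (by positivity) (by norm_num), ← Real.rpow_mul this.le]
      norm_num

/-- The fractional integral of `w` restricted to the set where `w ≤ β`, bounded by a power of `β`. -/
theorem hls_inner (w : ℝ → ℝ≥0∞) (hw : Measurable w) (N : ℝ) (hN : 0 < N)
    (hwN : ∫⁻ t, w t ^ (4/3 : ℝ) = ENNReal.ofReal N) (β : ℝ) (hβ : 0 < β) (t : ℝ) :
    ∫⁻ s in {s | w s ≤ ENNReal.ofReal β}, w s * ENNReal.ofReal (|t - s| ^ (-(1/2) : ℝ))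
      ≤ ENNReal.ofReal (6 * N ^ (1/2 : ℝ) * β ^ (1/3 : ℝ)) := by
  -- this radius balances the near part, where `w ≤ β` is used, and the far part, where Hölder's
  -- inequality is used
  set R : ℝ := N * β ^ (-(4/3) : ℝ) with hRdef
  have hR : 0 < R := by positivity
  have hm : MeasurableSet {s : ℝ | |t - s| ≤ R} :=
    measurableSet_le (by fun_prop) (by fun_prop)
  have hmw : MeasurableSet {s : ℝ | w s ≤ ENNReal.ofReal β} :=
    measurableSet_le hw measurable_const
  have hk : Measurable fun s => ENNReal.ofReal (|t - s| ^ (-(1/2) : ℝ)) := by fun_prop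
  rw [← lintegral_add_compl _ hm, Measure.restrict_restrict hm, Measure.restrict_restrict hm.compl]
  have h1 : ∫⁻ s in {s | |t - s| ≤ R} ∩ {s | w s ≤ ENNReal.ofReal β},
      w s * ENNReal.ofReal (|t - s| ^ (-(1/2) : ℝ))
      ≤ ENNReal.ofReal (4 * N ^ (1/2 : ℝ) * β ^ (1/3 : ℝ)) := by
    calc _ ≤ ∫⁻ s in {s | |t - s| ≤ R} ∩ {s | w s ≤ ENNReal.ofReal β},
          ENNReal.ofReal β * ENNReal.ofReal (|t - s| ^ (-(1/2) : ℝ)) := by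
          refine setLIntegral_mono' (hm.inter hmw) fun s hs => ?_
          gcongr
          exact hs.2
      _ ≤ ∫⁻ s in {s | |t - s| ≤ R},
          ENNReal.ofReal β * ENNReal.ofReal (|t - s| ^ (-(1/2) : ℝ)) :=
          lintegral_mono_set Set.inter_subset_left
      _ = ENNReal.ofReal (4 * N ^ (1/2 : ℝ) * β ^ (1/3 : ℝ)) := by
          rw [lintegral_const_mul _ hk, hls_near t R hR, ← ENNReal.ofReal_mul hβ.le]
          congr 1
          rw [hRdef, Real.mul_rpow hN.le (by positivity), ← Real.rpow_mul hβ.le]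
          have : β ^ (1/3 : ℝ) = β * β ^ (-(4/3) * (1/2) : ℝ) := by
            nth_rewrite 2 [← Real.rpow_one β]
            rw [← Real.rpow_add hβ]; norm_num
          rw [this]; ring
  have h2 : ∫⁻ s in {s | |t - s| ≤ R}ᶜ ∩ {s | w s ≤ ENNReal.ofReal β},
      w s * ENNReal.ofReal (|t - s| ^ (-(1/2) : ℝ))
      ≤ ENNReal.ofReal (2 * N ^ (1/2 : ℝ) * β ^ (1/3 : ℝ)) := by
    have hc : (4/3 : ℝ).HolderConjugate 4 := by
      rw [Real.holderConjugate_iff]; norm_num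
    calc _ ≤ ∫⁻ s in {s | |t - s| ≤ R}ᶜ,
          (w * fun s => ENNReal.ofReal (|t - s| ^ (-(1/2) : ℝ))) s :=
          lintegral_mono_set Set.inter_subset_left
      _ ≤ (∫⁻ s in {s | |t - s| ≤ R}ᶜ, w s ^ (4/3 : ℝ)) ^ (1 / (4/3) : ℝ)
          * (∫⁻ s in {s | |t - s| ≤ R}ᶜ,
              ENNReal.ofReal (|t - s| ^ (-(1/2) : ℝ)) ^ (4:ℝ)) ^ (1/4 : ℝ) :=
          ENNReal.lintegral_mul_le_Lp_mul_Lq _ hc hw.aemeasurable hk.aemeasurable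
      _ ≤ (ENNReal.ofReal N) ^ (1 / (4/3) : ℝ) * (ENNReal.ofReal (2 * R⁻¹)) ^ (1/4 : ℝ) := by
          rw [hls_far t R hR, ← hwN]
          gcongr
          exact Measure.restrict_le_self
      _ ≤ _ := by
          rw [ENNReal.ofReal_rpow_of_nonneg hN.le (by norm_num),
            ENNReal.ofReal_rpow_of_nonneg (by positivity) (by norm_num),
            ← ENNReal.ofReal_mul (by positivity)]
          apply ENNReal.ofReal_le_ofReal
          rw [hRdef, Real.mul_rpow (by norm_num) (by positivity), Real.inv_rpow (by positivity),
            Real.mul_rpow hN.le (by positivity), ← Real.rpow_mul hβ.le, mul_inv,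
            ← Real.rpow_neg hβ.le, ← Real.rpow_neg hN.le]
          have e1 : (2:ℝ) ^ (1/4 : ℝ) ≤ 2 := by
            conv_rhs => rw [← Real.rpow_one 2]
            exact Real.rpow_le_rpow_of_exponent_le (by norm_num) (by norm_num)
          have e2 : N ^ (1/2 : ℝ) = N ^ (1 / (4/3) : ℝ) * N ^ (-(1/4) : ℝ) := by
            rw [← Real.rpow_add hN]; norm_num
          rw [e2]
          norm_num at e1 ⊢
          have e3 : 0 ≤ N ^ (3/4 : ℝ) * N ^ (-(1/4) : ℝ) * β ^ (1/3 : ℝ) := by positivity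
          nlinarith
  refine (add_le_add h1 h2).trans ?_
  rw [← ENNReal.ofReal_add (by positivity) (by positivity)]
  apply ENNReal.ofReal_le_ofReal
  apply le_of_eq; ring

/-- The Hardy–Littlewood–Sobolev inequality on the line in bilinear form, for the kernel
`|t - s|^(-1/2)` and the exponent `4/3`. -/
theorem hls (w : ℝ → ℝ≥0∞) (hw : Measurable w) (hfin : ∀ t, w t ≠ ⊤) :
    ∫⁻ t, ∫⁻ s, w t * w s * ENNReal.ofReal (|t - s| ^ (-(1/2) : ℝ))
      ≤ 12 * (∫⁻ t, w t ^ (4/3 : ℝ)) ^ (3/2 : ℝ) := by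
  by_cases htop : ∫⁻ t, w t ^ (4/3 : ℝ) = ⊤
  · rw [htop]; simp
  by_cases hzero : ∫⁻ t, w t ^ (4/3 : ℝ) = 0
  · rw [lintegral_eq_zero_iff (by fun_prop)] at hzero
    rw [lintegral_congr_ae (g := fun _ => 0)]
    · simp
    · filter_upwards [hzero] with t ht
      have : w t = 0 := by
        rcases ENNReal.rpow_eq_zero_iff.1 ht with h | h
        · exact h.1
        · exact absurd h.2 (by norm_num)
      simp [this]
  set N := (∫⁻ t, w t ^ (4/3 : ℝ)).toReal with hNdef
  have hN : 0 < N := ENNReal.toReal_pos hzero htop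
  have hNe : ∫⁻ t, w t ^ (4/3 : ℝ) = ENNReal.ofReal N := (ENNReal.ofReal_toReal htop).symm
  -- By symmetry it suffices to integrate over the region `w s ≤ w t`.
  set k : ℝ → ℝ → ℝ≥0∞ := fun t s => w t * w s * ENNReal.ofReal (|t - s| ^ (-(1/2) : ℝ)) with hk
  have hkm : Measurable (Function.uncurry k) := by
    simp only [hk, Function.uncurry_def]; fun_prop
  set f : ℝ → ℝ → ℝ≥0∞ := fun t s => {s | w s ≤ w t}.indicator (k t) s with hf
  have hfm : Measurable (Function.uncurry f) := by
    have : Function.uncurry f = {p : ℝ × ℝ | w p.2 ≤ w p.1}.indicator (Function.uncurry k) := by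
      ext p; simp [hf, Set.indicator_apply, Function.uncurry_def]
    rw [this]
    exact hkm.indicator (measurableSet_le (by fun_prop) (by fun_prop))
  have hle : ∀ t s, k t s ≤ f t s + f s t := by
    intro t s
    have hks : k s t = k t s := by simp only [hk]; rw [abs_sub_comm, mul_comm (w s)]
    simp only [hf, Set.indicator_apply, Set.mem_ofPred_eq, hks]
    rcases le_total (w s) (w t) with h | h <;> simp [h]
  have hinner : ∀ t, ∫⁻ s, f t s ≤ w t ^ (4/3 : ℝ) * ENNReal.ofReal (6 * N ^ (1/2 : ℝ)) := by
    intro t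
    have hms : MeasurableSet {s | w s ≤ w t} := measurableSet_le hw measurable_const
    simp only [hf]
    rw [lintegral_indicator hms]
    rcases eq_or_ne (w t) 0 with h0 | h0
    · simp [hk, h0]
    have hb : 0 < (w t).toReal := ENNReal.toReal_pos h0 (hfin t)
    have he : w t = ENNReal.ofReal (w t).toReal := (ENNReal.ofReal_toReal (hfin t)).symm
    have := hls_inner w hw N hN hNe _ hb t
    rw [← he] at this
    simp only [hk, mul_assoc]
    rw [lintegral_const_mul _ (by fun_prop)]
    refine (mul_le_mul_right this _).trans (le_of_eq ?_)
    rw [mul_comm (6 * _) (_ ^ (1/3 : ℝ)), ENNReal.ofReal_mul (by positivity),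
      ← ENNReal.ofReal_rpow_of_pos hb, ← he, ← mul_assoc]
    congr 1
    nth_rewrite 1 [← ENNReal.rpow_one (w t)]
    rw [← ENNReal.rpow_add _ _ h0 (hfin t)]
    norm_num
  have hfint : ∫⁻ t, ∫⁻ s, f t s ≤ ENNReal.ofReal N * ENNReal.ofReal (6 * N ^ (1/2 : ℝ)) := by
    refine (lintegral_mono hinner).trans ?_
    rw [lintegral_mul_const _ (by fun_prop), hNe]
  calc ∫⁻ t, ∫⁻ s, k t s ≤ ∫⁻ t, ∫⁻ s, (f t s + f s t) :=
        lintegral_mono fun t => lintegral_mono fun s => hle t s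
    _ = (∫⁻ t, ∫⁻ s, f t s) + ∫⁻ t, ∫⁻ s, f s t := by
        rw [← lintegral_add_left (f := fun t => ∫⁻ s, f t s) hfm.lintegral_prod_right']
        exact lintegral_congr fun t => lintegral_add_left (hfm.comp measurable_prodMk_left) _
    _ = 2 * ∫⁻ t, ∫⁻ s, f t s := by
        rw [lintegral_lintegral_swap (f := fun t s => f s t)
          (hfm.comp measurable_swap).aemeasurable, two_mul]
    _ ≤ 2 * (ENNReal.ofReal N * ENNReal.ofReal (6 * N ^ (1/2 : ℝ))) := by gcongr
    _ = _ := by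
        rw [hNe, ENNReal.ofReal_rpow_of_pos hN, show (2 : ℝ≥0∞) = ENNReal.ofReal 2 by simp,
          show (12 : ℝ≥0∞) = ENNReal.ofReal 12 by simp,
          ← ENNReal.ofReal_mul hN.le, ← ENNReal.ofReal_mul (by norm_num),
          ← ENNReal.ofReal_mul (by norm_num)]
        congr 1
        have : N ^ (3/2 : ℝ) = N * N ^ (1/2 : ℝ) := by
          nth_rewrite 2 [← Real.rpow_one N]
          rw [← Real.rpow_add hN]; norm_num
        rw [this]; ring

/-! ### An integral over the circle -/

/-- The mean value property for the function `w ↦ (1 - α w)⁻¹`, analytic near the closed unit disc. -/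
theorem circleAverage_geom {α : ℂ} (hα : ‖α‖ < 1) :
    Real.circleAverage (fun w => (1 - α * w)⁻¹) 0 1 = 1 ∧
      CircleIntegrable (fun w => (1 - α * w)⁻¹) 0 1 := by
  have hne : ∀ w : ℂ, w ∈ Metric.closedBall (0:ℂ) 1 → 1 - α * w ≠ 0 := by
    intro w hw h
    have h1 : α * w = 1 := (sub_eq_zero.1 h).symm
    have h2 : ‖α‖ * ‖w‖ = 1 := by rw [← norm_mul, h1, norm_one]
    have h3 : ‖w‖ ≤ 1 := by simpa using hw
    nlinarith [norm_nonneg α]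
  have hc : ContinuousOn (fun w => (1 - α * w)⁻¹) (Metric.closedBall (0:ℂ) 1) :=
    ContinuousOn.inv₀ (by fun_prop) hne
  constructor
  · have := circleAverage_of_differentiable_on_off_countable (f := fun w => (1 - α * w)⁻¹)
      (c := 0) (R := 1) Set.countable_empty (by simpa using hc) (fun z hz => by
        refine DifferentiableAt.inv (by fun_prop) (hne z ?_)
        apply Metric.ball_subset_closedBall
        simpa using hz)
    simpa using this
  · exact (hc.mono Metric.sphere_subset_closedBall).circleIntegrable (by norm_num)

/-- Partial fractions reduce this average to those of `(1 - α w)⁻¹` and its reflection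
`(1 - β w⁻¹)⁻¹`. -/
theorem circleAverage_kernel {α β : ℂ} (hα : ‖α‖ < 1) (hβ : ‖β‖ < 1) :
    Real.circleAverage (fun w => ((1 - α * w) * (1 - β * w⁻¹))⁻¹) 0 1 = (1 - α * β)⁻¹ := by
  obtain ⟨ha, hai⟩ := circleAverage_geom hα
  obtain ⟨hb, hbi⟩ := circleAverage_geom hβ
  have hb' : Real.circleAverage (fun w => (1 - β * w⁻¹)⁻¹) 0 1 = 1 := by
    generalize hf : (fun w => (1 - β * w)⁻¹) = f at hb
    rw [← Real.circleAverage_zero_one_congr_inv (f := f), ← hf] at hb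
    exact hb
  have hne : ∀ (γ w : ℂ), ‖γ‖ < 1 → ‖w‖ = 1 → 1 - γ * w ≠ 0 := by
    intro γ w hγ hw h
    have h1 : γ * w = 1 := (sub_eq_zero.1 h).symm
    have h2 : ‖γ‖ * ‖w‖ = 1 := by rw [← norm_mul, h1, norm_one]
    rw [hw] at h2; linarith
  have hab : 1 - α * β ≠ 0 := by
    intro h
    have h1 : α * β = 1 := (sub_eq_zero.1 h).symm
    have h2 : ‖α‖ * ‖β‖ = 1 := by rw [← norm_mul, h1, norm_one]
    nlinarith [norm_nonneg α, norm_nonneg β]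
  have hbi' : CircleIntegrable (fun w => (1 - β * w⁻¹)⁻¹) 0 1 := by
    refine ContinuousOn.circleIntegrable (by norm_num) (ContinuousOn.inv₀ ?_ ?_)
    · refine continuousOn_const.sub (continuousOn_const.mul (continuousOn_id.inv₀ ?_))
      intro w hw h
      simp at hw h; simp [h] at hw
    · intro w hw
      exact hne β w⁻¹ hβ (by simpa using hw)
  have hone : CircleIntegrable (fun _ : ℂ => (1:ℂ)) 0 1 := circleIntegrable_const 1 0 1
  have e : Real.circleAverage (fun w => ((1 - α * w) * (1 - β * w⁻¹))⁻¹) 0 1 =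
      Real.circleAverage (fun w => (1 - α * β)⁻¹ •
        (((1 - α * w)⁻¹ + (1 - β * w⁻¹)⁻¹) - 1)) 0 1 := by
    refine Real.circleAverage_congr_sphere fun w hw => ?_
    have hw1 : ‖w‖ = 1 := by simpa using hw
    have hw0 : w ≠ 0 := by rintro rfl; simp at hw1
    have h1 := hne α w hα hw1
    have h2 := hne β w⁻¹ hβ (by simp [hw1])
    simp only [smul_eq_mul]
    rw [eq_comm, inv_mul_eq_iff_eq_mul₀ hab]
    have h2' : w - β ≠ 0 := by
      intro h; apply h2; rw [sub_eq_zero.1 h]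
      rw [mul_inv_cancel₀, sub_self]; rwa [← sub_eq_zero.1 h]
    field_simp
    ring
  rw [e, Real.circleAverage_fun_smul, Real.circleAverage_fun_sub (f₁ := fun w => (1 - α * w)⁻¹ + (1 - β * w⁻¹)⁻¹)
      (f₂ := fun _ => 1) (hai.add hbi') hone,
    Real.circleAverage_fun_add hai hbi', ha, hb', Real.circleAverage_const]
  simp

/-- With `w = exp(iθ)` the function `σ + i(x cos θ + y sin θ)`, where `r² = x² + y²`, factors as
`c (1 - α w)(1 - β w⁻¹)`, and both `|α|` and `|β|` are less than `1` when `|c| > r/2`. The candidates for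
`c` are `(σ ± √(σ² + r²))/2`, with product `-r²/4`; the one of larger modulus has `|c| > r/2` because
equality `|c| = r/2` would force `Re σ = 0`. -/
theorem exists_root (σ : ℂ) (hσ : 0 < σ.re) (r : ℝ) (hr : 0 ≤ r) :
    ∃ c : ℂ, r / 2 < ‖c‖ ∧ c - r ^ 2 / (4 * c) = σ ∧ (c + r ^ 2 / (4 * c)) ^ 2 = σ ^ 2 + r ^ 2 := by
  have key : ∀ c : ℂ, c ≠ 0 → c - r ^ 2 / (4 * c) = σ →
      (c + r ^ 2 / (4 * c)) ^ 2 = σ ^ 2 + r ^ 2 := by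
    intro c hc h
    rw [← h]; field_simp; ring
  have hre : ∀ c : ℂ, c ≠ 0 → c - r ^ 2 / (4 * c) = σ → ‖c‖ ≠ r / 2 := by
    intro c hc h hn
    have hn2 : Complex.normSq c = (r / 2) ^ 2 := by rw [Complex.normSq_eq_norm_sq, hn]
    have : (r:ℂ) ^ 2 / (4 * c) = (starRingEnd ℂ) c := by
      rw [div_eq_iff (by simpa using hc)]
      have h3 : (starRingEnd ℂ) c * c = ((r/2)^2 : ℝ) := by
        rw [mul_comm, Complex.mul_conj, hn2]
      calc (r:ℂ)^2 = 4 * (((r/2)^2 : ℝ) : ℂ) := by push_cast; ring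
        _ = 4 * ((starRingEnd ℂ) c * c) := by rw [h3]
        _ = _ := by ring
    rw [this] at h
    have := congrArg Complex.re h
    simp at this
    linarith
  obtain ⟨s, hs⟩ : ∃ s : ℂ, s ^ 2 = σ ^ 2 + r ^ 2 := IsAlgClosed.exists_pow_nat_eq _ (by norm_num)
  rcases hr.eq_or_lt with h0 | hpos
  · subst h0
    have : σ ≠ 0 := by rintro rfl; simp at hσ
    exact ⟨σ, by simpa using this, by simp, by simp⟩
  set c1 := (σ + s) / 2
  set c2 := (σ - s) / 2
  have hprod : c1 * c2 = -(r:ℂ) ^ 2 / 4 := by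
    calc c1 * c2 = (σ ^ 2 - s ^ 2) / 4 := by simp only [c1, c2]; ring
      _ = _ := by rw [hs]; ring
  have hr0 : (r:ℂ) ≠ 0 := by exact_mod_cast hpos.ne'
  have hp0 : c1 * c2 ≠ 0 := by rw [hprod]; simp [hr0]
  have h1 : c1 ≠ 0 := left_ne_zero_of_mul hp0
  have h2 : c2 ≠ 0 := right_ne_zero_of_mul hp0
  have e1 : c1 - r ^ 2 / (4 * c1) = σ := by
    have : (r:ℂ) ^ 2 = -4 * (c1 * c2) := by rw [hprod]; ring
    rw [this]; field_simp; simp only [c1, c2]; ring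
  have e2 : c2 - r ^ 2 / (4 * c2) = σ := by
    have : (r:ℂ) ^ 2 = -4 * (c1 * c2) := by rw [hprod]; ring
    rw [this]; field_simp; simp only [c1, c2]; ring
  have hnp : ‖c1‖ * ‖c2‖ = (r / 2) ^ 2 := by
    rw [← norm_mul, hprod]; simp; ring
  rcases lt_or_ge (r/2) ‖c1‖ with h | h
  · exact ⟨c1, h, e1, key c1 h1 e1⟩
  · refine ⟨c2, ?_, e2, key c2 h2 e2⟩
    have h' : ‖c1‖ < r / 2 := lt_of_le_of_ne h (hre c1 h1 e1)
    by_contra hcon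
    push Not at hcon
    nlinarith [norm_nonneg c1, norm_nonneg c2]

/-- The integral equals `2π / (c + r²/(4c))` with `c` from `exists_root` and `r² = x² + y²`, and the
square of the denominator is `σ² + r²`. -/
theorem norm_angular (σ : ℂ) (hσ : 0 < σ.re) (x y : ℝ) :
    ‖∫ θ in Set.Ioo (-Real.pi) Real.pi,
        (σ + Complex.I * (x * Real.cos θ + y * Real.sin θ : ℝ))⁻¹‖ ^ 2
      = (2 * Real.pi) ^ 2 / ‖σ ^ 2 + (x ^ 2 + y ^ 2 : ℝ)‖ := by
  set r := √(x ^ 2 + y ^ 2) with hr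
  have hr2 : r ^ 2 = x ^ 2 + y ^ 2 := Real.sq_sqrt (by positivity)
  obtain ⟨c, hc, hcσ, hcD⟩ := exists_root σ hσ r (Real.sqrt_nonneg _)
  have hc0 : c ≠ 0 := by
    rintro rfl; simp at hc; linarith [Real.sqrt_nonneg (x ^ 2 + y ^ 2)]
  set z : ℂ := x - Complex.I * y
  have hzn : ‖z‖ = r := by
    rw [hr, ← Real.sqrt_sq (norm_nonneg z), ← Complex.normSq_eq_norm_sq]
    congr 1; simp [z, Complex.normSq_apply]; ring
  have hzn' : ‖(starRingEnd ℂ) z‖ = r := by rw [Complex.norm_conj, hzn]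
  set α : ℂ := -Complex.I * z / (2 * c)
  set β : ℂ := -Complex.I * (starRingEnd ℂ) z / (2 * c)
  have hα : ‖α‖ < 1 := by
    simp only [α, norm_div, norm_mul, norm_neg, Complex.norm_I, hzn]
    have hc1 := norm_pos_iff.2 hc0
    rw [div_lt_one (by simpa using hc0)]; simp; linarith
  have hβ : ‖β‖ < 1 := by
    simp only [β, norm_div, norm_mul, norm_neg, Complex.norm_I, hzn']
    have hc1 := norm_pos_iff.2 hc0
    rw [div_lt_one (by simpa using hc0)]; simp; linarith
  have hzz : z * (starRingEnd ℂ) z = (r:ℂ) ^ 2 := by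
    rw [Complex.mul_conj, Complex.normSq_eq_norm_sq, hzn]; push_cast; ring
  have hcab : c * (α * β) = - r ^ 2 / (4 * c) := by
    simp only [α, β, ← hzz]
    field_simp
    rw [Complex.I_sq]; ring
  have hmain := circleAverage_kernel hα hβ
  rw [Real.circleAverage_eq_integral_add (-Real.pi)] at hmain
  have hI : ∫ θ in Set.Ioo (-Real.pi) Real.pi,
        (σ + Complex.I * (x * Real.cos θ + y * Real.sin θ : ℝ))⁻¹
      = 2 * Real.pi * (c + r ^ 2 / (4 * c))⁻¹ := by
    rw [← integral_Ioc_eq_integral_Ioo,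
      ← intervalIntegral.integral_of_le (by linarith [Real.pi_pos])]
    have e1 : ∀ θ : ℝ, (σ + Complex.I * (x * Real.cos θ + y * Real.sin θ : ℝ))⁻¹
        = c⁻¹ * ((1 - α * circleMap 0 1 θ) * (1 - β * (circleMap 0 1 θ)⁻¹))⁻¹ := by
      intro θ
      rw [← mul_inv]
      congr 1
      have h0 : circleMap 0 1 θ ≠ 0 := circleMap_ne_center one_ne_zero
      have hinv : (circleMap 0 1 θ)⁻¹ = Complex.cos θ - Complex.sin θ * Complex.I := by
        simp only [circleMap, zero_add, Complex.ofReal_one, one_mul, ← Complex.exp_neg]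
        rw [← neg_mul, Complex.exp_mul_I]; simp; ring
      have hcm : circleMap 0 1 θ = Complex.cos θ + Complex.sin θ * Complex.I := by
        simp only [circleMap, zero_add, Complex.ofReal_one, one_mul]
        rw [Complex.exp_mul_I]
      have h3 : c * ((1 - α * circleMap 0 1 θ) * (1 - β * (circleMap 0 1 θ)⁻¹))
          = c + c * (α * β) - c * α * circleMap 0 1 θ - c * β * (circleMap 0 1 θ)⁻¹ := by
        field_simp; ring
      rw [h3, hcab, ← hcσ, hinv, hcm]
      simp only [α, β, z, map_sub, map_mul, Complex.conj_I, Complex.conj_ofReal]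
      push_cast
      field_simp
      ring_nf
      simp only [show Complex.I ^ 3 = -Complex.I by
        rw [pow_succ, Complex.I_sq]; ring]
      ring
    simp_rw [e1]
    rw [intervalIntegral.integral_const_mul]
    have e2 : ∫ θ in (-Real.pi)..Real.pi,
        ((1 - α * circleMap 0 1 θ) * (1 - β * (circleMap 0 1 θ)⁻¹))⁻¹
        = 2 * Real.pi * (1 - α * β)⁻¹ := by
      rw [← hmain]
      rw [intervalIntegral.integral_comp_add_right
        (f := fun θ => ((1 - α * circleMap 0 1 θ) * (1 - β * (circleMap 0 1 θ)⁻¹))⁻¹)]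
      rw [show (0:ℝ) + -Real.pi = -Real.pi by ring,
        show 2 * Real.pi + -Real.pi = Real.pi by ring, Complex.real_smul, ← mul_assoc]
      push_cast
      rw [mul_inv_cancel₀, one_mul]
      simp [Real.pi_ne_zero]
    rw [e2]
    have : c + r ^ 2 / (4 * c) = c * (1 - α * β) := by
      rw [mul_sub, hcab]; ring
    rw [this, mul_inv]; ring
  rw [hI, ← hr2]
  push_cast
  rw [← hcD, norm_pow, norm_mul, norm_inv, mul_pow, inv_pow, div_eq_mul_inv]
  congr 2
  simp [abs_of_pos Real.pi_pos]

/-! ### The damped wave kernel -/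

/-- The kernel of the half-wave propagator with amplitude `|ξ|⁻¹`, damped by `exp(-2πs|ξ|)`. -/
def waveKernel (s t : ℝ) (x : Plane) : ℂ :=
  ∫ ξ : Plane, Complex.exp (-(2 * Real.pi * (s + t * Complex.I) * ‖ξ‖)
    - 2 * Real.pi * Complex.I * (inner ℝ ξ x : ℝ)) * (‖ξ‖⁻¹ : ℝ)

/-- In polar coordinates the factor `|ξ|⁻¹` cancels the Jacobian and the radial integral is that of an
exponential. -/
theorem waveKernel_eq (s t : ℝ) (hs : 0 < s) (x : Plane) :
    waveKernel s t x = (2 * Real.pi : ℂ)⁻¹ * ∫ θ in Set.Ioo (-Real.pi) Real.pi,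
      ((s + t * Complex.I : ℂ) + Complex.I * (x 0 * Real.cos θ + x 1 * Real.sin θ : ℝ))⁻¹ := by
  have hpi := Real.pi_pos
  set e : ℂ ≃ₗᵢ[ℝ] Plane := Complex.orthonormalBasisOneI.repr with he
  have h1 : waveKernel s t x = ∫ z : ℂ, Complex.exp (-(2 * Real.pi * (s + t * Complex.I) * ‖z‖)
      - 2 * Real.pi * Complex.I * (z.re * x 0 + z.im * x 1 : ℝ)) * (‖z‖⁻¹ : ℝ) := by
    unfold waveKernel
    rw [← (e.measurePreserving).integral_comp e.toHomeomorph.measurableEmbedding]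
    congr 1
    ext z
    have h2 : inner ℝ (e z) x = z.re * x 0 + z.im * x 1 := by
      rw [PiLp.inner_apply]
      simp [Fin.sum_univ_two, he, Complex.orthonormalBasisOneI_repr_apply, mul_comm]
    rw [h2, e.norm_map]
  rw [h1, ← Complex.integral_comp_polarCoord_symm]
  have h3 : ∀ p ∈ polarCoord.target, p.1 • (fun z : ℂ => 
      Complex.exp (-(2 * Real.pi * (s + t * Complex.I) * ‖z‖)
      - 2 * Real.pi * Complex.I * (z.re * x 0 + z.im * x 1 : ℝ)) * (‖z‖⁻¹ : ℝ))
        (Complex.polarCoord.symm p) = 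
      Complex.exp (-(2 * Real.pi * ((s + t * Complex.I : ℂ) + 
        Complex.I * (x 0 * Real.cos p.2 + x 1 * Real.sin p.2 : ℝ))) * p.1) := by
    intro p hp
    have hp1 : 0 < p.1 := hp.1
    have hn : ‖Complex.polarCoord.symm p‖ = p.1 := by
      rw [Complex.norm_polarCoord_symm, abs_of_pos hp1]
    have hre : (Complex.polarCoord.symm p).re = p.1 * Real.cos p.2 := by
      rw [Complex.polarCoord_symm_apply]; simp [Complex.cos_ofReal_re, Complex.sin_ofReal_im, Complex.cos_ofReal_im]
    have him : (Complex.polarCoord.symm p).im = p.1 * Real.sin p.2 := by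
      rw [Complex.polarCoord_symm_apply]; simp [Complex.sin_ofReal_re, Complex.cos_ofReal_im]
    simp only [hn, hre, him]
    rw [Complex.real_smul, mul_comm, mul_assoc]
    have : ((p.1⁻¹ : ℝ) : ℂ) * (p.1 : ℂ) = 1 := by
      rw [← Complex.ofReal_mul, inv_mul_cancel₀ hp1.ne', Complex.ofReal_one]
    rw [this, mul_one]
    congr 1
    push_cast
    ring
  rw [setIntegral_congr_fun polarCoord.open_target.measurableSet h3]
  rw [polarCoord_target, Measure.volume_eq_prod, ← Measure.prod_restrict, integral_prod_symm]
  · rw [← integral_const_mul]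
    congr 1
    ext θ
    have hne : ((s + t * Complex.I : ℂ) + 
        Complex.I * (x 0 * Real.cos θ + x 1 * Real.sin θ : ℝ)).re = s := by
      simp
    dsimp only
    rw [integral_exp_mul_complex_Ioi]
    · have h0 : ((s + t * Complex.I : ℂ) + 
        Complex.I * (x 0 * Real.cos θ + x 1 * Real.sin θ : ℝ)) ≠ 0 := by
        intro h; rw [h] at hne; simp at hne; exact hs.ne hne
      generalize ((s + t * Complex.I : ℂ) + 
        Complex.I * (x 0 * Real.cos θ + x 1 * Real.sin θ : ℝ)) = z at *
      have : (Real.pi : ℂ) ≠ 0 := by exact_mod_cast hpi.ne'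
      simp
      field_simp
    · rw [show (2 * Real.pi : ℂ) = ((2 * Real.pi : ℝ) : ℂ) by push_cast; rfl, Complex.neg_re, Complex.re_ofReal_mul, hne]
      have : 0 < 2 * Real.pi * s := by positivity
      linarith
  · have hb : Integrable (fun p : ℝ × ℝ => Real.exp (-(2 * Real.pi * s) * p.1) * (1:ℝ))
        ((volume.restrict (Set.Ioi 0)).prod (volume.restrict (Set.Ioo (-Real.pi) Real.pi))) := by
      apply Integrable.mul_prod (f := fun ρ : ℝ => Real.exp (-(2 * Real.pi * s) * ρ)) (g := fun _ => (1:ℝ))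
      · exact integrableOn_exp_mul_Ioi (by have : 0 < 2 * Real.pi * s := by positivity
                                           linarith) 0
      · exact integrable_const _
    refine hb.mono' ?_ ?_
    · apply Continuous.aestronglyMeasurable; fun_prop
    · refine Eventually.of_forall fun p => ?_
      rw [Complex.norm_exp, mul_one]
      apply le_of_eq
      congr 1
      simp

/-- The dispersive estimate, uniform in `x`: the imaginary part of `(s + it)² + |x|²` is `2st`. -/
theorem norm_waveKernel (s t : ℝ) (hs : 0 < s) (ht : t ≠ 0) (x : Plane) :
    ‖waveKernel s t x‖ ≤ (2 * s * |t|) ^ (-(1/2) : ℝ) := by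
  have hpi := Real.pi_pos
  have hst : 0 < 2 * s * |t| := by have := abs_pos.mpr ht; positivity
  have h1 := norm_angular (s + t * Complex.I) (by simpa using hs) (x 0) (x 1)
  rw [waveKernel_eq s t hs x, norm_mul]
  set J := ‖∫ θ in Set.Ioo (-Real.pi) Real.pi,
      ((s + t * Complex.I : ℂ) + Complex.I * (x 0 * Real.cos θ + x 1 * Real.sin θ : ℝ))⁻¹‖
  have h2 : 2 * s * |t| ≤ ‖(s + t * Complex.I : ℂ) ^ 2 + ((x 0) ^ 2 + (x 1) ^ 2 : ℝ)‖ := by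
    refine le_trans (le_of_eq ?_) (Complex.abs_im_le_norm _)
    have : ((s + t * Complex.I : ℂ) ^ 2 + ((x 0) ^ 2 + (x 1) ^ 2 : ℝ)).im = 2 * s * t := by
      rw [Complex.add_im, Complex.ofReal_im, sq, Complex.mul_im]; simp; ring
    rw [this, abs_mul, abs_of_pos (by positivity : 0 < 2 * s)]
  have h3 : (‖(2 * Real.pi : ℂ)⁻¹‖ * J) ^ 2 ≤ (2 * s * |t|)⁻¹ := by
    rw [mul_pow, h1]
    have : ‖(2 * Real.pi : ℂ)⁻¹‖ = (2 * Real.pi)⁻¹ := by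
      rw [norm_inv]; simp [abs_of_pos hpi]
    rw [this, ← mul_div_assoc, ← mul_pow, inv_mul_cancel₀ (by positivity), one_pow, one_div]
    exact inv_anti₀ hst h2
  rw [Real.rpow_neg hst.le, ← Real.inv_rpow hst.le, ← Real.sqrt_eq_rpow]
  exact Real.le_sqrt_of_sq_le h3

theorem integrable_exp_div_norm (s : ℝ) (hs : 0 < s) :
    Integrable (fun ξ : Plane => Real.exp (-(2 * Real.pi * s) * ‖ξ‖) * ‖ξ‖⁻¹) := by
  have hpi := Real.pi_pos
  rw [integrable_fun_norm_addHaar volume (f := fun y => Real.exp (-(2 * Real.pi * s) * y) * y⁻¹)]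
  have : IntegrableOn (fun ρ : ℝ => Real.exp (-(2 * Real.pi * s) * ρ)) (Set.Ioi 0) := 
    integrableOn_exp_mul_Ioi (by have : 0 < 2 * Real.pi * s := by positivity
                                 linarith) 0
  refine this.congr_fun ?_ measurableSet_Ioi
  intro y hy
  have hy : 0 < y := hy
  simp
  field_simp

/-! ### The extension operator and the `TT*` bound -/

/-- The Fourier extension of a time density `w` along the curve `X`. It is the transpose of the map
sending an amplitude `g` to the half wave of speed `1` evaluated along `X`. -/
def extOp (w : ℝ → ℂ) (X : ℝ → Plane) (ξ : Plane) : ℂ :=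
  ∫ t, w t * Complex.exp (-(2 * Real.pi * Complex.I * (t * ‖ξ‖ + inner ℝ ξ (X t) : ℝ)))

theorem norm_exp_phase (r : ℝ) : ‖Complex.exp (-(2 * Real.pi * Complex.I * (r : ℝ)))‖ = 1 := by
  rw [Complex.norm_exp]; simp

theorem stronglyMeasurable_extOp (w : ℝ → ℂ) (X : ℝ → Plane) (hw : Measurable w) (hX : Measurable X) :
    StronglyMeasurable (extOp w X) := by
  unfold extOp
  apply StronglyMeasurable.integral_prod_right
    (f := fun (ξ : Plane) (t : ℝ) => w t * Complex.exp (-(2 * Real.pi * Complex.I * (t * ‖ξ‖ + inner ℝ ξ (X t) : ℝ))))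
  apply Measurable.stronglyMeasurable
  fun_prop

/-- The `TT*` step: the weighted square is expanded into a double time integral against `waveKernel`,
to which the dispersive estimate and the Hardy–Littlewood–Sobolev inequality apply. -/
theorem extOp_damped (w : ℝ → ℂ) (X : ℝ → Plane) (hw : Measurable w) (hX : Measurable X)
    (hi : Integrable w) (s : ℝ) (hs : 0 < s) :
    ∫⁻ ξ : Plane, ENNReal.ofReal (Real.exp (-(2 * Real.pi * s) * ‖ξ‖) * ‖ξ‖⁻¹) * ‖extOp w X ξ‖ₑ ^ 2
      ≤ ENNReal.ofReal ((2 * s) ^ (-(1/2) : ℝ)) * (12 * (∫⁻ t, ‖w t‖ₑ ^ (4/3 : ℝ)) ^ (3/2 : ℝ)) := by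
  set G : Plane → ℝ × ℝ → ℂ := fun ξ p =>
    ((Real.exp (-(2 * Real.pi * s) * ‖ξ‖) * ‖ξ‖⁻¹ : ℝ) : ℂ) *
     ((w p.1 * Complex.exp (-(2 * Real.pi * Complex.I * (p.1 * ‖ξ‖ + inner ℝ ξ (X p.1) : ℝ)))) *
     (starRingEnd ℂ) (w p.2 * Complex.exp (-(2 * Real.pi * Complex.I * (p.2 * ‖ξ‖ + inner ℝ ξ (X p.2) : ℝ))))) with hG
  have hGm : Measurable (Function.uncurry G) := by
    rw [hG]
    have hc : Measurable (starRingEnd ℂ : ℂ → ℂ) := Complex.continuous_conj.measurable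
    apply Measurable.mul
    · fun_prop
    · apply Measurable.mul
      · fun_prop
      · apply hc.comp
        fun_prop
  have hGi : Integrable (Function.uncurry G) (volume.prod volume) := by
    have hb : Integrable (fun z : Plane × (ℝ × ℝ) => (Real.exp (-(2 * Real.pi * s) * ‖z.1‖) * ‖z.1‖⁻¹) *
        (‖w z.2.1‖ * ‖w z.2.2‖)) (volume.prod volume) :=
      (integrable_exp_div_norm s hs).mul_prod (hi.norm.mul_prod hi.norm)
    refine hb.mono' hGm.aestronglyMeasurable (Eventually.of_forall fun z => ?_)
    simp only [Function.uncurry, hG, norm_mul, RCLike.norm_conj, norm_exp_phase, mul_one, Complex.norm_real]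
    simp
  have h1 : ∀ ξ, ∫ p, G ξ p = ((Real.exp (-(2 * Real.pi * s) * ‖ξ‖) * ‖ξ‖⁻¹ * ‖extOp w X ξ‖ ^ 2 : ℝ) : ℂ) := by
    intro ξ
    simp only [hG]
    rw [integral_const_mul, Measure.volume_eq_prod, integral_prod_mul
      (f := fun t => w t * Complex.exp (-(2 * Real.pi * Complex.I * (t * ‖ξ‖ + inner ℝ ξ (X t) : ℝ))))
      (g := fun t => (starRingEnd ℂ) (w t * Complex.exp (-(2 * Real.pi * Complex.I * (t * ‖ξ‖ + inner ℝ ξ (X t) : ℝ))))),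
      integral_conj]
    change _ * (extOp w X ξ * (starRingEnd ℂ) (extOp w X ξ)) = _
    rw [Complex.mul_conj, Complex.normSq_eq_norm_sq]
    push_cast
    rfl
  have h2 : ∫⁻ ξ : Plane, ENNReal.ofReal (Real.exp (-(2 * Real.pi * s) * ‖ξ‖) * ‖ξ‖⁻¹) * ‖extOp w X ξ‖ₑ ^ 2
      = ‖∫ ξ, ∫ p, G ξ p‖ₑ := by
    have hint := hGi.integral_prod_left
    simp only [Function.uncurry] at hint
    simp only [h1] at hint ⊢
    rw [integral_complex_ofReal]
    have hint' := hint.re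
    simp only [RCLike.re_to_complex, Complex.ofReal_re] at hint'
    have hnn : ∀ ξ, 0 ≤ Real.exp (-(2 * Real.pi * s) * ‖ξ‖) * ‖ξ‖⁻¹ * ‖extOp w X ξ‖ ^ 2 := fun ξ => by positivity
    rw [← ofReal_norm]
    rw [Complex.norm_real, Real.norm_eq_abs]
    rw [abs_of_nonneg (integral_nonneg hnn), ofReal_integral_eq_lintegral_ofReal hint' (Eventually.of_forall hnn)]
    congr 1
    ext ξ
    rw [ENNReal.ofReal_mul (q := ‖extOp w X ξ‖ ^ 2) (by positivity), ENNReal.ofReal_pow (norm_nonneg _), ofReal_norm]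
  rw [h2, integral_integral_swap hGi]
  have h3 : ∀ p : ℝ × ℝ, ∫ ξ, G ξ p = w p.1 * (starRingEnd ℂ) (w p.2) * waveKernel s (p.1 - p.2) (X p.1 - X p.2) := by
    intro p
    unfold waveKernel
    rw [← integral_const_mul]
    congr 1
    ext ξ
    simp only [hG]
    rw [map_mul, ← Complex.exp_conj, inner_sub_right]
    rw [Complex.ofReal_mul (Real.exp _)]
    have key : ∀ A B C D E F H : ℂ, A * C * B = D → A * E * (F * C * (H * B)) = F * H * (D * E) := by
      intro A B C D E F H h; rw [← h]; ring
    apply key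
    rw [Complex.ofReal_exp, ← Complex.exp_add, ← Complex.exp_add]
    congr 1
    have h2c : (starRingEnd ℂ) 2 = 2 := Complex.conj_ofNat 2
    simp [h2c]
    ring
  simp only [h3]
  have hswap := hGi.integral_prod_right
  simp only [Function.uncurry] at hswap
  simp only [h3] at hswap
  rw [Measure.volume_eq_prod] at hswap ⊢
  rw [integral_prod _ hswap]
  calc _ ≤ ∫⁻ t, ∫⁻ t', ‖w t * (starRingEnd ℂ) (w t') * waveKernel s (t - t') (X t - X t')‖ₑ := by
        refine (enorm_integral_le_lintegral_enorm _).trans (lintegral_mono fun t => ?_)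
        exact enorm_integral_le_lintegral_enorm _
    _ ≤ ∫⁻ t, ∫⁻ t', ENNReal.ofReal ((2 * s) ^ (-(1/2) : ℝ)) * (‖w t‖ₑ * ‖w t'‖ₑ * ENNReal.ofReal (|t - t'| ^ (-(1/2) : ℝ))) := by
        refine lintegral_mono fun t => lintegral_mono_ae ?_
        have : ∀ᵐ t' : ℝ, t' ≠ t := by simp [ae_iff]
        filter_upwards [this] with t' ht'
        rw [enorm_mul, enorm_mul]
        have hk := norm_waveKernel s (t - t') hs (sub_ne_zero.mpr ht'.symm) (X t - X t')
        have hk' : ‖waveKernel s (t - t') (X t - X t')‖ₑ ≤ ENNReal.ofReal ((2 * s) ^ (-(1/2) : ℝ)) * ENNReal.ofReal (|t - t'| ^ (-(1/2) : ℝ)) := by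
          rw [← ENNReal.ofReal_mul (by positivity), ← Real.mul_rpow (by positivity) (abs_nonneg _), ← ofReal_norm]
          exact ENNReal.ofReal_le_ofReal hk
        have hc : ‖(starRingEnd ℂ) (w t')‖ₑ = ‖w t'‖ₑ := by
          rw [← ofReal_norm, RCLike.norm_conj, ofReal_norm]
        rw [hc]
        calc _ ≤ ‖w t‖ₑ * ‖w t'‖ₑ * (ENNReal.ofReal ((2 * s) ^ (-(1/2) : ℝ)) * ENNReal.ofReal (|t - t'| ^ (-(1/2) : ℝ))) := by gcongr
          _ = _ := by ring
    _ = ENNReal.ofReal ((2 * s) ^ (-(1/2) : ℝ)) * ∫⁻ t, ∫⁻ t', ‖w t‖ₑ * ‖w t'‖ₑ * ENNReal.ofReal (|t - t'| ^ (-(1/2) : ℝ)) := by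
        rw [← lintegral_const_mul' _ _ ENNReal.ofReal_ne_top]
        congr 1; ext t
        rw [← lintegral_const_mul' _ _ ENNReal.ofReal_ne_top]
    _ ≤ _ := by
        gcongr
        exact hls (fun t => ‖w t‖ₑ) hw.enorm (fun t => enorm_ne_top)

/-- The integral over `s > 0` of `2π exp(-2πs)` against the constant `(2s)^(-1/2)` of the damped
estimate. -/
def cTT : ℝ≥0∞ := ∫⁻ s in Set.Ioi (0:ℝ), ENNReal.ofReal (2 * Real.pi * Real.exp (-(2 * Real.pi * s)) * (2 * s) ^ (-(1/2) : ℝ))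

theorem cTT_ne_top : cTT ≠ ⊤ := by
  have hpi := Real.pi_pos
  have h : IntegrableOn (fun s : ℝ => s ^ (-(1/2) : ℝ) * Real.exp (-(2 * Real.pi) * s)) (Set.Ioi 0) := by
    have := integrableOn_rpow_mul_exp_neg_mul_rpow (p := 1) (s := -(1/2)) (b := 2 * Real.pi) (by norm_num) (by norm_num) (by positivity)
    simpa using this
  have h2 := (h.const_mul (2 * Real.pi * 2 ^ (-(1/2) : ℝ))).lintegral_lt_top
  refine (lt_of_le_of_lt (le_of_eq ?_) h2).ne
  refine setLIntegral_congr_fun measurableSet_Ioi fun s hs => ?_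
  have hs : 0 < s := hs
  rw [Real.mul_rpow (by norm_num) hs.le]
  congr 1
  rw [neg_mul]
  ring

/-- Integration of the damped estimate over `s`: since `∫ 2π exp(-2πs(1 + |ξ|)) ds = 1/(1 + |ξ|)`, the
damping leaves the weight `1/(|ξ|(1 + |ξ|))`. -/
theorem extOp_bound (w : ℝ → ℂ) (X : ℝ → Plane) (hw : Measurable w) (hX : Measurable X)
    (hi : Integrable w) :
    ∫⁻ ξ : Plane, ENNReal.ofReal ((‖ξ‖ * (1 + ‖ξ‖))⁻¹) * ‖extOp w X ξ‖ₑ ^ 2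
      ≤ cTT * (12 * (∫⁻ t, ‖w t‖ₑ ^ (4/3 : ℝ)) ^ (3/2 : ℝ)) := by
  have hpi := Real.pi_pos
  have hm := (stronglyMeasurable_extOp w X hw hX).measurable
  have h1 : ∀ ξ : Plane, ENNReal.ofReal ((‖ξ‖ * (1 + ‖ξ‖))⁻¹) * ‖extOp w X ξ‖ₑ ^ 2 =
      ∫⁻ s in Set.Ioi (0:ℝ), ENNReal.ofReal (2 * Real.pi * Real.exp (-(2 * Real.pi * s))) *
        (ENNReal.ofReal (Real.exp (-(2 * Real.pi * s) * ‖ξ‖) * ‖ξ‖⁻¹) * ‖extOp w X ξ‖ₑ ^ 2) := by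
    intro ξ
    have hneg : -(2 * Real.pi * (1 + ‖ξ‖)) < 0 := by
      have : 0 < 2 * Real.pi * (1 + ‖ξ‖) := by positivity
      linarith
    have h0 := integrableOn_exp_mul_Ioi hneg 0
    have h2 := integral_exp_mul_Ioi hneg 0
    have h3 : ∫⁻ s in Set.Ioi (0:ℝ), ENNReal.ofReal (Real.exp (-(2 * Real.pi * (1 + ‖ξ‖)) * s)) =
        ENNReal.ofReal ((2 * Real.pi * (1 + ‖ξ‖))⁻¹) := by
      rw [← ofReal_integral_eq_lintegral_ofReal h0 (Eventually.of_forall fun s => (Real.exp_pos _).le), h2]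
      congr 1
      simp
    calc _ = ENNReal.ofReal (2 * Real.pi * ‖ξ‖⁻¹) * ‖extOp w X ξ‖ₑ ^ 2 * ENNReal.ofReal ((2 * Real.pi * (1 + ‖ξ‖))⁻¹) := by
          rw [mul_right_comm, ← ENNReal.ofReal_mul (by positivity)]
          congr 2
          field_simp
      _ = _ := by
          rw [← h3, ← lintegral_const_mul _ (by fun_prop)]
          congr 1; ext s
          rw [mul_right_comm, ← ENNReal.ofReal_mul (by positivity), ← mul_assoc, ← ENNReal.ofReal_mul (by positivity)]
          congr 2
          rw [show -(2 * Real.pi * (1 + ‖ξ‖)) * s = -(2 * Real.pi * s) + -(2 * Real.pi * s) * ‖ξ‖ by ring, Real.exp_add]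
          ring
  simp only [h1]
  rw [lintegral_lintegral_swap]
  · unfold cTT
    rw [← lintegral_mul_const _ (by fun_prop)]
    · refine setLIntegral_mono' measurableSet_Ioi fun s hs => ?_
      rw [lintegral_const_mul' _ _ ENNReal.ofReal_ne_top, ENNReal.ofReal_mul (q := (2 * s) ^ (-(1/2) : ℝ)) (by positivity),
        mul_assoc (ENNReal.ofReal (2 * Real.pi * Real.exp (-(2 * Real.pi * s))))]
      exact mul_le_mul_right (extOp_damped w X hw hX hi s hs) _
  · apply Measurable.aemeasurable
    have : Measurable fun z : Plane × ℝ => extOp w X z.1 := hm.comp measurable_fst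
    simp only [Function.uncurry_def]
    fun_prop

/-! ### The `L⁴` in time, sup in space bound for half waves -/

/-- The half wave with speed `κ` and amplitude `g`. The signs in the phase are chosen so that the
half wave is a Fourier transform in Mathlib's normalisation. -/
def halfWave (κ : ℝ) (g : Plane → ℂ) (t : ℝ) (x : Plane) : ℂ :=
  ∫ ξ : Plane, Complex.exp (-(2 * Real.pi * Complex.I * (κ * t * ‖ξ‖ + inner ℝ ξ x : ℝ))) * g ξ

/-- The squared `L²` norm of the amplitude with weight `|ξ|(1 + |ξ|)`, which lies between the
squared homogeneous Sobolev norm of order `1/2` and the squared inhomogeneous norm of order `1`. -/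
def mass (g : Plane → ℂ) : ℝ≥0∞ := ∫⁻ ξ : Plane, ENNReal.ofReal (‖ξ‖ * (1 + ‖ξ‖)) * ‖g ξ‖ₑ ^ 2

/-- The sup norm in space of the half wave at time `t`. The supremum is taken over a dense sequence,
which makes it visibly measurable in `t`; by continuity it bounds the half wave everywhere. -/
def supWave (κ : ℝ) (g : Plane → ℂ) (t : ℝ) : ℝ≥0∞ :=
  ⨆ n : ℕ, ‖halfWave κ g t (TopologicalSpace.denseSeq Plane n)‖ₑ

theorem measurable_halfWave (κ : ℝ) (g : Plane → ℂ) (hg : Measurable g) :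
    Measurable (fun z : ℝ × Plane => halfWave κ g z.1 z.2) := by
  unfold halfWave
  apply StronglyMeasurable.measurable
  apply StronglyMeasurable.integral_prod_right
    (f := fun (z : ℝ × Plane) (ξ : Plane) => Complex.exp (-(2 * Real.pi * Complex.I * (κ * z.1 * ‖ξ‖ + inner ℝ ξ z.2 : ℝ))) * g ξ)
  apply Measurable.stronglyMeasurable
  fun_prop

theorem measurable_halfWave_along (κ : ℝ) (g : Plane → ℂ) (hg : Measurable g) (X : ℝ → Plane)
    (hX : Measurable X) : Measurable (fun t => halfWave κ g t (X t)) := by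
  have h1 := measurable_halfWave κ g hg
  have h2 : Measurable (fun t : ℝ => (t, X t)) := measurable_id.prodMk hX
  have h3 : (fun t => halfWave κ g t (X t)) =
      (fun z : ℝ × Plane => halfWave κ g z.1 z.2) ∘ (fun t : ℝ => (t, X t)) := by
    funext t; rfl
  rw [h3]
  exact Measurable.comp h1 h2

theorem norm_halfWave_le (κ : ℝ) (g : Plane → ℂ) (t : ℝ) (x : Plane) :
    ‖halfWave κ g t x‖ ≤ ∫ ξ, ‖g ξ‖ := by
  unfold halfWave
  refine (norm_integral_le_integral_norm _).trans (le_of_eq ?_)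
  congr 1; ext ξ
  rw [norm_mul, norm_exp_phase, one_mul]

theorem continuous_halfWave (κ : ℝ) (g : Plane → ℂ) (hi : Integrable g) (t : ℝ) :
    Continuous (halfWave κ g t) := by
  unfold halfWave
  apply continuous_of_dominated (bound := fun ξ => ‖g ξ‖)
  · intro x
    apply AEStronglyMeasurable.mul _ hi.1
    apply Continuous.aestronglyMeasurable; fun_prop
  · intro x
    refine Eventually.of_forall fun ξ => ?_
    rw [norm_mul, norm_exp_phase, one_mul]
  · exact hi.norm
  · refine Eventually.of_forall fun ξ => ?_
    fun_prop

theorem enorm_halfWave_le_sup (κ : ℝ) (g : Plane → ℂ) (hi : Integrable g) (t : ℝ) (x : Plane) :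
    ‖halfWave κ g t x‖ₑ ≤ supWave κ g t := by
  have hc : IsClosed {x | ‖halfWave κ g t x‖ₑ ≤ supWave κ g t} :=
    isClosed_le (continuous_halfWave κ g hi t).enorm continuous_const
  have : closure (Set.range (TopologicalSpace.denseSeq Plane)) ⊆ _ := hc.closure_subset_iff.mpr (by
    rintro _ ⟨n, rfl⟩
    exact le_iSup (fun n : ℕ => ‖halfWave κ g t (TopologicalSpace.denseSeq Plane n)‖ₑ) n)
  exact this ((TopologicalSpace.denseRange_denseSeq Plane).closure_range ▸ Set.mem_univ x)

theorem measurable_supWave (κ : ℝ) (g : Plane → ℂ) (hg : Measurable g) :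
    Measurable (supWave κ g) := by
  unfold supWave
  have := measurable_halfWave κ g hg
  apply Measurable.iSup
  intro n
  exact (this.comp (measurable_id.prodMk measurable_const)).enorm

/-- Fubini's theorem moves the half wave onto `extOp`, and the Cauchy–Schwarz inequality with the weight
`|ξ|(1 + |ξ|)` and its inverse separates `g` from `w`. -/
theorem halfWave_duality (g : Plane → ℂ) (hg : Measurable g) (hi : Integrable g)
    (w : ℝ → ℂ) (X : ℝ → Plane) (hw : Measurable w) (hX : Measurable X) (hwi : Integrable w) :
    ‖∫ t, w t * halfWave 1 g t (X t)‖ₑ ≤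
      mass g ^ (1/2 : ℝ) * (cTT * (12 * (∫⁻ t, ‖w t‖ₑ ^ (4/3 : ℝ)) ^ (3/2 : ℝ))) ^ (1/2 : ℝ) := by
  have h1 : ∫ t, w t * halfWave 1 g t (X t) = ∫ ξ, g ξ * extOp w X ξ := by
    unfold halfWave extOp
    simp only [← integral_const_mul]
    rw [integral_integral_swap]
    · congr 1; ext ξ
      congr 1; ext t
      rw [one_mul]
      ring
    · refine (hwi.norm.mul_prod hi.norm).mono' ?_ (Eventually.of_forall fun z => ?_)
      · apply Measurable.aestronglyMeasurable
        simp only [Function.uncurry_def]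
        fun_prop
      · simp only [Function.uncurry, norm_mul, norm_exp_phase, one_mul, le_refl]
  rw [h1]
  have hm := (stronglyMeasurable_extOp w X hw hX).measurable
  have hne : ∀ᵐ ξ : Plane, ξ ≠ 0 := by simp [ae_iff]
  calc _ ≤ ∫⁻ ξ, ‖g ξ * extOp w X ξ‖ₑ := enorm_integral_le_lintegral_enorm _
    _ = ∫⁻ ξ, ((fun ξ => ENNReal.ofReal (‖ξ‖ * (1 + ‖ξ‖)) ^ (1/2 : ℝ) * ‖g ξ‖ₑ) *
          (fun ξ => ENNReal.ofReal ((‖ξ‖ * (1 + ‖ξ‖))⁻¹) ^ (1/2 : ℝ) * ‖extOp w X ξ‖ₑ)) ξ := by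
        refine lintegral_congr_ae ?_
        filter_upwards [hne] with ξ hξ
        have hpos : 0 < ‖ξ‖ := norm_pos_iff.mpr hξ
        rw [Pi.mul_apply, mul_mul_mul_comm, ← ENNReal.mul_rpow_of_nonneg _ _ (by norm_num), ← ENNReal.ofReal_mul (by positivity),
          mul_inv_cancel₀ (by positivity), enorm_mul]
        simp
    _ ≤ _ := by
        refine (ENNReal.lintegral_mul_le_Lp_mul_Lq volume (p := 2) (q := 2) ⟨by norm_num, by norm_num, by norm_num⟩ (by fun_prop) (by fun_prop)).trans ?_
        gcongr
        · unfold mass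
          gcongr with ξ
          rw [ENNReal.mul_rpow_of_nonneg _ _ (by norm_num), ← ENNReal.rpow_mul]
          norm_num
        · refine le_trans ?_ (extOp_bound w X hw hX hwi)
          gcongr with ξ
          rw [ENNReal.mul_rpow_of_nonneg _ _ (by norm_num), ← ENNReal.rpow_mul]
          norm_num

/-- The `L⁴` in time bound along a curve, by duality with `w = conj(u) |u|²`, where `u` is the half wave
along `X` cut off to `[-T, T]`. The cutoff makes the fourth power integrable, so that it can be
divided out. -/
theorem lintegral_halfWave_four (g : Plane → ℂ) (hg : Measurable g) (hi : Integrable g)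
    (X : ℝ → Plane) (hX : Measurable X) (T : ℝ) :
    ∫⁻ t, (Set.Icc (-T) T).indicator (fun t => ‖halfWave 1 g t (X t)‖ₑ ^ 4) t ≤ (12 * cTT) ^ 2 * mass g ^ 2 := by
  obtain ⟨u, hu⟩ : ∃ u : ℝ → ℂ, u = fun t => (Set.Icc (-T) T).indicator (fun t => halfWave 1 g t (X t)) t := ⟨_, rfl⟩
  have hum : Measurable u := by
    rw [hu]
    exact (measurable_halfWave_along 1 g hg X hX).indicator measurableSet_Icc
  obtain ⟨B, hBdef⟩ : ∃ B : ℝ, B = ∫ ξ, ‖g ξ‖ := ⟨_, rfl⟩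
  have hub : ∀ t, ‖u t‖ ≤ B := by
    intro t
    simp only [hu, Set.indicator_apply]
    split_ifs
    · rw [hBdef]; exact norm_halfWave_le _ _ _ _
    · rw [norm_zero, hBdef]; exact integral_nonneg fun _ => norm_nonneg _
  have hB : 0 ≤ B := hBdef ▸ integral_nonneg fun _ => norm_nonneg _
  obtain ⟨w, hw⟩ : ∃ w : ℝ → ℂ, w = fun t => (starRingEnd ℂ) (u t) * (‖u t‖ ^ 2 : ℝ) := ⟨_, rfl⟩
  have hwm : Measurable w := by
    rw [hw]
    apply Measurable.mul
    · exact Complex.continuous_conj.measurable.comp hum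
    · fun_prop
  have hwn : ∀ t, ‖w t‖ = ‖u t‖ ^ 3 := by
    intro t; simp [hw, RCLike.norm_conj]; ring
  have hwi : Integrable w := by
    have : IntegrableOn (fun _ : ℝ => B ^ 3) (Set.Icc (-T) T) := by simp
    refine (this.integrable_indicator measurableSet_Icc).mono' hwm.aestronglyMeasurable
      (Eventually.of_forall fun t => ?_)
    rw [hwn]
    by_cases ht : t ∈ Set.Icc (-T) T
    · rw [Set.indicator_of_mem ht]
      exact pow_le_pow_left₀ (norm_nonneg _) (hub t) 3
    · rw [Set.indicator_of_notMem ht]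
      simp [hu, ht]
  have hwu : ∀ t, w t * halfWave 1 g t (X t) = ((‖u t‖ ^ 4 : ℝ) : ℂ) := by
    intro t
    by_cases ht : t ∈ Set.Icc (-T) T
    · have : u t = halfWave 1 g t (X t) := by simp only [hu, Set.indicator_of_mem ht]
      rw [← this]
      simp only [hw]
      rw [mul_right_comm, mul_comm _ (u t), Complex.mul_conj, Complex.normSq_eq_norm_sq]
      push_cast; ring
    · have : u t = 0 := by simp only [hu, Set.indicator_of_notMem ht]
      simp [hw, this]
  have hui : Integrable (fun t => ‖u t‖ ^ 4) := by
    have : IntegrableOn (fun _ : ℝ => B ^ 4) (Set.Icc (-T) T) := by simp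
    refine (this.integrable_indicator measurableSet_Icc).mono' (by fun_prop)
      (Eventually.of_forall fun t => ?_)
    rw [Real.norm_of_nonneg (by positivity)]
    by_cases ht : t ∈ Set.Icc (-T) T
    · rw [Set.indicator_of_mem ht]
      exact pow_le_pow_left₀ (norm_nonneg _) (hub t) 4
    · rw [Set.indicator_of_notMem ht]
      simp [hu, ht]
  obtain ⟨A, hA⟩ : ∃ A : ℝ≥0∞, A = ∫⁻ t, ‖u t‖ₑ ^ 4 := ⟨_, rfl⟩
  have hA1 : A = ENNReal.ofReal (∫ t, ‖u t‖ ^ 4) := by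
    rw [hA]
    rw [ofReal_integral_eq_lintegral_ofReal hui (Eventually.of_forall fun t => by positivity)]
    congr 1; ext t
    rw [ENNReal.ofReal_pow (norm_nonneg _), ofReal_norm]
  have hAtop : A ≠ ⊤ := by rw [hA1]; exact ENNReal.ofReal_ne_top
  have hgoal : ∫⁻ t, (Set.Icc (-T) T).indicator (fun t => ‖halfWave 1 g t (X t)‖ₑ ^ 4) t = A := by
    rw [hA]
    congr 1; ext t
    by_cases ht : t ∈ Set.Icc (-T) T <;> simp [hu, ht]
  rw [hgoal]
  have hd := halfWave_duality g hg hi w X hwm hX hwi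
  simp only [hwu] at hd
  rw [integral_complex_ofReal, ← ofReal_norm, Complex.norm_real, Real.norm_of_nonneg (integral_nonneg fun t => by positivity), ← hA1] at hd
  have hN : ∫⁻ t, ‖w t‖ₑ ^ (4/3 : ℝ) = A := by
    rw [hA]
    congr 1; ext t
    rw [← ofReal_norm, hwn, ENNReal.ofReal_pow (norm_nonneg _), ofReal_norm, ← ENNReal.rpow_natCast, ← ENNReal.rpow_mul,
      ← ENNReal.rpow_natCast]
    norm_num
  rw [hN] at hd
  have hd2 : A ≤ (mass g ^ (1/2 : ℝ) * (12 * cTT) ^ (1/2 : ℝ)) * A ^ (3/4 : ℝ) := by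
    refine hd.trans (le_of_eq ?_)
    rw [show cTT * (12 * A ^ (3/2 : ℝ)) = (12 * cTT) * A ^ (3/2 : ℝ) by ring, ENNReal.mul_rpow_of_nonneg _ _ (by norm_num : (0:ℝ) ≤ 1/2), 
      ← ENNReal.rpow_mul, mul_assoc]
    norm_num
  by_cases hA0 : A = 0
  · rw [hA0]; exact zero_le
  have h34 : A ^ (3/4 : ℝ) ≠ 0 := by simp [hA0, hAtop]
  have h34' : A ^ (3/4 : ℝ) ≠ ⊤ := by simp [hA0, hAtop]
  have h5 : A ^ (1/4 : ℝ) ≤ mass g ^ (1/2 : ℝ) * (12 * cTT) ^ (1/2 : ℝ) := by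
    rw [← ENNReal.mul_le_mul_iff_left h34 h34', ← ENNReal.rpow_add _ _ hA0 hAtop]
    norm_num
    simpa using hd2
  calc A = (A ^ (1/4 : ℝ)) ^ (4 : ℝ) := by rw [← ENNReal.rpow_mul]; norm_num
    _ ≤ (mass g ^ (1/2 : ℝ) * (12 * cTT) ^ (1/2 : ℝ)) ^ (4:ℝ) := by gcongr
    _ = _ := by
      rw [ENNReal.mul_rpow_of_nonneg _ _ (by norm_num), ← ENNReal.rpow_mul, ← ENNReal.rpow_mul, mul_comm]
      norm_num

/-- A measurable choice, for each time, of a point among `D 0, …, D n` at which the modulus of the half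
wave is largest. -/
theorem exists_argmax (g : Plane → ℂ) (hg : Measurable g) (D : ℕ → Plane) (n : ℕ) :
    ∃ X : ℝ → Plane, Measurable X ∧ ∀ t, ∀ i ≤ n, ‖halfWave 1 g t (D i)‖ₑ ≤ ‖halfWave 1 g t (X t)‖ₑ := by
  have hm := measurable_halfWave 1 g hg
  classical
  induction n with
  | zero => exact ⟨fun _ => D 0, measurable_const, fun t i hi => by rw [Nat.le_zero.mp hi]⟩
  | succ n ih =>
    obtain ⟨X, hX, h⟩ := ih
    refine ⟨fun t => if ‖halfWave 1 g t (X t)‖ₑ < ‖halfWave 1 g t (D (n+1))‖ₑ then D (n+1) else X t, ?_, ?_⟩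
    · refine Measurable.ite ?_ measurable_const hX
      exact measurableSet_lt (hm.comp (measurable_id.prodMk hX)).enorm (hm.comp (measurable_id.prodMk measurable_const)).enorm
    · intro t i hi
      dsimp only
      split_ifs with hc
      · rcases Nat.le_succ_iff.mp hi with hi | rfl
        · exact (h t i hi).trans hc.le
        · exact le_rfl
      · rcases Nat.le_succ_iff.mp hi with hi | rfl
        · exact h t i hi
        · exact not_lt.mp hc

/-- Passage from finitely many points and bounded time intervals to the supremum, by Fatou's lemma. -/
theorem supWave_four_one (g : Plane → ℂ) (hg : Measurable g) (hi : Integrable g) :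
    ∫⁻ t, supWave 1 g t ^ 4 ≤ (12 * cTT) ^ 2 * mass g ^ 2 := by
  choose X hX hXm using exists_argmax g hg (TopologicalSpace.denseSeq Plane)
  have hm := measurable_halfWave 1 g hg
  calc _ ≤ ∫⁻ t, liminf (fun n : ℕ => (Set.Icc (-(n:ℝ)) n).indicator (fun t => ‖halfWave 1 g t (X n t)‖ₑ ^ 4) t) atTop := by
        refine lintegral_mono fun t => ?_
        have : supWave 1 g t ^ 4 = ⨆ i : ℕ, ‖halfWave 1 g t (TopologicalSpace.denseSeq Plane i)‖ₑ ^ 4 := by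
          unfold supWave
          exact ENNReal.iSup_pow_of_ne_zero  (by norm_num) _ 
        rw [this]
        refine iSup_le fun i => ?_
        refine le_liminf_of_le (by isBoundedDefault) ?_
        obtain ⟨M, hM⟩ := exists_nat_ge |t|
        filter_upwards [eventually_ge_atTop i, eventually_ge_atTop M] with n hn hn'
        rw [Set.indicator_of_mem]
        · gcongr
          exact hXm n t i hn
        · have : |t| ≤ n := hM.trans (by exact_mod_cast hn')
          exact ⟨(abs_le.mp this).1, (abs_le.mp this).2⟩
    _ ≤ liminf (fun n : ℕ => ∫⁻ t, (Set.Icc (-(n:ℝ)) n).indicator (fun t => ‖halfWave 1 g t (X n t)‖ₑ ^ 4) t) atTop := by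
        refine lintegral_liminf_le fun n => ?_
        exact ((hm.comp (measurable_id.prodMk (hX n))).enorm.pow_const 4).indicator measurableSet_Icc
    _ ≤ _ := by
        refine liminf_le_of_frequently_le' (Frequently.of_forall fun n => ?_)
        exact lintegral_halfWave_four g hg hi (X n) (hX n) n

/-- The general speed reduces to speed `1` by rescaling time, `t ↦ κ t`. -/
theorem supWave_four (κ : ℝ) (hκ : κ ≠ 0) (g : Plane → ℂ) (hg : Measurable g) (hi : Integrable g) :
    ∫⁻ t, supWave κ g t ^ 4 ≤ ENNReal.ofReal |κ⁻¹| * ((12 * cTT) ^ 2 * mass g ^ 2) := by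
  have h1 : ∀ t, supWave κ g t = supWave 1 g (κ * t) := by
    intro t
    unfold supWave halfWave
    simp only [one_mul]
  simp only [h1]
  have hm := (measurable_supWave 1 g hg).pow_const 4
  rw [← lintegral_map hm (measurable_const_mul κ), Real.map_volume_mul_left hκ, lintegral_smul_measure]
  exact mul_le_mul_right (supWave_four_one g hg hi) _

/-! ### The Plancherel inequality -/

/-- The Fourier transform of `h`, as an explicit integral. -/
def four (h : Plane → ℂ) (x : Plane) : ℂ :=
  ∫ ξ : Plane, Complex.exp (-(2 * Real.pi * Complex.I * (inner ℝ ξ x : ℝ))) * h ξ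

/-- The Fourier transform of a Gaussian, in the form needed for `four_damped`. -/
theorem enorm_gauss (b : ℝ) (hb : 0 < b) (ζ : Plane) :
    ‖∫ x : Plane, Complex.exp (-(2 * Real.pi * Complex.I * (inner ℝ ζ x : ℝ))) * (Real.exp (-b * ‖x‖ ^ 2) : ℝ)‖ₑ
      = ENNReal.ofReal (Real.pi / b * Real.exp (-(Real.pi ^ 2 / b) * ‖ζ‖ ^ 2)) := by
  have hpi := Real.pi_pos
  have h := fourier_gaussian_innerProductSpace (V := Plane) (b := (b : ℂ)) (by simpa using hb) ζ
  rw [Real.fourier_eq'] at h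
  have h2 : ∫ x : Plane, Complex.exp (-(2 * Real.pi * Complex.I * (inner ℝ ζ x : ℝ))) * (Real.exp (-b * ‖x‖ ^ 2) : ℝ) = ((Real.pi / b * Real.exp (-(Real.pi ^ 2 / b) * ‖ζ‖ ^ 2) : ℝ) : ℂ) := by
    have e : (((Module.finrank ℝ Plane : ℕ) : ℂ) / 2) = 1 := by simp
    rw [e, Complex.cpow_one] at h
    push_cast
    rw [show -(Real.pi ^ 2 / b : ℂ) * ‖ζ‖ ^ 2 = -Real.pi ^ 2 * ‖ζ‖ ^ 2 / b by ring, ← h]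
    congr 1; ext x
    rw [smul_eq_mul, real_inner_comm]
    congr 2
    push_cast
    ring
  rw [h2, ← ofReal_norm, Complex.norm_real, Real.norm_of_nonneg (by positivity)]

theorem lintegral_gauss (b : ℝ) (hb : 0 < b) :
    ∫⁻ ζ : Plane, ENNReal.ofReal (Real.pi / b * Real.exp (-(Real.pi ^ 2 / b) * ‖ζ‖ ^ 2)) = 1 := by
  have hpi := Real.pi_pos
  have hc : 0 < Real.pi ^ 2 / b := by positivity
  have h := GaussianFourier.integral_rexp_neg_mul_sq_norm (V := Plane) hc
  have hi : Integrable (fun ζ : Plane => Real.exp (-(Real.pi ^ 2 / b) * ‖ζ‖ ^ 2)) := by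
    by_contra hn
    rw [integral_undef hn] at h
    have : 0 < (Real.pi / (Real.pi ^ 2 / b)) ^ ((Module.finrank ℝ Plane : ℝ) / 2) := by positivity
    linarith
  rw [← ofReal_integral_eq_lintegral_ofReal (hi.const_mul _) (Eventually.of_forall fun _ => by positivity),
    integral_const_mul, h]
  simp
  field_simp

/-- Plancherel's inequality with a Gaussian weight. The weight makes Fubini's theorem applicable to the
expanded square; the resulting Gaussian kernel has integral `1`, and
`2 |h ξ| |h η| ≤ |h ξ|² + |h η|²` bounds its quadratic form. -/
theorem four_damped (h : Plane → ℂ) (hm : Measurable h) (hi : Integrable h) (b : ℝ) (hb : 0 < b) :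
    ∫⁻ x : Plane, ENNReal.ofReal (Real.exp (-b * ‖x‖ ^ 2)) * ‖four h x‖ₑ ^ 2 ≤ ∫⁻ ξ, ‖h ξ‖ₑ ^ 2 := by
  obtain ⟨G, hG⟩ : ∃ G : Plane → Plane × Plane → ℂ, G = fun x p =>
    ((Real.exp (-b * ‖x‖ ^ 2) : ℝ) : ℂ) *
     ((Complex.exp (-(2 * Real.pi * Complex.I * (inner ℝ p.1 x : ℝ))) * h p.1) *
     (starRingEnd ℂ) (Complex.exp (-(2 * Real.pi * Complex.I * (inner ℝ p.2 x : ℝ))) * h p.2)) := ⟨_, rfl⟩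
  have hgi : Integrable (fun x : Plane => Real.exp (-b * ‖x‖ ^ 2)) := by
    have h := GaussianFourier.integral_rexp_neg_mul_sq_norm (V := Plane) hb
    by_contra hn
    rw [integral_undef hn] at h
    have : 0 < (Real.pi / b) ^ ((Module.finrank ℝ Plane : ℝ) / 2) := by positivity
    linarith
  have hGm : Measurable (Function.uncurry G) := by
    rw [hG]
    have hc : Measurable (starRingEnd ℂ : ℂ → ℂ) := Complex.continuous_conj.measurable
    apply Measurable.mul
    · fun_prop
    · apply Measurable.mul
      · fun_prop
      · apply hc.comp
        fun_prop
  have hGi : Integrable (Function.uncurry G) (volume.prod volume) := by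
    have hb : Integrable (fun z : Plane × (Plane × Plane) => (Real.exp (-b * ‖z.1‖ ^ 2)) *
        (‖h z.2.1‖ * ‖h z.2.2‖)) (volume.prod volume) :=
      hgi.mul_prod (hi.norm.mul_prod hi.norm)
    refine hb.mono' hGm.aestronglyMeasurable (Eventually.of_forall fun z => ?_)
    simp only [Function.uncurry, hG, norm_mul, RCLike.norm_conj, norm_exp_phase, one_mul, Complex.norm_real]
    simp
  have h1 : ∀ x, ∫ p, G x p = ((Real.exp (-b * ‖x‖ ^ 2) * ‖four h x‖ ^ 2 : ℝ) : ℂ) := by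
    intro x
    simp only [hG]
    rw [integral_const_mul, Measure.volume_eq_prod, integral_prod_mul
      (f := fun ξ => Complex.exp (-(2 * Real.pi * Complex.I * (inner ℝ ξ x : ℝ))) * h ξ)
      (g := fun ξ => (starRingEnd ℂ) (Complex.exp (-(2 * Real.pi * Complex.I * (inner ℝ ξ x : ℝ))) * h ξ)),
      integral_conj]
    change _ * (four h x * (starRingEnd ℂ) (four h x)) = _
    rw [Complex.mul_conj, Complex.normSq_eq_norm_sq]
    push_cast
    rfl
  have h2 : ∫⁻ x : Plane, ENNReal.ofReal (Real.exp (-b * ‖x‖ ^ 2)) * ‖four h x‖ₑ ^ 2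
      = ‖∫ x, ∫ p, G x p‖ₑ := by
    have hint := hGi.integral_prod_left
    simp only [Function.uncurry] at hint
    simp only [h1] at hint ⊢
    rw [integral_complex_ofReal]
    have hint' := hint.re
    simp only [RCLike.re_to_complex, Complex.ofReal_re] at hint'
    have hnn : ∀ x, 0 ≤ Real.exp (-b * ‖x‖ ^ 2) * ‖four h x‖ ^ 2 := fun x => by positivity
    rw [← ofReal_norm, Complex.norm_real, Real.norm_eq_abs]
    rw [abs_of_nonneg (integral_nonneg hnn), ofReal_integral_eq_lintegral_ofReal hint' (Eventually.of_forall hnn)]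
    congr 1
    ext x
    rw [ENNReal.ofReal_mul (by positivity), ENNReal.ofReal_pow (norm_nonneg _), ofReal_norm]
  rw [h2, integral_integral_swap hGi]
  have h3 : ∀ p : Plane × Plane, ∫ x, G x p = h p.1 * (starRingEnd ℂ) (h p.2) *
      ∫ x : Plane, Complex.exp (-(2 * Real.pi * Complex.I * (inner ℝ (p.1 - p.2) x : ℝ))) * (Real.exp (-b * ‖x‖ ^ 2) : ℝ) := by
    intro p
    rw [← integral_const_mul]
    congr 1
    ext x
    simp only [hG]
    rw [map_mul, ← Complex.exp_conj, inner_sub_left]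
    have key : ∀ A B C D E F H : ℂ, C * B = D → A * ((C * E) * (B * F)) = E * F * (D * A) := by
      intro A B C D E F H h; rw [← h]; ring
    apply key _ _ _ _ _ _ 0
    rw [← Complex.exp_add]
    congr 1
    have h2c : (starRingEnd ℂ) 2 = 2 := Complex.conj_ofNat 2
    simp [h2c]
    ring
  simp only [h3]
  have hswap := hGi.integral_prod_right
  simp only [Function.uncurry] at hswap
  simp only [h3] at hswap
  rw [Measure.volume_eq_prod] at hswap ⊢
  rw [integral_prod _ hswap]
  set γ : Plane → ℝ≥0∞ := fun ζ => ENNReal.ofReal (Real.pi / b * Real.exp (-(Real.pi ^ 2 / b) * ‖ζ‖ ^ 2)) with hγ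
  have hγm : Measurable γ := by rw [hγ]; fun_prop
  have hγ1 : ∫⁻ ζ, γ ζ = 1 := lintegral_gauss b hb
  calc _ ≤ ∫⁻ ξ, ∫⁻ η, ‖h ξ * (starRingEnd ℂ) (h η) * ∫ x : Plane, Complex.exp (-(2 * Real.pi * Complex.I * (inner ℝ (ξ - η) x : ℝ))) * (Real.exp (-b * ‖x‖ ^ 2) : ℝ)‖ₑ := by
        refine (enorm_integral_le_lintegral_enorm _).trans (lintegral_mono fun t => ?_)
        exact enorm_integral_le_lintegral_enorm _
    _ ≤ ∫⁻ ξ, ∫⁻ η, (2⁻¹ * (‖h ξ‖ₑ ^ 2 * γ (ξ - η)) + 2⁻¹ * (‖h η‖ₑ ^ 2 * γ (ξ - η))) := by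
        refine lintegral_mono fun ξ => lintegral_mono fun η => ?_
        rw [enorm_mul, enorm_mul, enorm_gauss b hb]
        have hc : ‖(starRingEnd ℂ) (h η)‖ₑ = ‖h η‖ₑ := by
          rw [← ofReal_norm, RCLike.norm_conj, ofReal_norm]
        rw [hc, ← mul_add, ← add_mul, ← mul_assoc]
        refine mul_le_mul_left ?_ _
        have : ‖h ξ‖ * ‖h η‖ ≤ 2⁻¹ * (‖h ξ‖ ^ 2 + ‖h η‖ ^ 2) := by nlinarith [sq_nonneg (‖h ξ‖ - ‖h η‖)]
        have := ENNReal.ofReal_le_ofReal this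
        rw [ENNReal.ofReal_mul (by positivity), ENNReal.ofReal_mul (by positivity), ENNReal.ofReal_add (by positivity) (by positivity),
          ENNReal.ofReal_pow (by positivity), ENNReal.ofReal_pow (by positivity), ofReal_norm, ofReal_norm,
          ENNReal.ofReal_inv_of_pos (by norm_num)] at this
        simpa using this
    _ = 2⁻¹ * (∫⁻ ξ, ∫⁻ η, ‖h ξ‖ₑ ^ 2 * γ (ξ - η)) + 2⁻¹ * (∫⁻ ξ, ∫⁻ η, ‖h η‖ₑ ^ 2 * γ (ξ - η)) := by
        have hm1 : Measurable fun z : Plane × Plane => ‖h z.1‖ₑ ^ 2 * γ (z.1 - z.2) := by fun_prop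
        have hm2 : Measurable fun z : Plane × Plane => ‖h z.2‖ₑ ^ 2 * γ (z.1 - z.2) := by fun_prop
        have e1 : ∀ ξ, ∫⁻ η, (2⁻¹ * (‖h ξ‖ₑ ^ 2 * γ (ξ - η)) + 2⁻¹ * (‖h η‖ₑ ^ 2 * γ (ξ - η))) =
            2⁻¹ * (∫⁻ η, ‖h ξ‖ₑ ^ 2 * γ (ξ - η)) + 2⁻¹ * (∫⁻ η, ‖h η‖ₑ ^ 2 * γ (ξ - η)) := by
          intro ξ
          rw [lintegral_add_left (by fun_prop), lintegral_const_mul' 2⁻¹ (fun η => ‖h ξ‖ₑ ^ 2 * γ (ξ - η)) (by simp),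
            lintegral_const_mul' 2⁻¹ (fun η => ‖h η‖ₑ ^ 2 * γ (ξ - η)) (by simp)]
        simp only [e1]
        rw [lintegral_add_left (hm1.lintegral_prod_right'.const_mul _), lintegral_const_mul' _ _ (by simp), lintegral_const_mul' _ _ (by simp)]
    _ = 2⁻¹ * (∫⁻ ξ, ‖h ξ‖ₑ ^ 2) + 2⁻¹ * (∫⁻ ξ, ‖h ξ‖ₑ ^ 2) := by
        congr 2
        · congr 1; ext ξ
          rw [lintegral_const_mul _ (by fun_prop), lintegral_sub_left_eq_self γ ξ, hγ1, mul_one]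
        · rw [lintegral_lintegral_swap]
          · congr 1; ext η
            rw [lintegral_const_mul _ (by fun_prop), lintegral_sub_right_eq_self γ η, hγ1, mul_one]
          · apply Measurable.aemeasurable
            simp only [Function.uncurry_def]
            fun_prop
    _ = _ := by
        rw [← two_mul, ← mul_assoc, ENNReal.mul_inv_cancel (by norm_num) (by norm_num), one_mul]

/-- Plancherel's inequality for integrable functions, by Fatou's lemma as the Gaussian weight tends to
`1`. The right-hand side may be infinite. -/
theorem four_L2 (h : Plane → ℂ) (hm : Measurable h) (hi : Integrable h) :
    ∫⁻ x : Plane, ‖four h x‖ₑ ^ 2 ≤ ∫⁻ ξ, ‖h ξ‖ₑ ^ 2 := by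
  have hfm : Measurable (four h) := by
    unfold four
    apply StronglyMeasurable.measurable
    apply StronglyMeasurable.integral_prod_right
      (f := fun (x ξ : Plane) => Complex.exp (-(2 * Real.pi * Complex.I * (inner ℝ ξ x : ℝ))) * h ξ)
    apply Measurable.stronglyMeasurable
    fun_prop
  calc _ ≤ ∫⁻ x : Plane, liminf (fun n : ℕ => ENNReal.ofReal (Real.exp (-(1 / ((n:ℝ) + 1)) * ‖x‖ ^ 2)) * ‖four h x‖ₑ ^ 2) atTop := by
        refine lintegral_mono fun x => ?_
        apply le_of_eq
        symm
        apply Tendsto.liminf_eq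
        have h1 : Tendsto (fun n : ℕ => Real.exp (-(1 / ((n:ℝ) + 1)) * ‖x‖ ^ 2)) atTop (𝓝 1) := by
          have := (tendsto_one_div_add_atTop_nhds_zero_nat (𝕜 := ℝ)).neg.mul_const (‖x‖ ^ 2)
          simpa [Function.comp_def] using (Real.continuous_exp.tendsto _).comp this
        have h2 := (ENNReal.tendsto_ofReal h1)
        have h3 := ENNReal.Tendsto.mul_const (b := ‖four h x‖ₑ ^ 2) h2 (Or.inr (by simp))
        simpa using h3
    _ ≤ liminf (fun n : ℕ => ∫⁻ x : Plane, ENNReal.ofReal (Real.exp (-(1 / ((n:ℝ) + 1)) * ‖x‖ ^ 2)) * ‖four h x‖ₑ ^ 2) atTop := by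
        refine lintegral_liminf_le fun n => by fun_prop
    _ ≤ _ := by
        refine liminf_le_of_frequently_le' (Frequently.of_forall fun n => ?_)
        exact four_damped h hm hi _ (by positivity)

theorem halfWave_L2 (κ : ℝ) (g : Plane → ℂ) (hm : Measurable g) (hi : Integrable g) (t : ℝ) :
    ∫⁻ x : Plane, ‖halfWave κ g t x‖ₑ ^ 2 ≤ ∫⁻ ξ, ‖g ξ‖ₑ ^ 2 := by
  set h : Plane → ℂ := fun ξ => Complex.exp (-(2 * Real.pi * Complex.I * (κ * t * ‖ξ‖ : ℝ))) * g ξ with hh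
  have hn : ∀ ξ, ‖h ξ‖ = ‖g ξ‖ := by intro ξ; rw [hh]; simp only [norm_mul, norm_exp_phase, one_mul]
  have h1 : ∀ x, halfWave κ g t x = four h x := by
    intro x
    unfold halfWave four
    congr 1; ext ξ
    rw [hh]
    dsimp only
    rw [← mul_assoc, ← Complex.exp_add]
    congr 2
    push_cast; ring
  have hhm : Measurable h := by rw [hh]; fun_prop
  have h2 := four_L2 h hhm (hi.mono hhm.aestronglyMeasurable (Eventually.of_forall fun ξ => (hn ξ).le))
  simp only [h1]
  refine h2.trans (le_of_eq ?_)
  congr 1; ext ξ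
  rw [← ofReal_norm, hn, ofReal_norm]

/-! ### Interpolation and norms in time -/

/-- The `L²` norm of `|ξ|^i g(ξ)`. -/
def wn (i : ℕ) (g : Plane → ℂ) : ℝ≥0∞ := eLpNorm (fun ξ => ‖ξ‖ ^ i * ‖g ξ‖) 2 volume

/-- The bound for the `L^p` norm of a half wave at time `t` obtained by interpolating between the
`L²` norm of its amplitude and its sup norm in space. -/
def maj (p κ : ℝ) (g : Plane → ℂ) (t : ℝ) : ℝ≥0∞ :=
  wn 0 g ^ (2 / p) * supWave κ g t ^ (1 - 2 / p)

theorem measurable_maj (p κ : ℝ) (g : Plane → ℂ) (hg : Measurable g) : Measurable (maj p κ g) := by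
  unfold maj
  exact ((measurable_supWave κ g hg).pow_const _).const_mul _

theorem wn_sq (i : ℕ) (g : Plane → ℂ) : wn i g ^ (2:ℝ) = ∫⁻ ξ, ENNReal.ofReal (‖ξ‖ ^ i) ^ 2 * ‖g ξ‖ₑ ^ 2 := by
  unfold wn
  rw [eLpNorm_eq_lintegral_rpow_enorm_toReal (by norm_num) (by norm_num), ← ENNReal.rpow_mul]
  norm_num
  congr 1; ext ξ
  rw [← mul_pow]

/-- Interpolation: `‖u‖_p^p ≤ ‖u‖_∞^(p-2) ‖u‖_2^2`, together with Plancherel's inequality. -/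
theorem eLpNorm_halfWave_le (p : ℝ) (hp : 2 < p) (κ : ℝ) (g : Plane → ℂ) (hm : Measurable g) (hi : Integrable g) (t : ℝ) :
    eLpNorm (halfWave κ g t) (ENNReal.ofReal p) volume ≤ maj p κ g t := by
  have hp0 : 0 < p := by linarith
  have h2 : wn 0 g ^ (2:ℝ) = ∫⁻ ξ, ‖g ξ‖ₑ ^ 2 := by rw [wn_sq]; simp
  rw [eLpNorm_eq_lintegral_rpow_enorm_toReal (by simpa using hp0) (by simp), ENNReal.toReal_ofReal hp0.le]
  have h3 : ∫⁻ x, ‖halfWave κ g t x‖ₑ ^ p ≤ wn 0 g ^ (2:ℝ) * supWave κ g t ^ (p - 2) := by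
    calc _ ≤ ∫⁻ x, ‖halfWave κ g t x‖ₑ ^ 2 * supWave κ g t ^ (p - 2) := by
          refine lintegral_mono fun x => ?_
          have : ‖halfWave κ g t x‖ₑ ^ p = ‖halfWave κ g t x‖ₑ ^ 2 * ‖halfWave κ g t x‖ₑ ^ (p - 2) := by
            rw [← ENNReal.rpow_natCast, ← ENNReal.rpow_add_of_nonneg _ _ (by norm_num) (by linarith)]
            congr 1; push_cast; ring
          rw [this]
          refine mul_le_mul_right (ENNReal.rpow_le_rpow (enorm_halfWave_le_sup κ g hi t x) (by linarith)) _
      _ = (∫⁻ x, ‖halfWave κ g t x‖ₑ ^ 2) * supWave κ g t ^ (p - 2) := by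
          rw [lintegral_mul_const]
          exact ((continuous_halfWave κ g hi t).measurable.enorm.pow_const 2)
      _ ≤ _ := by
          rw [h2]
          exact mul_le_mul_left (halfWave_L2 κ g hm hi t) _
  refine (ENNReal.rpow_le_rpow h3 (by positivity)).trans (le_of_eq ?_)
  unfold maj
  rw [ENNReal.mul_rpow_of_nonneg _ _ (by positivity), ← ENNReal.rpow_mul, ← ENNReal.rpow_mul]
  congr 2
  · ring
  · field_simp

/-- Uses `(1 - 2/p) q = 4`, which matches the fourth power in `supWave_four`, and `2/p + 4/q = 1`, by
which the two powers of norms of `g` combine into one. -/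
theorem LqTimeNorm_maj_le (p q : ℝ) (hp : 2 < p) (hq : 2 / q = 1 / 2 - 1 / p) (κ : ℝ) (hκ : κ ≠ 0)
    (g : Plane → ℂ) (hm : Measurable g) (hi : Integrable g) :
    LqTimeNorm q (maj p κ g) ≤ (12 * cTT) ^ (2 / q) * ENNReal.ofReal |κ⁻¹| ^ (1 / q) * (wn 0 g + wn 1 g) := by
  have hp0 : 0 < p := by linarith
  have hq0 : 0 < q := by
    have : 0 < 2 / q := by
      rw [hq, sub_pos, one_div_lt_one_div hp0 (by norm_num)]; exact hp
    by_contra hn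
    have := div_nonpos_of_nonneg_of_nonpos (by norm_num : (0:ℝ) ≤ 2) (not_lt.mp hn)
    linarith
  have h4 : (1 - 2 / p) * q = 4 := by
    have : 1 - 2 / p = 4 / q := by
      have := hq; field_simp at this ⊢; linarith
    rw [this]; field_simp
  have hW : mass g ≤ (wn 0 g + wn 1 g) ^ (2:ℝ) := by
    have h1 : eLpNorm (fun ξ => ‖ξ‖ ^ 0 * ‖g ξ‖ + ‖ξ‖ ^ 1 * ‖g ξ‖) 2 volume ≤ wn 0 g + wn 1 g := by
      refine eLpNorm_add_le ?_ ?_ (by norm_num)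
      · exact Measurable.aestronglyMeasurable (by fun_prop)
      · exact Measurable.aestronglyMeasurable (by fun_prop)
    refine le_trans ?_ (ENNReal.rpow_le_rpow h1 (by norm_num))
    rw [eLpNorm_eq_lintegral_rpow_enorm_toReal (by norm_num) (by norm_num), ← ENNReal.rpow_mul]
    unfold mass
    norm_num
    refine lintegral_mono fun ξ => ?_
    have h0 : ‖g ξ‖ + ‖ξ‖ * ‖g ξ‖ = (1 + ‖ξ‖) * ‖g ξ‖ := by ring
    rw [h0, enorm_mul, enorm_norm, mul_pow]
    gcongr
    rw [← ofReal_norm ξ, ← ENNReal.ofReal_mul (norm_nonneg _), ← ofReal_norm (1 + ‖ξ‖), ← ENNReal.ofReal_pow (norm_nonneg _)]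
    apply ENNReal.ofReal_le_ofReal
    rw [Real.norm_of_nonneg (by positivity)]
    nlinarith [norm_nonneg ξ]
  unfold LqTimeNorm maj
  have e1 : ∀ t, (wn 0 g ^ (2 / p) * supWave κ g t ^ (1 - 2 / p)) ^ q = (wn 0 g ^ (2 / p)) ^ q * supWave κ g t ^ 4 := by
    intro t
    rw [ENNReal.mul_rpow_of_nonneg _ _ hq0.le, ← ENNReal.rpow_mul (supWave κ g t), h4]
    norm_cast
  simp only [e1]
  rw [lintegral_const_mul _ ((measurable_supWave κ g hm).pow_const 4), ENNReal.mul_rpow_of_nonneg _ _ (by positivity),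
    ← ENNReal.rpow_mul, mul_one_div, div_self hq0.ne', ENNReal.rpow_one]
  have h5 := ENNReal.rpow_le_rpow (supWave_four κ hκ g hm hi) (z := 1 / q) (by positivity)
  set Z := wn 0 g + wn 1 g with hZ
  have h6 : wn 0 g ^ (2 / p) ≤ Z ^ (2 / p) := ENNReal.rpow_le_rpow (le_add_right le_rfl) (by positivity)
  calc _ ≤ Z ^ (2 / p) * (ENNReal.ofReal |κ⁻¹| * ((12 * cTT) ^ 2 * (Z ^ (2:ℝ)) ^ 2)) ^ (1 / q) := by
        refine mul_le_mul' h6 (h5.trans ?_)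
        gcongr
    _ = (12 * cTT) ^ (2 / q) * ENNReal.ofReal |κ⁻¹| ^ (1 / q) * (Z ^ (2 / p) * Z ^ (4 / q)) := by
        rw [ENNReal.mul_rpow_of_nonneg _ _ (by positivity), ENNReal.mul_rpow_of_nonneg _ _ (by positivity)]
        have e2 : ((12 * cTT) ^ 2) ^ (1 / q) = (12 * cTT) ^ (2 / q) := by
          rw [← ENNReal.rpow_natCast, ← ENNReal.rpow_mul]; congr 1; push_cast; ring
        have e3 : ((Z ^ (2:ℝ)) ^ 2) ^ (1 / q) = Z ^ (4 / q) := by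
          rw [← ENNReal.rpow_natCast, ← ENNReal.rpow_mul, ← ENNReal.rpow_mul]; congr 1; push_cast; ring
        rw [e2, e3]
        ring
    _ = _ := by
        rw [← ENNReal.rpow_add_of_nonneg _ _ (by positivity) (by positivity)]
        have : 2 / p + 4 / q = 1 := by
          have := hq; field_simp at this ⊢; linarith
        rw [this, ENNReal.rpow_one]

theorem LqTimeNorm_sum_le {ι : Type*} (q : ℝ) (hq : 1 ≤ q) (s : Finset ι) (f : ι → ℝ → ℝ≥0∞)
    (hf : ∀ i ∈ s, Measurable (f i)) :
    LqTimeNorm q (fun t => ∑ i ∈ s, f i t) ≤ ∑ i ∈ s, LqTimeNorm q (f i) := by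
  classical
  induction s using Finset.induction_on with
  | empty => simp [LqTimeNorm, (by linarith : 0 < q)]
  | insert i s his ih =>
    have h1 : Measurable (fun t => ∑ j ∈ s, f j t) := 
      Finset.measurable_fun_sum _ fun j hj => hf j (Finset.mem_insert_of_mem hj)
    have := ENNReal.lintegral_Lp_add_le (μ := (volume : Measure ℝ)) (hf i (Finset.mem_insert_self _ _)).aemeasurable h1.aemeasurable hq
    simp only [Finset.sum_insert his]
    refine le_trans this ?_
    refine add_le_add le_rfl ?_
    exact ih fun j hj => hf j (Finset.mem_insert_of_mem hj)

theorem LqTimeNorm_const_mul (q : ℝ) (hq : 0 < q) (c : ℝ≥0∞) (f : ℝ → ℝ≥0∞) (hf : Measurable f) :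
    LqTimeNorm q (fun t => c * f t) = c * LqTimeNorm q f := by
  unfold LqTimeNorm
  simp only [ENNReal.mul_rpow_of_nonneg _ _ hq.le]
  rw [lintegral_const_mul _ (hf.pow_const q), ENNReal.mul_rpow_of_nonneg _ _ (by positivity), ← ENNReal.rpow_mul,
    mul_one_div, div_self hq.ne', ENNReal.rpow_one]

theorem LqTimeNorm_mono (q : ℝ) (hq : 0 < q) {f g : ℝ → ℝ≥0∞} (h : ∀ t, f t ≤ g t) :
    LqTimeNorm q f ≤ LqTimeNorm q g := by
  unfold LqTimeNorm
  gcongr with t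
  exact h t

/-! ### Derivatives and Sobolev norms of half waves -/

/-- Measurability and integrability of `g` against all powers of `|ξ|`. No smoothness is required, so the
class is stable under multiplication by the phases `exp(-2πiκt|ξ|)` and the Riesz symbols, which are
singular at the origin. -/
structure RapidDecay (g : Plane → ℂ) : Prop where
  meas : Measurable g
  int : ∀ n : ℕ, Integrable (fun ξ => ‖ξ‖ ^ n * ‖g ξ‖)

theorem RapidDecay.integrable {g : Plane → ℂ} (h : RapidDecay g) : Integrable g := by
  have := h.int 0
  simp only [pow_zero, one_mul] at this
  exact (integrable_norm_iff h.meas.aestronglyMeasurable).mp this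

theorem RapidDecay.of_le {g : Plane → ℂ} (h : RapidDecay g) {f : Plane → ℂ} (hf : Measurable f) (C : ℝ) (i : ℕ)
    (hle : ∀ ξ, ‖f ξ‖ ≤ C * ‖ξ‖ ^ i * ‖g ξ‖) : RapidDecay f := by
  refine ⟨hf, fun n => ?_⟩
  refine ((h.int (n + i)).const_mul C).mono' (Measurable.aestronglyMeasurable (by fun_prop)) (Eventually.of_forall fun ξ => ?_)
  rw [Real.norm_of_nonneg (by positivity)]
  calc _ ≤ ‖ξ‖ ^ n * (C * ‖ξ‖ ^ i * ‖g ξ‖) := by gcongr; exact hle ξ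
    _ = _ := by ring

theorem RapidDecay.add {f g : Plane → ℂ} (hf : RapidDecay f) (hg : RapidDecay g) : RapidDecay (fun ξ => f ξ + g ξ) := by
  refine ⟨hf.meas.add hg.meas, fun n => ?_⟩
  have h1 := hf.meas
  have h2 := hg.meas
  refine ((hf.int n).add (hg.int n)).mono' (Measurable.aestronglyMeasurable (by fun_prop)) (Eventually.of_forall fun ξ => ?_)
  rw [Real.norm_of_nonneg (by positivity)]
  simp only [Pi.add_apply]
  rw [← mul_add]
  gcongr
  exact norm_add_le _ _

/-- The amplitude with the time phase absorbed: the half wave at time `t` is the Fourier transform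
of this function. -/
def phased (κ : ℝ) (g : Plane → ℂ) (t : ℝ) (ξ : Plane) : ℂ :=
  Complex.exp (-(2 * Real.pi * Complex.I * (κ * t * ‖ξ‖ : ℝ))) * g ξ

theorem norm_phased (κ : ℝ) (g : Plane → ℂ) (t : ℝ) (ξ : Plane) : ‖phased κ g t ξ‖ = ‖g ξ‖ := by
  unfold phased
  rw [norm_mul, norm_exp_phase, one_mul]

theorem RapidDecay.phased {g : Plane → ℂ} (h : RapidDecay g) (κ t : ℝ) : RapidDecay (phased κ g t) := by
  refine h.of_le ?_ 1 0 fun ξ => by rw [norm_phased]; simp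
  unfold _root_.phased
  have := h.meas
  fun_prop

theorem halfWave_eq_fourier (κ : ℝ) (g : Plane → ℂ) (t : ℝ) :
    halfWave κ g t = FourierTransform.fourier (phased κ g t) := by
  ext x
  rw [Real.fourier_eq']
  unfold halfWave phased
  congr 1; ext ξ
  rw [smul_eq_mul, ← mul_assoc, ← Complex.exp_add]
  congr 2
  push_cast; ring

/-- The amplitude of the iterated derivative of a half wave in the directions `v 0, …, v (i - 1)`. -/
def symb (g : Plane → ℂ) {i : ℕ} (v : Fin i → Plane) (ξ : Plane) : ℂ :=
  (-(2 * Real.pi * Complex.I)) ^ i * ((∏ l, (inner ℝ ξ (v l) : ℝ) : ℝ) * g ξ)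

theorem norm_symb_le (g : Plane → ℂ) {i : ℕ} (v : Fin i → Plane) (ξ : Plane) (hv : ∀ l, ‖v l‖ = 1) :
    ‖symb g v ξ‖ ≤ (2 * Real.pi) ^ i * ‖ξ‖ ^ i * ‖g ξ‖ := by
  unfold symb
  have h1 : ‖-(2 * Real.pi * Complex.I : ℂ)‖ = 2 * Real.pi := by
    simp [abs_of_pos Real.pi_pos]
  rw [norm_mul, norm_mul, norm_pow, Complex.norm_real, norm_prod, h1, mul_assoc]
  have h2 : ∏ l, ‖inner ℝ ξ (v l)‖ ≤ ‖ξ‖ ^ i := by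
    calc _ ≤ ∏ l : Fin i, ‖ξ‖ := by
          refine Finset.prod_le_prod (fun _ _ => norm_nonneg _) fun l _ => ?_
          refine (norm_inner_le_norm _ _).trans ?_
          rw [hv, mul_one]
      _ = _ := by simp
  gcongr

theorem RapidDecay.symb {g : Plane → ℂ} (h : RapidDecay g) {i : ℕ} (v : Fin i → Plane) (hv : ∀ l, ‖v l‖ = 1) :
    RapidDecay (symb g v) := by
  refine h.of_le ?_ ((2 * Real.pi) ^ i) i fun ξ => norm_symb_le g v ξ hv
  unfold _root_.symb
  have := h.meas
  fun_prop

theorem contDiff_halfWave (κ : ℝ) {g : Plane → ℂ} (h : RapidDecay g) (t : ℝ) (N : ℕ∞) :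
    ContDiff ℝ N (halfWave κ g t) := by
  rw [halfWave_eq_fourier]
  exact Real.contDiff_fourier fun n _ => (h.phased κ t).int n

theorem iteratedFDeriv_halfWave (κ : ℝ) {g : Plane → ℂ} (h : RapidDecay g) (t : ℝ) (i : ℕ) (x : Plane) (v : Fin i → Plane) :
    iteratedFDeriv ℝ i (halfWave κ g t) x v = halfWave κ (symb g v) t x := by
  rw [halfWave_eq_fourier, halfWave_eq_fourier]
  have hp := h.phased κ t
  rw [Real.iteratedFDeriv_fourier (N := ⊤) (fun n _ => hp.int n) hp.meas.aestronglyMeasurable le_top,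
    Real.fourier_continuousMultilinearMap_apply]
  · have h1 : (fun ξ => VectorFourier.fourierPowSMulRight (innerSL ℝ) (phased κ g t) ξ i v) = phased κ (symb g v) t := by
      ext ξ
      rw [VectorFourier.fourierPowSMulRight_apply]
      unfold phased symb
      have h2 : ∏ l, (innerSL ℝ ξ) (v l) = ∏ l, inner ℝ ξ (v l) := rfl
      rw [h2]
      simp only [smul_eq_mul, Complex.real_smul]
      ring
    rw [h1]
  · exact VectorFourier.integrable_fourierPowSMulRight (innerSL ℝ) (hp.int i) hp.meas.aestronglyMeasurable

/-- The `j`-th standard basis vector of the plane. -/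
abbrev bv (j : Fin 2) : Plane := EuclideanSpace.single j (1:ℝ)

theorem norm_bv (j : Fin 2) : ‖bv j‖ = 1 := by simp

/-- The norm of a multilinear map on the plane is controlled by its values on basis vectors. -/
theorem norm_multilinear_le {F : Type*} [NormedAddCommGroup F] [NormedSpace ℝ F] {i : ℕ}
    (M : ContinuousMultilinearMap ℝ (fun _ : Fin i => Plane) F) :
    ‖M‖ ≤ ∑ s : Fin i → Fin 2, ‖M (fun l => bv (s l))‖ := by
  refine M.opNorm_le_bound (by positivity) fun v => ?_
  have hv : ∀ l, v l = ∑ j : Fin 2, v l j • bv j := by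
    intro l
    ext j
    fin_cases j <;> simp
  have h1 : M v = ∑ s : Fin i → Fin 2, (∏ l, v l (s l)) • M (fun l => bv (s l)) := by
    conv_lhs => rw [show v = fun l => ∑ j : Fin 2, v l j • bv j from funext hv]
    rw [M.map_sum]
    refine Finset.sum_congr rfl fun s _ => ?_
    rw [M.map_smul_univ]
  rw [h1, Finset.sum_mul]
  refine norm_sum_le_of_le _ fun s _ => ?_
  rw [norm_smul, mul_comm, norm_prod]
  gcongr
  exact PiLp.norm_apply_le _ _

/-- The Sobolev norm is bounded by the majorants of the derivatives in coordinate directions, each of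
which is again a half wave. -/
theorem sobNorm_halfWave_le (k : ℕ) (p : ℝ) (hp : 2 < p) (κ : ℝ) {g : Plane → ℂ} (h : RapidDecay g) (t : ℝ) :
    sobNorm k (ENNReal.ofReal p) (halfWave κ g t) ≤
      ∑ i ∈ Finset.range (k + 1), ∑ s : Fin i → Fin 2, maj p κ (symb g (fun l => bv (s l))) t := by
  unfold sobNorm
  refine Finset.sum_le_sum fun i _ => ?_
  have hp1 : 1 ≤ ENNReal.ofReal p := by rw [← ENNReal.ofReal_one]; exact ENNReal.ofReal_le_ofReal (by linarith)
  calc _ ≤ eLpNorm (∑ s : Fin i → Fin 2, fun x => ‖halfWave κ (symb g (fun l => bv (s l))) t x‖) (ENNReal.ofReal p) volume := by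
        refine eLpNorm_mono_real fun x => ?_
        rw [norm_norm, Finset.sum_apply]
        refine (norm_multilinear_le _).trans (le_of_eq ?_)
        refine Finset.sum_congr rfl fun s _ => ?_
        rw [iteratedFDeriv_halfWave κ h]
    _ ≤ ∑ s : Fin i → Fin 2, eLpNorm (fun x => ‖halfWave κ (symb g (fun l => bv (s l))) t x‖) (ENNReal.ofReal p) volume := by
        refine eLpNorm_sum_le (fun s _ => ?_) hp1
        have hs := h.symb (fun l => bv (s l)) (fun l => norm_bv _)
        exact (continuous_halfWave κ _ hs.integrable t).norm.aestronglyMeasurable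
    _ ≤ _ := by
        refine Finset.sum_le_sum fun s _ => ?_
        have hs := h.symb (fun l => bv (s l)) (fun l => norm_bv _)
        rw [eLpNorm_norm]
        exact eLpNorm_halfWave_le p hp κ _ hs.meas hs.integrable t

theorem wn_symb_le (j : ℕ) (g : Plane → ℂ) {i : ℕ} (v : Fin i → Plane) (hv : ∀ l, ‖v l‖ = 1) :
    wn j (symb g v) ≤ ENNReal.ofReal ((2 * Real.pi) ^ i) * wn (j + i) g := by
  have hpi := Real.pi_pos
  unfold wn
  refine eLpNorm_le_mul_eLpNorm_of_ae_le_mul (Eventually.of_forall fun ξ => ?_) 2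
  rw [Real.norm_of_nonneg (by positivity), Real.norm_of_nonneg (by positivity)]
  calc _ ≤ ‖ξ‖ ^ j * ((2 * Real.pi) ^ i * ‖ξ‖ ^ i * ‖g ξ‖) := by gcongr; exact norm_symb_le g v ξ hv
    _ = _ := by ring

/-- Strichartz estimate for a single half wave, with a constant independent of the speed `κ` and the
loss of one derivative. The time norm is stated for a measurable majorant `M` of the Sobolev norm:
measurability is what makes Minkowski's inequality in time available for sums, and it is evident for
`M`. -/
theorem halfWave_strichartz (p q : ℝ) (hp : 2 < p) (hq : 2 / q = 1 / 2 - 1 / p) (k : ℕ) :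
    ∃ C : ℝ≥0∞, C ≠ ⊤ ∧ ∀ (κ : ℝ), κ ≠ 0 → ∀ g : Plane → ℂ, RapidDecay g →
      ∃ M : ℝ → ℝ≥0∞, Measurable M ∧ (∀ t, sobNorm k (ENNReal.ofReal p) (halfWave κ g t) ≤ M t) ∧
        LqTimeNorm q M ≤ C * ENNReal.ofReal |κ⁻¹| ^ (1 / q) * ∑ i ∈ Finset.range (k + 2), wn i g := by
  have hpi := Real.pi_pos
  have hp0 : 0 < p := by linarith
  have hq1 : 1 ≤ q := by
    have h0 : 0 < 2 / q := by
      rw [hq, sub_pos, one_div_lt_one_div hp0 (by norm_num)]; exact hp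
    have hq0 : 0 < q := by
      by_contra hn
      have := div_nonpos_of_nonneg_of_nonpos (by norm_num : (0:ℝ) ≤ 2) (not_lt.mp hn)
      linarith
    have h1 : 2 / q ≤ 1 / 2 := by rw [hq]; linarith [one_div_pos.mpr hp0]
    rw [div_le_iff₀ hq0] at h1
    linarith
  have hq0 : 0 < q := by linarith
  refine ⟨∑ i ∈ Finset.range (k + 1), ∑ s : Fin i → Fin 2, (12 * cTT) ^ (2 / q) * (2 * ENNReal.ofReal ((2 * Real.pi) ^ i)), ?_, ?_⟩
  · have h1 : (12 * cTT) ^ (2 / q) ≠ ⊤ := ENNReal.rpow_ne_top_of_nonneg (by positivity) (ENNReal.mul_ne_top (by norm_num) cTT_ne_top)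
    refine ENNReal.sum_ne_top.mpr fun i _ => ENNReal.sum_ne_top.mpr fun s _ => ?_
    exact ENNReal.mul_ne_top h1 (ENNReal.mul_ne_top (by norm_num) ENNReal.ofReal_ne_top)
  intro κ hκ g hg
  have hs : ∀ (i : ℕ) (s : Fin i → Fin 2), RapidDecay (symb g (fun l => bv (s l))) := fun i s =>
    hg.symb _ fun l => norm_bv _
  have hmeas : ∀ (i : ℕ) (s : Fin i → Fin 2), Measurable (maj p κ (symb g (fun l => bv (s l)))) := fun i s =>
    measurable_maj _ _ _ (hs i s).meas
  refine ⟨fun t => ∑ i ∈ Finset.range (k + 1), ∑ s : Fin i → Fin 2, maj p κ (symb g (fun l => bv (s l))) t, ?_,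
    fun t => sobNorm_halfWave_le k p hp κ hg t, ?_⟩
  · exact Finset.measurable_fun_sum _ fun i _ => Finset.measurable_fun_sum _ fun s _ => hmeas i s
  refine (LqTimeNorm_sum_le q hq1 _ _ fun i _ => Finset.measurable_fun_sum _ fun s _ => hmeas i s).trans ?_
  rw [Finset.sum_mul, Finset.sum_mul]
  refine Finset.sum_le_sum fun i hi => ?_
  refine (LqTimeNorm_sum_le q hq1 _ _ fun s _ => hmeas i s).trans ?_
  rw [Finset.sum_mul, Finset.sum_mul]
  refine Finset.sum_le_sum fun s _ => ?_
  refine (LqTimeNorm_maj_le p q hp hq κ hκ _ (hs i s).meas (hs i s).integrable).trans ?_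
  have hi' : i < k + 1 := Finset.mem_range.mp hi
  set Z := ∑ i ∈ Finset.range (k + 2), wn i g with hZ
  have hb : ∀ j, j ≤ 1 → wn j (symb g (fun l => bv (s l))) ≤ ENNReal.ofReal ((2 * Real.pi) ^ i) * Z := by
    intro j hj
    refine (wn_symb_le j g _ fun l => norm_bv _).trans ?_
    refine mul_le_mul_right ?_ _
    exact Finset.single_le_sum (f := fun i => wn i g) (fun _ _ => zero_le) (Finset.mem_range.mpr (by omega))
  calc _ ≤ (12 * cTT) ^ (2 / q) * ENNReal.ofReal |κ⁻¹| ^ (1 / q) * (ENNReal.ofReal ((2 * Real.pi) ^ i) * Z + ENNReal.ofReal ((2 * Real.pi) ^ i) * Z) :=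
        mul_le_mul_right (add_le_add (hb 0 (by norm_num)) (hb 1 le_rfl)) _
    _ = _ := by ring

theorem sobNorm_sum_le {F ι : Type*} [NormedAddCommGroup F] [NormedSpace ℝ F] (k : ℕ) (p : ℝ≥0∞) (hp : 1 ≤ p)
    (s : Finset ι) (f : ι → Plane → F) (hf : ∀ j ∈ s, ContDiff ℝ k (f j)) :
    sobNorm k p (fun x => ∑ j ∈ s, f j x) ≤ ∑ j ∈ s, sobNorm k p (f j) := by
  unfold sobNorm
  rw [Finset.sum_comm]
  refine Finset.sum_le_sum fun i hi => ?_
  have hi' : i ≤ k := Nat.lt_succ_iff.mp (Finset.mem_range.mp hi)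
  have hik : (i : WithTop ℕ∞) ≤ k := by exact_mod_cast hi'
  calc _ ≤ eLpNorm (∑ j ∈ s, fun x => ‖iteratedFDeriv ℝ i (f j) x‖) p volume := by
        refine eLpNorm_mono_real fun x => ?_
        rw [norm_norm, Finset.sum_apply, iteratedFDeriv_fun_sum_apply fun j hj => ((hf j hj).of_le hik).contDiffAt]
        exact norm_sum_le _ _
    _ ≤ _ := by
        refine eLpNorm_sum_le (fun j hj => ?_) hp
        exact ((hf j hj).continuous_iteratedFDeriv hik).norm.aestronglyMeasurable

theorem sobNorm_clm_le {E F : Type*} [NormedAddCommGroup E] [NormedSpace ℝ E] [NormedAddCommGroup F] [NormedSpace ℝ F]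
    (k : ℕ) (p : ℝ≥0∞) (L : E →L[ℝ] F) (f : Plane → E) (hf : ContDiff ℝ k f) :
    sobNorm k p (fun x => L (f x)) ≤ ENNReal.ofReal ‖L‖ * sobNorm k p f := by
  unfold sobNorm
  rw [Finset.mul_sum]
  refine Finset.sum_le_sum fun i hi => ?_
  have hi' : i ≤ k := Nat.lt_succ_iff.mp (Finset.mem_range.mp hi)
  have hik : (i : WithTop ℕ∞) ≤ k := by exact_mod_cast hi'
  refine eLpNorm_le_mul_eLpNorm_of_ae_le_mul (Eventually.of_forall fun x => ?_) p
  rw [norm_norm, norm_norm]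
  exact L.norm_iteratedFDeriv_comp_left hf.contDiffAt hik

/-! ### Weighted norms of the profile and Sobolev norms of the data -/

/-- Pure derivatives in the two coordinate directions suffice, since
`|ξ|^i ≤ (2π|ξ₀|)^i + (2π|ξ₁|)^i`. The Plancherel inequality is applied to the inverse transform, which
recovers the amplitude from the data. -/
theorem wn_le_data {g : Plane → ℂ} (hg : RapidDecay g) (hc : Continuous g) (f : SchwartzMap Plane ℝ)
    (hf : ∀ x, halfWave 0 g 0 x = (f x : ℂ)) (i : ℕ) :
    wn i g ≤ 2 * eLpNorm (fun x => ‖iteratedFDeriv ℝ i f x‖) 2 volume := by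
  have hpi := Real.pi_gt_three
  have hv : ∀ j : Fin 2, ∀ l : Fin i, ‖(fun _ => bv j : Fin i → Plane) l‖ = 1 := fun j l => norm_bv j
  have hs : ∀ j : Fin 2, RapidDecay (symb g (fun _ : Fin i => bv j)) := fun j => hg.symb _ (hv j)
  have hsc : ∀ j : Fin 2, Continuous (symb g (fun _ : Fin i => bv j)) := fun j => by
    unfold symb; fun_prop
  have hphase : ∀ h : Plane → ℂ, phased 0 h 0 = h := fun h => by ext ξ; simp [phased]
  -- the symbol `symb g` is the inverse Fourier transform of the corresponding derivative of `f`
  have h1 : ∀ j : Fin 2, FourierTransform.fourier (symb g (fun _ : Fin i => bv j)) =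
      fun x => ((iteratedFDeriv ℝ i f x (fun _ => bv j) : ℝ) : ℂ) := by
    intro j
    have h2 := halfWave_eq_fourier 0 (symb g (fun _ : Fin i => bv j)) 0
    rw [hphase] at h2
    rw [← h2]
    ext x
    rw [← iteratedFDeriv_halfWave 0 hg]
    have h3 : halfWave 0 g 0 = Complex.ofRealCLM ∘ f := by ext x; rw [hf x]; rfl
    rw [h3, Complex.ofRealCLM.iteratedFDeriv_comp_left (f.smooth i).contDiffAt le_rfl]
    rfl
  have hD : ∀ j : Fin 2, ∀ x, ‖((iteratedFDeriv ℝ i f x (fun _ => bv j) : ℝ) : ℂ)‖ ≤ ‖iteratedFDeriv ℝ i f x‖ := by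
    intro j x
    rw [Complex.norm_real]
    refine (ContinuousMultilinearMap.le_opNorm _ _).trans ?_
    simp
  have hDc : ∀ j : Fin 2, Continuous fun x => ((iteratedFDeriv ℝ i f x (fun _ => bv j) : ℝ) : ℂ) := by
    intro j
    have h4 : Continuous (iteratedFDeriv ℝ i f) := (f.smooth i).continuous_iteratedFDeriv le_rfl
    exact Complex.continuous_ofReal.comp
      ((ContinuousMultilinearMap.apply ℝ (fun _ : Fin i => Plane) ℝ (fun _ => bv j)).continuous.comp h4)
  have hDi : ∀ j : Fin 2, Integrable fun x => ((iteratedFDeriv ℝ i f x (fun _ => bv j) : ℝ) : ℂ) := by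
    intro j
    have h5 := f.integrable_pow_mul_iteratedFDeriv volume 0 i
    simp only [pow_zero, one_mul] at h5
    exact h5.mono' (hDc j).aestronglyMeasurable (Eventually.of_forall (hD j))
  have h6 : ∀ j : Fin 2, eLpNorm (symb g (fun _ : Fin i => bv j)) 2 volume ≤
      eLpNorm (fun x => ‖iteratedFDeriv ℝ i f x‖) 2 volume := by
    intro j
    have h7 := (hsc j).fourierInv_fourier_eq (hs j).integrable (by rw [h1]; exact hDi j)
    rw [h1] at h7
    have h8 : ∀ ξ, symb g (fun _ : Fin i => bv j) ξ =
        four (fun x => ((iteratedFDeriv ℝ i f x (fun _ => bv j) : ℝ) : ℂ)) (-ξ) := by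
      intro ξ
      conv_lhs => rw [← h7]
      rw [Real.fourierInv_eq_fourier_neg, Real.fourier_eq']
      unfold four
      congr 1; ext x
      rw [smul_eq_mul]
      congr 2
      push_cast; ring
    have h9 := four_L2 _ (hDc j).measurable (hDi j)
    rw [eLpNorm_eq_lintegral_rpow_enorm_toReal (by norm_num) (by norm_num),
      eLpNorm_eq_lintegral_rpow_enorm_toReal (by norm_num) (by norm_num)]
    refine ENNReal.rpow_le_rpow ?_ (by norm_num)
    simp only [ENNReal.toReal_ofNat, ENNReal.rpow_ofNat]
    calc _ = ∫⁻ ξ, ‖four (fun x => ((iteratedFDeriv ℝ i f x (fun _ => bv j) : ℝ) : ℂ)) (-ξ)‖ₑ ^ 2 := by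
          congr 1; ext ξ; rw [h8]
      _ = ∫⁻ ξ, ‖four (fun x => ((iteratedFDeriv ℝ i f x (fun _ => bv j) : ℝ) : ℂ)) ξ‖ₑ ^ 2 :=
          lintegral_neg_eq_self (fun ξ => ‖four (fun x => ((iteratedFDeriv ℝ i f x (fun _ => bv j) : ℝ) : ℂ)) ξ‖ₑ ^ 2)
      _ ≤ _ := h9
      _ ≤ _ := by
          refine lintegral_mono fun x => ?_
          have := hD j x
          simp only
          gcongr
          rw [← ofReal_norm, ← ofReal_norm, norm_norm]
          exact ENNReal.ofReal_le_ofReal this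
  have hpt : ∀ ξ, ‖‖ξ‖ ^ i * ‖g ξ‖‖ ≤ ∑ j : Fin 2, ‖symb g (fun _ : Fin i => bv j) ξ‖ := by
    intro ξ
    have e1 : ∀ j : Fin 2, ‖symb g (fun _ : Fin i => bv j) ξ‖ = (2 * Real.pi) ^ i * |ξ j| ^ i * ‖g ξ‖ := by
      intro j
      unfold symb
      have h1 : ‖-(2 * Real.pi * Complex.I : ℂ)‖ = 2 * Real.pi := by
        simp [abs_of_pos Real.pi_pos]
      rw [norm_mul, norm_mul, norm_pow, Complex.norm_real, norm_prod, h1]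
      simp [EuclideanSpace.inner_single_right, mul_assoc]
    have e2 : ‖ξ‖ ≤ |ξ 0| + |ξ 1| := by
      rw [EuclideanSpace.norm_eq]
      simp only [Fin.sum_univ_two, Real.norm_eq_abs]
      rw [Real.sqrt_le_left (by positivity)]
      nlinarith [abs_nonneg (ξ 0), abs_nonneg (ξ 1)]
    have e3 : ‖ξ‖ ^ i ≤ (2 * Real.pi) ^ i * |ξ 0| ^ i + (2 * Real.pi) ^ i * |ξ 1| ^ i := by
      rw [← mul_pow, ← mul_pow]
      have a0 := abs_nonneg (ξ 0)
      have a1 := abs_nonneg (ξ 1)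
      rcases le_total |ξ 0| |ξ 1| with h | h
      · calc _ ≤ (2 * Real.pi * |ξ 1|) ^ i := by gcongr; nlinarith
          _ ≤ _ := by have : 0 ≤ (2 * Real.pi * |ξ 0|) ^ i := by positivity
                      linarith
      · calc _ ≤ (2 * Real.pi * |ξ 0|) ^ i := by gcongr; nlinarith
          _ ≤ _ := by have : 0 ≤ (2 * Real.pi * |ξ 1|) ^ i := by positivity
                      linarith
    rw [Real.norm_of_nonneg (by positivity), Fin.sum_univ_two, e1, e1, ← add_mul]
    gcongr
  calc wn i g ≤ eLpNorm (∑ j : Fin 2, fun ξ => ‖symb g (fun _ : Fin i => bv j) ξ‖) 2 volume := by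
        unfold wn
        refine eLpNorm_mono_real fun ξ => ?_
        rw [Finset.sum_apply]
        exact hpt ξ
    _ ≤ ∑ j : Fin 2, eLpNorm (fun ξ => ‖symb g (fun _ : Fin i => bv j) ξ‖) 2 volume :=
        eLpNorm_sum_le (fun j _ => (hsc j).norm.aestronglyMeasurable) (by norm_num)
    _ ≤ ∑ j : Fin 2, eLpNorm (fun x => ‖iteratedFDeriv ℝ i f x‖) 2 volume := by
        refine Finset.sum_le_sum fun j _ => ?_
        rw [eLpNorm_norm]
        exact h6 j
    _ = _ := by rw [Fin.sum_univ_two, two_mul]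

theorem wn_le_sobNorm {g : Plane → ℂ} (hg : RapidDecay g) (hc : Continuous g) (f : SchwartzMap Plane ℝ)
    (hf : ∀ x, halfWave 0 g 0 x = (f x : ℂ)) {i m : ℕ} (hi : i ≤ m) :
    wn i g ≤ 2 * sobNorm m 2 f := by
  refine (wn_le_data hg hc f hf i).trans (mul_le_mul_right ?_ _)
  exact Finset.single_le_sum (f := fun i => eLpNorm (fun x => ‖iteratedFDeriv ℝ i f x‖) 2 volume)
    (fun _ _ => zero_le) (Finset.mem_range.mpr (by omega))

/-! ### Uniqueness for the acoustic system -/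

/-- The function `M - |x|² - λ t` on space-time. The region where it is nonnegative has bounded time
slices and, for `λ` large relative to the size of the slices, shrinks faster than waves travel. -/
def coneFun (M lam : ℝ) (P : ℝ × Plane) : ℝ := M - ‖P.2‖ ^ 2 - lam * P.1

theorem contDiff_coneFun (M lam : ℝ) : ContDiff ℝ 1 (coneFun M lam) := by
  unfold coneFun
  exact (contDiff_const.sub (contDiff_snd.norm_sq ℝ)).sub (contDiff_const.mul contDiff_fst)

theorem fderiv_coneFun (M lam : ℝ) (P v : ℝ × Plane) :
    fderiv ℝ (coneFun M lam) P v = -(2 * inner ℝ P.2 v.2) - lam * v.1 := by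
  have h3 := ((hasFDerivAt_const M P).sub
    ((hasFDerivAt_snd (𝕜 := ℝ) (E := ℝ) (F := Plane) (p := P)).norm_sq)).sub
    ((hasFDerivAt_fst (𝕜 := ℝ) (E := ℝ) (F := Plane) (p := P)).const_mul lam)
  refine (DFunLike.congr_fun h3.fderiv v).trans ?_
  simp

theorem hasDerivAt_slice {K : ℝ × Plane → ℝ} (hK : ContDiff ℝ 1 K) (t : ℝ) (x : Plane) :
    HasDerivAt (fun s => K (s, x)) (fderiv ℝ K (t, x) (1, 0)) t :=
  ((hK.differentiable one_ne_zero (t, x)).hasFDerivAt).comp_hasDerivAt t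
    ((hasDerivAt_id t).prodMk (hasDerivAt_const t x))

theorem hasFDerivAt_slice {F : Type*} [NormedAddCommGroup F] [NormedSpace ℝ F] {K : ℝ × Plane → F} (hK : ContDiff ℝ 1 K) (t : ℝ) (x : Plane) :
    HasFDerivAt (fun y => K (t, y)) ((fderiv ℝ K (t, x)).comp (ContinuousLinearMap.inr ℝ ℝ Plane)) x :=
  ((hK.differentiable one_ne_zero (t, x)).hasFDerivAt).comp x
    ((hasFDerivAt_const t x).prodMk (hasFDerivAt_id x))

theorem continuous_fderiv_dir {K : ℝ × Plane → ℝ} (hK : ContDiff ℝ 1 K) (v : ℝ × Plane) :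
    Continuous fun P => fderiv ℝ K P v :=
  (hK.continuous_fderiv one_ne_zero).clm_apply continuous_const

theorem isCompact_slice (R : ℝ) : IsCompact {x : Plane | ‖x‖ ^ 2 ≤ R} := by
  refine Metric.isCompact_of_isClosed_isBounded (isClosed_le (by fun_prop) continuous_const) ?_
  refine (Metric.isBounded_closedBall (x := (0:Plane)) (r := |R| + 1)).subset fun x hx => ?_
  rw [mem_closedBall_zero_iff]
  have h1 : ‖x‖ ^ 2 ≤ R := hx
  nlinarith [le_abs_self R, abs_nonneg R, norm_nonneg x]

theorem hasCompactSupport_slice {K : ℝ × Plane → ℝ} {M lam : ℝ} (h0 : ∀ P, coneFun M lam P < 0 → K P = 0) (t : ℝ) :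
    HasCompactSupport fun x => K (t, x) := by
  refine HasCompactSupport.intro (isCompact_slice (M - lam * t)) fun x hx => h0 _ ?_
  have : ¬ (‖x‖ ^ 2 ≤ M - lam * t) := hx
  unfold coneFun
  simp only
  linarith

theorem fderiv_zero_off_cone {K : ℝ × Plane → ℝ} {M lam : ℝ} (h0 : ∀ P, coneFun M lam P < 0 → K P = 0) (v : ℝ × Plane) :
    ∀ P, coneFun M lam P < 0 → fderiv ℝ K P v = 0 := by
  intro P hP
  have h1 : K =ᶠ[𝓝 P] fun _ => 0 := by
    filter_upwards [(isOpen_lt (contDiff_coneFun M lam).continuous continuous_const).mem_nhds hP] with Q hQ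
    exact h0 Q hQ
  rw [h1.fderiv_eq]
  simp

/-- Differentiation under the integral sign over the time slices. -/
theorem hasDerivAt_energy {K : ℝ × Plane → ℝ} (hK : ContDiff ℝ 1 K) {M lam : ℝ} (hl : 0 ≤ lam)
    (h0 : ∀ P, coneFun M lam P < 0 → K P = 0) (t : ℝ) :
    HasDerivAt (fun s => ∫ x, K (s, x)) (∫ x, fderiv ℝ K (t, x) (1, 0)) t := by
  have hc : Continuous fun P => fderiv ℝ K P (1, 0) := continuous_fderiv_dir hK _
  have hd0 := fderiv_zero_off_cone h0 (1, 0)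
  set B : Set Plane := {x | ‖x‖ ^ 2 ≤ M - lam * (t - 1)} with hB
  have hBc : IsCompact B := isCompact_slice _
  obtain ⟨C, hC⟩ := ((isCompact_Icc (a := t - 1) (b := t + 1)).prod hBc).exists_bound_of_continuousOn
    (f := fun P => fderiv ℝ K P (1, 0)) hc.continuousOn
  refine (hasDerivAt_integral_of_dominated_loc_of_deriv_le (F := fun s x => K (s, x))
    (F' := fun s x => fderiv ℝ K (s, x) (1, 0)) (bound := B.indicator fun _ => C)
    (Ioo_mem_nhds (by linarith : t - 1 < t) (by linarith : t < t + 1)) ?_ ?_ ?_ ?_ ?_ ?_).2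
  · exact Eventually.of_forall fun s => (hK.continuous.comp (by fun_prop)).aestronglyMeasurable
  · exact (hK.continuous.comp (by fun_prop : Continuous fun x : Plane => (t, x))).integrable_of_hasCompactSupport (hasCompactSupport_slice h0 t)
  · exact (hc.comp (by fun_prop : Continuous fun x : Plane => (t, x))).aestronglyMeasurable
  · refine Eventually.of_forall fun x s hs => ?_
    by_cases hx : x ∈ B
    · rw [Set.indicator_of_mem hx]
      exact hC (s, x) ⟨⟨hs.1.le, hs.2.le⟩, hx⟩
    · rw [Set.indicator_of_notMem hx, hd0, norm_zero]
      have h1 : ¬ (‖x‖ ^ 2 ≤ M - lam * (t - 1)) := hx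
      unfold coneFun
      simp only
      nlinarith [hs.1]
  · rw [integrable_indicator_iff hBc.measurableSet]
    exact integrableOn_const hBc.measure_lt_top.ne
  · exact Eventually.of_forall fun x s _ => hasDerivAt_slice hK s x

/-- Divergence terms integrate to zero over each time slice. -/
theorem integral_fderiv_slice {K : ℝ × Plane → ℝ} (hK : ContDiff ℝ 1 K) {M lam : ℝ}
    (h0 : ∀ P, coneFun M lam P < 0 → K P = 0) (t : ℝ) (v : Plane) :
    Integrable (fun x => fderiv ℝ K (t, x) (0, v)) ∧ ∫ x, fderiv ℝ K (t, x) (0, v) = 0 := by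
  have hc : Continuous fun P => fderiv ℝ K P (0, v) := continuous_fderiv_dir hK _
  have hi : Integrable (fun x => fderiv ℝ K (t, x) (0, v)) :=
    (hc.comp (by fun_prop : Continuous fun x : Plane => (t, x))).integrable_of_hasCompactSupport
      (hasCompactSupport_slice (fderiv_zero_off_cone h0 (0, v)) t)
  have hk : Integrable (fun x => K (t, x)) :=
    (hK.continuous.comp (by fun_prop : Continuous fun x : Plane => (t, x))).integrable_of_hasCompactSupport (hasCompactSupport_slice h0 t)
  have he : ∀ x, fderiv ℝ (fun y => K (t, y)) x v = fderiv ℝ K (t, x) (0, v) := fun x => by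
    rw [(hasFDerivAt_slice hK t x).fderiv]
    simp
  refine ⟨hi, ?_⟩
  have := integral_mul_fderiv_eq_neg_fderiv_mul_of_integrable (μ := (volume : Measure Plane)) (f := fun _ => (1:ℝ))
    (g := fun y => K (t, y)) (v := v) (by simp) (by simpa [he] using hi) (by simpa using hk) (fun x _ => by fun_prop)
    (fun x _ => (hasFDerivAt_slice hK t x).differentiableAt)
  simpa [he] using this

/-- Uniqueness for positive times. The energy density `a² f² + Σ_j g_j²` is weighted with `η(φ)`, where
`η` is the smooth function vanishing exactly on `(-∞, 0]` and `φ = N² - |x|² - b N t`. With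
`b = 2a/|ε|` the weight decreases fast enough in `t` to absorb the energy flux, so the weighted energy
does not increase; with `N = bT + |x₀| + 1` the weight is positive at `(T, x₀)`. -/
theorem acoustic_unique_pos {a ε : ℝ} (ha : 0 < a) (hε : ε ≠ 0) {f : ℝ × Plane → ℝ} {g : Fin 2 → ℝ × Plane → ℝ}
    (hf : ContDiff ℝ 1 f) (hg : ∀ j, ContDiff ℝ 1 (g j))
    (h1 : ∀ P, ε * fderiv ℝ f P (1, 0) + ∑ j, fderiv ℝ (g j) P (0, bv j) = 0)
    (h2 : ∀ P j, ε * fderiv ℝ (g j) P (1, 0) + a ^ 2 * fderiv ℝ f P (0, bv j) = 0)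
    (hf0 : ∀ x, f (0, x) = 0) (hg0 : ∀ j x, g j (0, x) = 0) (T : ℝ) (hT : 0 ≤ T) (x₀ : Plane) :
    f (T, x₀) = 0 ∧ ∀ j, g j (T, x₀) = 0 := by
  obtain ⟨b, hb⟩ : ∃ b, b = 2 * a / |ε| := ⟨_, rfl⟩
  have hε' : 0 < |ε| := abs_pos.mpr hε
  have hb0 : 0 < b := by rw [hb]; positivity
  obtain ⟨N, hN⟩ : ∃ N, N = b * T + ‖x₀‖ + 1 := ⟨_, rfl⟩
  have hx0 := norm_nonneg x₀
  have hN0 : 0 < N := by rw [hN]; positivity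
  obtain ⟨φ, hφ⟩ : ∃ φ, φ = coneFun (N ^ 2) (b * N) := ⟨_, rfl⟩
  have hφc : ContDiff ℝ 1 φ := hφ ▸ contDiff_coneFun _ _
  have hη : ContDiff ℝ 1 (fun P => expNegInvGlue (φ P)) := (expNegInvGlue.contDiff (n := 1)).comp hφc
  obtain ⟨e, he⟩ : ∃ e : ℝ × Plane → ℝ, e = fun P => a ^ 2 * f P ^ 2 + ∑ j, g j P ^ 2 := ⟨_, rfl⟩
  have hec : ContDiff ℝ 1 e := by
    rw [he]
    exact (contDiff_const.mul (hf.pow 2)).add (ContDiff.sum fun j _ => (hg j).pow 2)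
  obtain ⟨K, hKdef⟩ : ∃ K : ℝ × Plane → ℝ, K = fun P => expNegInvGlue (φ P) * e P := ⟨_, rfl⟩
  obtain ⟨W, hWdef⟩ : ∃ W : Fin 2 → ℝ × Plane → ℝ, W = fun j P => expNegInvGlue (φ P) * (f P * g j P) := ⟨_, rfl⟩
  have hK : ContDiff ℝ 1 K := by rw [hKdef]; exact hη.mul hec
  have hW : ∀ j, ContDiff ℝ 1 (W j) := fun j => by rw [hWdef]; exact hη.mul (hf.mul (hg j))
  have hK0 : ∀ P, coneFun (N ^ 2) (b * N) P < 0 → K P = 0 := fun P hP => by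
    rw [← hφ] at hP
    rw [hKdef]; simp only; rw [expNegInvGlue.zero_of_nonpos hP.le, zero_mul]
  have hW0 : ∀ j P, coneFun (N ^ 2) (b * N) P < 0 → W j P = 0 := fun j P hP => by
    rw [← hφ] at hP
    rw [hWdef]; simp only; rw [expNegInvGlue.zero_of_nonpos hP.le, zero_mul]
  have he0 : ∀ P, 0 ≤ e P := fun P => by rw [he]; positivity
  have hKnn : ∀ P, 0 ≤ K P := fun P => by
    rw [hKdef]; exact mul_nonneg (expNegInvGlue.nonneg _) (he0 P)
  -- `δ`, the derivative of `η` at `φ`, is nonnegative and vanishes outside the region `φ > 0`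
  obtain ⟨δ, hδ⟩ : ∃ δ : ℝ × Plane → ℝ, δ = fun P => deriv expNegInvGlue (φ P) := ⟨_, rfl⟩
  have hδ0 : ∀ P, 0 ≤ δ P := fun P => by rw [hδ]; exact expNegInvGlue.monotone.deriv_nonneg
  have hδz : ∀ P, φ P ≤ 0 → δ P = 0 := fun P hP => by
    rw [hδ]
    refine IsLocalMin.deriv_eq_zero (Eventually.of_forall fun s => ?_)
    rw [expNegInvGlue.zero_of_nonpos hP]
    exact expNegInvGlue.nonneg s
  have hφ' : ∀ P v, fderiv ℝ φ P v = -(2 * inner ℝ P.2 v.2) - b * N * v.1 := by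
    intro P v
    rw [hφ]
    exact fderiv_coneFun _ _ P v
  have hη' : ∀ P, HasFDerivAt (fun P => expNegInvGlue (φ P)) (δ P • fderiv ℝ φ P) P := by
    intro P
    rw [hδ]
    exact (((expNegInvGlue.contDiff (n := 1)).differentiable (by norm_num) (φ P)).hasDerivAt).comp_hasFDerivAt P
      (hφc.differentiable one_ne_zero P).hasFDerivAt
  have hf' := fun P => (hf.differentiable one_ne_zero P).hasFDerivAt
  have hg' := fun j P => ((hg j).differentiable one_ne_zero P).hasFDerivAt
  have hK' : ∀ P v, fderiv ℝ K P v = δ P * fderiv ℝ φ P v * e P +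
      expNegInvGlue (φ P) * (2 * a ^ 2 * f P * fderiv ℝ f P v + ∑ j, 2 * g j P * fderiv ℝ (g j) P v) := by
    intro P v
    have h3 := (hη' P).mul ((((hf' P).pow 2).const_mul (a ^ 2)).add
      (HasFDerivAt.fun_sum (u := Finset.univ) fun j _ => (hg' j P).pow 2))
    rw [hKdef, he]
    refine (DFunLike.congr_fun h3.fderiv v).trans ?_
    simp [Fin.sum_univ_two]
    ring
  have hW' : ∀ j P v, fderiv ℝ (W j) P v = δ P * fderiv ℝ φ P v * (f P * g j P) +
      expNegInvGlue (φ P) * (fderiv ℝ f P v * g j P + f P * fderiv ℝ (g j) P v) := by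
    intro j P v
    have h3 := (hη' P).mul ((hf' P).mul (hg' j P))
    rw [hWdef]
    refine (DFunLike.congr_fun h3.fderiv v).trans ?_
    simp
    ring
  have key : ∀ t x, 0 ≤ t → fderiv ℝ K (t, x) (1, 0) ≤ -(2 * a ^ 2 / ε) * ∑ j, fderiv ℝ (W j) (t, x) (0, bv j) := by
    intro t x ht
    obtain ⟨P, hP⟩ : ∃ P : ℝ × Plane, P = (t, x) := ⟨_, rfl⟩
    rw [← hP]
    have q1 : fderiv ℝ f P (1, 0) = -(fderiv ℝ (g 0) P (0, bv 0) + fderiv ℝ (g 1) P (0, bv 1)) / ε := by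
      have := h1 P
      rw [Fin.sum_univ_two] at this
      field_simp; linarith
    have q2 : ∀ j, fderiv ℝ (g j) P (1, 0) = -(a ^ 2 * fderiv ℝ f P (0, bv j)) / ε := by
      intro j
      have := h2 P j
      field_simp; linarith
    have hip : ∀ j, inner ℝ x (bv j) = x j := fun j => by simp [bv, EuclideanSpace.inner_single_right]
    have hdiff : fderiv ℝ K P (1, 0) - -(2 * a ^ 2 / ε) * ∑ j, fderiv ℝ (W j) P (0, bv j) =
        δ P * (-(b * N) * e P - 4 * a ^ 2 / ε * (f P * (x 0 * g 0 P + x 1 * g 1 P))) := by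
      rw [hK', Fin.sum_univ_two, Fin.sum_univ_two, hW', hW', q1, q2, q2, hφ', hφ', hφ']
      simp only [hP, hip]
      simp
      field_simp
      ring
    rw [← sub_nonpos, hdiff]
    rcases le_or_gt (φ P) 0 with hle | hgt
    · rw [hδz P hle, zero_mul]
    refine mul_nonpos_of_nonneg_of_nonpos (hδ0 P) ?_
    have hxN : ‖x‖ ≤ N := by
      rw [hφ, hP] at hgt
      unfold coneFun at hgt
      simp only at hgt
      have : 0 ≤ b * N * t := by positivity
      refine abs_le_of_sq_le_sq' (by linarith) hN0.le |>.2
    have hxx : x 0 ^ 2 + x 1 ^ 2 ≤ N ^ 2 := by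
      have : ‖x‖ ^ 2 = x 0 ^ 2 + x 1 ^ 2 := by
        rw [EuclideanSpace.norm_sq_eq, Fin.sum_univ_two]; simp
      rw [← this]; gcongr
    have heP : e P = a ^ 2 * f P ^ 2 + (g 0 P ^ 2 + g 1 P ^ 2) := by rw [he]; simp only [Fin.sum_univ_two]
    -- Cauchy–Schwarz and the arithmetic–geometric mean inequality
    have hcs : |2 * a * (f P * (x 0 * g 0 P + x 1 * g 1 P))| ≤ N * e P := by
      have hs : |x 0 * g 0 P + x 1 * g 1 P| ≤ N * √(g 0 P ^ 2 + g 1 P ^ 2) := by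
        refine abs_le_of_sq_le_sq ?_ (by positivity)
        rw [mul_pow, Real.sq_sqrt (by positivity)]
        calc _ ≤ (x 0 ^ 2 + x 1 ^ 2) * (g 0 P ^ 2 + g 1 P ^ 2) := by nlinarith [sq_nonneg (x 0 * g 1 P - x 1 * g 0 P)]
          _ ≤ _ := by gcongr
      rw [abs_mul, abs_mul (f P), abs_of_pos (by positivity : 0 < 2 * a), heP]
      obtain ⟨r, hr⟩ : ∃ r, r = √(g 0 P ^ 2 + g 1 P ^ 2) := ⟨_, rfl⟩
      have hr2 : g 0 P ^ 2 + g 1 P ^ 2 = r ^ 2 := by rw [hr, Real.sq_sqrt (by positivity)]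
      rw [← hr] at hs
      rw [hr2]
      calc _ ≤ 2 * a * (|f P| * (N * r)) := by gcongr
        _ ≤ _ := by
          rw [← sq_abs (f P)]
          nlinarith [mul_nonneg hN0.le (sq_nonneg (a * |f P| - r))]
    have h5 : -(4 * a ^ 2 / ε * (f P * (x 0 * g 0 P + x 1 * g 1 P))) ≤ b * (N * e P) := by
      refine (neg_le_abs _).trans ?_
      rw [show 4 * a ^ 2 / ε * (f P * (x 0 * g 0 P + x 1 * g 1 P)) = 2 * a / ε * (2 * a * (f P * (x 0 * g 0 P + x 1 * g 1 P))) by field_simp; ring,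
        abs_mul, abs_div, abs_of_pos (by positivity : 0 < 2 * a), ← hb]
      gcongr
    linarith
  have hbN : 0 ≤ b * N := by positivity
  have hE := fun t => hasDerivAt_energy hK hbN hK0 t
  have hanti : AntitoneOn (fun t => ∫ x, K (t, x)) (Set.Ici 0) := by
    refine antitoneOn_of_deriv_nonpos (convex_Ici 0) (fun t _ => (hE t).continuousAt.continuousWithinAt)
      (fun t _ => (hE t).differentiableAt.differentiableWithinAt) fun t ht => ?_
    rw [interior_Ici] at ht
    rw [(hE t).deriv]
    have hWi := fun j => integral_fderiv_slice (hW j) (hW0 j) t (bv j)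
    have hKi : Integrable fun x => fderiv ℝ K (t, x) (1, 0) :=
      ((continuous_fderiv_dir hK _).comp (by fun_prop : Continuous fun x : Plane => (t, x))).integrable_of_hasCompactSupport
        (hasCompactSupport_slice (fderiv_zero_off_cone hK0 _) t)
    calc _ ≤ ∫ x, -(2 * a ^ 2 / ε) * ∑ j, fderiv ℝ (W j) (t, x) (0, bv j) :=
          integral_mono hKi ((integrable_finsetSum _ fun j _ => (hWi j).1).const_mul _) fun x => key t x (le_of_lt ht)
      _ = 0 := by
          rw [integral_const_mul, integral_finsetSum _ fun j _ => (hWi j).1]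
          simp [(hWi _).2]
  have hE0 : ∫ x, K (0, x) = 0 := by
    have : ∀ x, K (0, x) = 0 := fun x => by rw [hKdef, he]; simp [hf0, hg0]
    simp [this]
  have hET : ∫ x, K (T, x) ≤ 0 := by
    have := hanti (Set.mem_Ici.mpr le_rfl) (Set.mem_Ici.mpr hT) hT
    simp only at this
    rwa [hE0] at this
  have hKT : K (T, x₀) = 0 := by
    by_contra hne
    exact absurd ((hK.continuous.comp (by fun_prop : Continuous fun x : Plane => (T, x))).integral_pos_of_hasCompactSupport_nonneg_nonzero
      (hasCompactSupport_slice hK0 T) (fun x => hKnn _) hne) (not_lt.mpr hET)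
  have hφT : 0 < φ (T, x₀) := by
    rw [hφ]; unfold coneFun; simp only
    have : N ^ 2 - b * N * T = N * (‖x₀‖ + 1) := by rw [hN]; ring
    have h6 : ‖x₀‖ + 1 ≤ N := by rw [hN]; nlinarith [mul_nonneg hb0.le hT]
    nlinarith
  have heT : e (T, x₀) = 0 := by
    rw [hKdef] at hKT
    exact (mul_eq_zero.mp hKT).resolve_left (expNegInvGlue.pos_of_pos hφT).ne'
  rw [he] at heT
  simp only [Fin.sum_univ_two] at heT
  have s1 := sq_nonneg (g 0 (T, x₀))
  have s2 := sq_nonneg (g 1 (T, x₀))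
  have s3 : 0 ≤ a ^ 2 * f (T, x₀) ^ 2 := by positivity
  have z1 : a ^ 2 * f (T, x₀) ^ 2 = 0 := by linarith
  refine ⟨by simpa [ha.ne'] using z1, fun j => ?_⟩
  fin_cases j
  · exact pow_eq_zero_iff two_ne_zero |>.mp (by simp only [Fin.zero_eta]; linarith)
  · exact pow_eq_zero_iff two_ne_zero |>.mp (by simp only [Fin.mk_one]; linarith)

/-- A `C¹` solution of the acoustic system, written in first-order form, with zero initial data vanishes
at all times. -/
theorem acoustic_unique {a ε : ℝ} (ha : 0 < a) (hε : ε ≠ 0) {f : ℝ × Plane → ℝ} {g : Fin 2 → ℝ × Plane → ℝ}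
    (hf : ContDiff ℝ 1 f) (hg : ∀ j, ContDiff ℝ 1 (g j))
    (h1 : ∀ P, ε * fderiv ℝ f P (1, 0) + ∑ j, fderiv ℝ (g j) P (0, bv j) = 0)
    (h2 : ∀ P j, ε * fderiv ℝ (g j) P (1, 0) + a ^ 2 * fderiv ℝ f P (0, bv j) = 0)
    (hf0 : ∀ x, f (0, x) = 0) (hg0 : ∀ j x, g j (0, x) = 0) (T : ℝ) (x₀ : Plane) :
    f (T, x₀) = 0 ∧ ∀ j, g j (T, x₀) = 0 := by
  rcases le_total 0 T with hT | hT
  · exact acoustic_unique_pos ha hε hf hg h1 h2 hf0 hg0 T hT x₀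
  -- for negative times, reverse time and replace `ε` by `-ε`
  obtain ⟨R, hR⟩ : ∃ R : (ℝ × Plane) →L[ℝ] (ℝ × Plane),
      R = (-ContinuousLinearMap.fst ℝ ℝ Plane).prod (ContinuousLinearMap.snd ℝ ℝ Plane) := ⟨_, rfl⟩
  have hRa : ∀ P, R P = (-P.1, P.2) := fun P => by rw [hR]; rfl
  have hd : ∀ {F : ℝ × Plane → ℝ}, ContDiff ℝ 1 F → ∀ P v, fderiv ℝ (F ∘ R) P v = fderiv ℝ F (R P) (R v) := by
    intro F hF P v
    rw [fderiv_comp P (hF.differentiable one_ne_zero _) R.differentiableAt]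
    simp
  have hn : ∀ {F : ℝ × Plane → ℝ} P, fderiv ℝ F P (R (1, 0)) = - fderiv ℝ F P (1, 0) := by
    intro F P
    rw [← map_neg, hRa]; simp
  have hs : ∀ {F : ℝ × Plane → ℝ} P v, fderiv ℝ F P (R (0, v)) = fderiv ℝ F P (0, v) := by
    intro F P v
    rw [hRa]; simp
  have := acoustic_unique_pos (f := f ∘ R) (g := fun j => g j ∘ R) ha (neg_ne_zero.mpr hε)
    (hf.comp R.contDiff) (fun j => (hg j).comp R.contDiff)
    (fun P => by
      simp only [hd hf, hd (hg _), hn, hs]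
      have := h1 (R P); linarith)
    (fun P j => by
      simp only [hd hf, hd (hg _), hn, hs]
      have := h2 (R P) j; linarith)
    (fun x => by simp [hRa, hf0]) (fun j x => by simp [hRa, hg0]) (-T) (by linarith) x₀
  simpa [hRa] using this

/-! ### Half waves as functions of space-time -/

/-- The Euclidean inner product on space-time. It is given by hand because `ℝ × Plane` carries the sup
norm. -/
def stForm : (ℝ × Plane) →L[ℝ] (ℝ × Plane) →L[ℝ] ℝ :=
  let B : Plane →L[ℝ] Plane →L[ℝ] ℝ := innerSL ℝ
  (ContinuousLinearMap.mul ℝ ℝ).bilinearComp (ContinuousLinearMap.fst ℝ ℝ Plane) (ContinuousLinearMap.fst ℝ ℝ Plane) +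
    B.bilinearComp (ContinuousLinearMap.snd ℝ ℝ Plane) (ContinuousLinearMap.snd ℝ ℝ Plane)

theorem stForm_apply (v w : ℝ × Plane) : stForm v w = v.1 * w.1 + inner ℝ v.2 w.2 := by
  rfl

/-- The point of the cone `τ = κ|ξ|` above `ξ`. -/
def coneLift (κ : ℝ) (ξ : Plane) : ℝ × Plane := (κ * ‖ξ‖, ξ)

theorem continuous_coneLift (κ : ℝ) : Continuous (coneLift κ) := by unfold coneLift; fun_prop

/-- The amplitude of the derivative of a half wave in the space-time direction `w`. -/
def stSymb (κ : ℝ) (g : Plane → ℂ) (w : ℝ × Plane) (ξ : Plane) : ℂ :=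
  -(2 * Real.pi * Complex.I) * ((κ * ‖ξ‖ * w.1 + inner ℝ ξ w.2 : ℝ) * g ξ)

/-- A half wave is the space-time Fourier transform of a measure on the cone. Mathlib's differentiation
theorems for Fourier integrals therefore apply in `t` and `x` jointly. -/
theorem halfWave_eq_vectorFourier (κ : ℝ) {g : Plane → ℂ} (hm : Measurable g) (P : ℝ × Plane) :
    halfWave κ g P.1 P.2 = VectorFourier.fourierIntegral Real.fourierChar
      (Measure.map (coneLift κ) volume) (ContinuousLinearMap.toLinearMap₁₂ stForm) (fun v => g v.2) P := by
  unfold VectorFourier.fourierIntegral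
  rw [integral_map (continuous_coneLift κ).aemeasurable]
  · unfold halfWave
    congr 1; ext ξ
    rw [Circle.smul_def, Real.fourierChar_apply, smul_eq_mul]
    have h1 : (ContinuousLinearMap.toLinearMap₁₂ stForm) (coneLift κ ξ) P = stForm (coneLift κ ξ) P := rfl
    rw [h1, stForm_apply]
    simp only [coneLift]
    congr 2
    push_cast; ring
  · have h1 : Continuous fun v : ℝ × Plane => (Real.fourierChar (-(stForm v P)) : ℂ) := by
      simp only [Real.fourierChar_apply]
      fun_prop
    have h2 : Measurable fun v : ℝ × Plane => (Real.fourierChar (-(stForm v P)) : ℂ) * g v.2 :=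
      h1.measurable.mul (hm.comp measurable_snd)
    exact h2.aestronglyMeasurable

theorem RapidDecay.coneLift_integrable {g : Plane → ℂ} (hg : RapidDecay g) (κ : ℝ) (n : ℕ) :
    Integrable (fun v : ℝ × Plane => ‖v‖ ^ n * ‖g v.2‖) (Measure.map (coneLift κ) volume) := by
  have hm := hg.meas
  rw [integrable_map_measure (Measurable.aestronglyMeasurable (by fun_prop)) (continuous_coneLift κ).aemeasurable]
  refine ((hg.int n).const_mul ((|κ| + 1) ^ n)).mono'
    (Measurable.aestronglyMeasurable ?_) (Eventually.of_forall fun ξ => ?_)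
  · have := (continuous_coneLift κ).measurable
    exact Measurable.comp (by fun_prop) this
  · simp only [Function.comp_apply, coneLift]
    rw [Real.norm_of_nonneg (by positivity), ← mul_assoc, ← mul_pow]
    have h3 : ‖((κ * ‖ξ‖, ξ) : ℝ × Plane)‖ ≤ (|κ| + 1) * ‖ξ‖ := by
      rw [Prod.norm_def, max_le_iff]
      have := norm_nonneg ξ
      have := abs_nonneg κ
      constructor
      · simp only [Real.norm_eq_abs, abs_mul, abs_norm]
        nlinarith
      · simp only
        nlinarith
    gcongr

theorem RapidDecay.stSymb {g : Plane → ℂ} (hg : RapidDecay g) (κ : ℝ) (w : ℝ × Plane) : RapidDecay (stSymb κ g w) := by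
  refine hg.of_le ?_ (2 * Real.pi * (|κ| * |w.1| + ‖w.2‖)) 1 fun ξ => ?_
  · unfold _root_.stSymb
    have := hg.meas
    fun_prop
  · unfold _root_.stSymb
    have h1 : ‖-(2 * Real.pi * Complex.I : ℂ)‖ = 2 * Real.pi := by
      simp [abs_of_pos Real.pi_pos]
    rw [norm_mul, norm_mul, h1, Complex.norm_real, pow_one]
    have h2 : ‖κ * ‖ξ‖ * w.1 + inner ℝ ξ w.2‖ ≤ (|κ| * |w.1| + ‖w.2‖) * ‖ξ‖ := by
      refine (norm_add_le _ _).trans ?_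
      have h3 := norm_inner_le_norm (𝕜 := ℝ) ξ w.2
      have h4 : ‖κ * ‖ξ‖ * w.1‖ = |κ| * ‖ξ‖ * |w.1| := by simp
      rw [h4]; linarith
    have hpi := Real.pi_pos
    calc _ ≤ 2 * Real.pi * (((|κ| * |w.1| + ‖w.2‖) * ‖ξ‖) * ‖g ξ‖) := by gcongr
      _ = _ := by ring

theorem contDiff_halfWave_joint (κ : ℝ) {g : Plane → ℂ} (hg : RapidDecay g) :
    ContDiff ℝ 1 fun P : ℝ × Plane => halfWave κ g P.1 P.2 := by
  simp only [halfWave_eq_vectorFourier κ hg.meas]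
  exact VectorFourier.contDiff_fourierIntegral (N := 1) stForm fun n _ => hg.coneLift_integrable κ n

theorem fderiv_halfWave_joint (κ : ℝ) {g : Plane → ℂ} (hg : RapidDecay g) (P w : ℝ × Plane) :
    fderiv ℝ (fun P : ℝ × Plane => halfWave κ g P.1 P.2) P w = halfWave κ (stSymb κ g w) P.1 P.2 := by
  have h0 : Integrable (fun v : ℝ × Plane => g v.2) (Measure.map (coneLift κ) volume) := by
    have h := hg.coneLift_integrable κ 0
    simp only [pow_zero, one_mul] at h
    exact (integrable_norm_iff (hg.meas.comp measurable_snd).aestronglyMeasurable).mp h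
  have h1 : Integrable (fun v : ℝ × Plane => ‖v‖ * ‖g v.2‖) (Measure.map (coneLift κ) volume) := by
    simpa using hg.coneLift_integrable κ 1
  rw [halfWave_eq_vectorFourier κ (hg.stSymb κ w).meas]
  simp only [halfWave_eq_vectorFourier κ hg.meas]
  rw [(VectorFourier.hasFDerivAt_fourierIntegral stForm h0 h1 P).fderiv,
    VectorFourier.fourierIntegral_continuousLinearMap_apply Real.continuous_fourierChar]
  · unfold VectorFourier.fourierIntegral
    have hm := hg.meas
    have h5 := (hg.stSymb κ w).meas
    have h1 : Continuous fun v : ℝ × Plane => (Real.fourierChar (-(stForm v P)) : ℂ) := by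
      simp only [Real.fourierChar_apply]
      fun_prop
    rw [integral_map (continuous_coneLift κ).aemeasurable, integral_map (continuous_coneLift κ).aemeasurable]
    · simp only [VectorFourier.fourierSMulRight_apply, coneLift, stForm_apply, stSymb, smul_eq_mul, Complex.real_smul]
    · have h2 : Measurable fun v : ℝ × Plane => (Real.fourierChar (-(stForm v P)) : ℂ) * stSymb κ g w v.2 :=
        h1.measurable.mul (h5.comp measurable_snd)
      exact h2.aestronglyMeasurable
    · simp only [VectorFourier.fourierSMulRight_apply]
      have h2 : Measurable fun v : ℝ × Plane => (Real.fourierChar (-(stForm v P)) : ℂ) *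
          (-(2 * Real.pi * Complex.I) * ((stForm v w : ℂ) * g v.2)) := by
        refine h1.measurable.mul (measurable_const.mul (Measurable.mul ?_ (hm.comp measurable_snd)))
        fun_prop
      exact h2.aestronglyMeasurable
  · refine (h1.const_mul (2 * Real.pi * ‖stForm‖)).mono'
      ((hg.meas.comp measurable_snd).aestronglyMeasurable.fourierSMulRight (L := stForm)) (Eventually.of_forall fun v => ?_)
    refine (VectorFourier.norm_fourierSMulRight_le stForm _ v).trans (le_of_eq ?_)
    ring

/-! ### Half waves solve the acoustic system -/

/-- A `C¹` solution of the acoustic system in first-order form, where `f` is the density fluctuation and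
`g j` the `j`-th component of the gradient of the potential. -/
structure AcSol (a ε : ℝ) (f : ℝ × Plane → ℝ) (g : Fin 2 → ℝ × Plane → ℝ) : Prop where
  contDiff_f : ContDiff ℝ 1 f
  contDiff_g : ∀ j, ContDiff ℝ 1 (g j)
  mass : ∀ P, ε * fderiv ℝ f P (1, 0) + ∑ j, fderiv ℝ (g j) P (0, bv j) = 0
  momentum : ∀ P j, ε * fderiv ℝ (g j) P (1, 0) + a ^ 2 * fderiv ℝ f P (0, bv j) = 0

theorem AcSol.lin {a ε : ℝ} {f f' : ℝ × Plane → ℝ} {g g' : Fin 2 → ℝ × Plane → ℝ}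
    (h : AcSol a ε f g) (h' : AcSol a ε f' g') (c : ℝ) :
    AcSol a ε (fun P => f P + c * f' P) (fun j P => g j P + c * g' j P) := by
  have hd : ∀ {u u' : ℝ × Plane → ℝ}, ContDiff ℝ 1 u → ContDiff ℝ 1 u' → ∀ P v,
      fderiv ℝ (fun P => u P + c * u' P) P v = fderiv ℝ u P v + c * fderiv ℝ u' P v := by
    intro u u' hu hu' P v
    have h1 := ((hu.differentiable one_ne_zero P).hasFDerivAt).add
      (((hu'.differentiable one_ne_zero P).hasFDerivAt).const_mul c)
    refine (DFunLike.congr_fun h1.fderiv v).trans ?_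
    simp
  refine ⟨h.contDiff_f.add (contDiff_const.mul h'.contDiff_f),
    fun j => (h.contDiff_g j).add (contDiff_const.mul (h'.contDiff_g j)), fun P => ?_, fun P j => ?_⟩
  · simp only [hd h.contDiff_f h'.contDiff_f, hd (h.contDiff_g _) (h'.contDiff_g _)]
    have e1 := h.mass P
    have e2 := h'.mass P
    rw [Fin.sum_univ_two] at e1 e2 ⊢
    linear_combination e1 + c * e2
  · rw [hd h.contDiff_f h'.contDiff_f, hd (h.contDiff_g _) (h'.contDiff_g _)]
    linear_combination h.momentum P j + c * h'.momentum P j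

theorem AcSol.eq {a ε : ℝ} (ha : 0 < a) (hε : ε ≠ 0) {f f' : ℝ × Plane → ℝ} {g g' : Fin 2 → ℝ × Plane → ℝ}
    (h : AcSol a ε f g) (h' : AcSol a ε f' g') (hf : ∀ x, f (0, x) = f' (0, x)) (hg : ∀ j x, g j (0, x) = g' j (0, x))
    (t : ℝ) (x : Plane) : f (t, x) = f' (t, x) ∧ ∀ j, g j (t, x) = g' j (t, x) := by
  have hd := h.lin h' (-1)
  have := acoustic_unique ha hε hd.contDiff_f hd.contDiff_g hd.mass hd.momentum
    (fun x => by rw [hf]; ring) (fun j x => by simp only [hg]; ring) t x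
  exact ⟨by linarith [this.1], fun j => by linarith [this.2 j]⟩

theorem IsAcousticSolution.acSol {a ε : ℝ} {ψ Ψ : ℝ → Plane → ℝ} (h : IsAcousticSolution a ε ψ Ψ) :
    AcSol a ε (fun P => ψ P.1 P.2) (fun j P => fderiv ℝ (Ψ P.1) P.2 (bv j)) := by
  obtain ⟨h1, h2, -, -, h5, h6⟩ := h
  have h1' : ContDiff ℝ 1 (fun P : ℝ × Plane => ψ P.1 P.2) := h1.of_le (by exact_mod_cast le_top)
  have h2' : ContDiff ℝ 1 (fun P : ℝ × Plane => Ψ P.1 P.2) := h2.of_le (by exact_mod_cast le_top)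
  have hsl : ∀ (t : ℝ) (x v : Plane), fderiv ℝ (Ψ t) x v = fderiv ℝ (fun P : ℝ × Plane => Ψ P.1 P.2) (t, x) (0, v) := by
    intro t x v
    have := (hasFDerivAt_slice h2' t x).fderiv
    simp only at this
    rw [show Ψ t = fun y => Ψ t y from rfl, this]
    simp
  have hg : ∀ j, ContDiff ℝ 1 fun P : ℝ × Plane => fderiv ℝ (Ψ P.1) P.2 (bv j) := by
    intro j
    simp only [hsl]
    have : ContDiff ℝ 1 (fderiv ℝ (fun P : ℝ × Plane => Ψ P.1 P.2)) :=
      (h2.of_le (show ((2 : ℕ∞) : WithTop ℕ∞) ≤ _ from WithTop.coe_le_coe.mpr le_top)).fderiv_right (m := 1) (by norm_num)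
    exact this.clm_apply contDiff_const
  have hgrad : ∀ (u : Plane → ℝ) x j, (gradient u x) j = fderiv ℝ u x (bv j) := by
    intro u x j
    have h7 : inner ℝ (gradient u x) (bv j) = fderiv ℝ u x (bv j) := by
      unfold gradient; rw [InnerProductSpace.toDual_symm_apply]
    have h8 : ∀ w : Plane, inner ℝ w (bv j) = w j := fun w => by simp [bv, EuclideanSpace.inner_single_right]
    rw [← h7, h8]
  have hpsi : ∀ t x v, fderiv ℝ (ψ t) x v = fderiv ℝ (fun P : ℝ × Plane => ψ P.1 P.2) (t, x) (0, v) := by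
    intro t x v
    have := (hasFDerivAt_slice h1' t x).fderiv
    simp only at this
    rw [show ψ t = fun y => ψ t y from rfl, this]
    simp
  refine ⟨h1', hg, fun P => ?_, fun P j => ?_⟩
  · obtain ⟨t, x⟩ := P
    have e1 := h5 t x
    have e2 := (hasDerivAt_slice h1' t x).deriv
    simp only at e2
    rw [e2] at e1
    refine Eq.trans ?_ e1
    congr 1
    unfold lap2
    refine Finset.sum_congr rfl fun j _ => ?_
    have e3 := (hasFDerivAt_slice (hg j) t x).fderiv
    simp only at e3
    rw [show (fun y => fderiv ℝ (Ψ t) y (EuclideanSpace.single j 1)) = fun y => fderiv ℝ (Ψ t) y (bv j) from rfl, e3]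
    simp
  · obtain ⟨t, x⟩ := P
    have e1 := congrArg (fun w : Plane => w j) (h6 t x)
    have hder : HasDerivAt (fun s => gradient (Ψ s) x)
        (∑ i, fderiv ℝ (fun P : ℝ × Plane => fderiv ℝ (Ψ P.1) P.2 (bv i)) (t, x) (1, 0) • bv i) t := by
      have h8 : (fun s => gradient (Ψ s) x) = fun s => ∑ i, fderiv ℝ (Ψ s) x (bv i) • bv i := by
        ext s i
        rw [hgrad]
        fin_cases i <;> simp
      rw [h8]
      exact HasDerivAt.fun_sum fun i _ => (hasDerivAt_slice (hg i) t x).smul_const (bv i)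
    rw [hder.deriv] at e1
    simp only [PiLp.add_apply, PiLp.smul_apply, hgrad, hpsi, smul_eq_mul, PiLp.zero_apply] at e1
    refine Eq.trans ?_ e1
    congr 2
    fin_cases j <;> simp

theorem halfWave_lin (κ : ℝ) {f g : Plane → ℂ} (hf : Integrable f) (hg : Integrable g) (c d : ℂ) (t : ℝ) (x : Plane) :
    halfWave κ (fun ξ => c * f ξ + d * g ξ) t x = c * halfWave κ f t x + d * halfWave κ g t x := by
  have hi : ∀ {h : Plane → ℂ}, Integrable h → Integrable fun ξ =>
      Complex.exp (-(2 * Real.pi * Complex.I * (κ * t * ‖ξ‖ + inner ℝ ξ x : ℝ))) * h ξ := by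
    intro h hh
    refine hh.bdd_mul (c := 1) (Continuous.aestronglyMeasurable (by fun_prop)) (Eventually.of_forall fun ξ => ?_)
    rw [norm_exp_phase]
  unfold halfWave
  rw [← integral_const_mul, ← integral_const_mul, ← integral_add ((hi hf).const_mul c) ((hi hg).const_mul d)]
  congr 1; ext ξ; ring

/-- The amplitude multiplied by the Riesz symbol `ξ_j / |ξ|`. At `ξ = 0` the symbol takes the junk
value `0`, which is harmless since a point has measure zero. -/
def riesz (j : Fin 2) (g : Plane → ℂ) (ξ : Plane) : ℂ := (ξ j / ‖ξ‖ : ℝ) * g ξ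

theorem norm_riesz_le (j : Fin 2) (g : Plane → ℂ) (ξ : Plane) : ‖riesz j g ξ‖ ≤ ‖g ξ‖ := by
  unfold riesz
  rw [norm_mul, Complex.norm_real, norm_div, norm_norm]
  exact mul_le_of_le_one_left (norm_nonneg _) (div_le_one_of_le₀ (PiLp.norm_apply_le _ _) (norm_nonneg _))

theorem RapidDecay.riesz {g : Plane → ℂ} (hg : RapidDecay g) (j : Fin 2) : RapidDecay (riesz j g) := by
  refine hg.of_le ?_ 1 0 fun ξ => by simpa using norm_riesz_le j g ξ
  unfold _root_.riesz
  have := hg.meas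
  fun_prop

theorem riesz_mul_norm (j : Fin 2) (ξ : Plane) : ξ j / ‖ξ‖ * ‖ξ‖ = ξ j := by
  rcases eq_or_ne ξ 0 with rfl | h
  · simp
  · exact div_mul_cancel₀ _ (norm_ne_zero_iff.mpr h)

/-- The real part of a half wave with `ε κ = ± a` is the density of a solution, whose gradient field is given
by Riesz transforms. -/
theorem acSol_halfWave {a ε κ b : ℝ} (hκ : ε * κ = b) (hb : b ^ 2 = a ^ 2) {g : Plane → ℂ} (hg : RapidDecay g) :
    AcSol a ε (fun P => (halfWave κ g P.1 P.2).re) (fun j P => -b * (halfWave κ (riesz j g) P.1 P.2).re) := by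
  have hc : ∀ {h : Plane → ℂ}, RapidDecay h → ContDiff ℝ 1 fun P : ℝ × Plane => (halfWave κ h P.1 P.2).re := fun hh =>
    Complex.reCLM.contDiff.comp (contDiff_halfWave_joint κ hh)
  have hd : ∀ {h : Plane → ℂ}, RapidDecay h → ∀ P v,
      fderiv ℝ (fun P : ℝ × Plane => (halfWave κ h P.1 P.2).re) P v = (halfWave κ (stSymb κ h v) P.1 P.2).re := by
    intro h hh P v
    rw [← fderiv_halfWave_joint κ hh]
    have h1 := (Complex.reCLM.hasFDerivAt (x := halfWave κ h P.1 P.2)).comp P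
      ((contDiff_halfWave_joint κ hh).differentiable one_ne_zero P).hasFDerivAt
    exact (DFunLike.congr_fun h1.fderiv v)
  have hd' : ∀ {h : Plane → ℂ}, RapidDecay h → ∀ P v,
      fderiv ℝ (fun P : ℝ × Plane => -b * (halfWave κ h P.1 P.2).re) P v = -b * (halfWave κ (stSymb κ h v) P.1 P.2).re := by
    intro h hh P v
    rw [← hd hh]
    have h1 := (((hc hh).differentiable one_ne_zero P).hasFDerivAt).const_mul (-b)
    refine (DFunLike.congr_fun h1.fderiv v).trans ?_
    simp
  have hip : ∀ (ξ : Plane) j, inner ℝ ξ (bv j) = ξ j := fun ξ j => by simp [bv, EuclideanSpace.inner_single_right]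
  refine ⟨hc hg, fun j => contDiff_const.mul (hc (hg.riesz j)), fun P => ?_, fun P j => ?_⟩
  · have h1 : stSymb κ g (1, 0) = fun ξ => (κ : ℂ) * stSymb κ (riesz 0 g) (0, bv 0) ξ + κ * stSymb κ (riesz 1 g) (0, bv 1) ξ := by
      ext ξ
      have h2 : ((‖ξ‖ : ℝ) : ℂ) = (ξ 0 : ℂ) * (ξ 0 / ‖ξ‖ : ℝ) + (ξ 1 : ℂ) * (ξ 1 / ‖ξ‖ : ℝ) := by
        have h3 : ‖ξ‖ = ξ 0 * (ξ 0 / ‖ξ‖) + ξ 1 * (ξ 1 / ‖ξ‖) := by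
          rcases eq_or_ne ξ 0 with rfl | h
          · simp
          · have h0 := norm_ne_zero_iff.mpr h
            have : ‖ξ‖ ^ 2 = ξ 0 ^ 2 + ξ 1 ^ 2 := by
              rw [EuclideanSpace.norm_sq_eq, Fin.sum_univ_two]; simp
            field_simp; linarith
        exact_mod_cast h3
      simp only [stSymb, riesz, hip, inner_zero_right, mul_zero, add_zero, zero_add, mul_one]
      rw [Complex.ofReal_mul, h2]
      ring
    simp only [hd hg, hd' (hg.riesz _), Fin.sum_univ_two]
    rw [h1, halfWave_lin κ ((hg.riesz 0).stSymb κ _).integrable ((hg.riesz 1).stSymb κ _).integrable]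
    rw [← mul_add, Complex.re_ofReal_mul, Complex.add_re, ← hκ]
    ring
  · have h1 : stSymb κ (riesz j g) (1, 0) = fun ξ => (κ : ℂ) * stSymb κ g (0, bv j) ξ + 0 * stSymb κ g (0, bv j) ξ := by
      ext ξ
      simp only [stSymb, riesz, hip, inner_zero_right, mul_zero, add_zero, zero_add, mul_one, zero_mul]
      conv_rhs => rw [← riesz_mul_norm j ξ]
      push_cast
      ring
    rw [hd hg, hd' (hg.riesz _), h1, halfWave_lin κ (hg.stSymb κ _).integrable (hg.stSymb κ _).integrable, zero_mul, add_zero,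
      Complex.re_ofReal_mul, ← hb, ← hκ]
    ring

/-! ### Representation of solutions by half waves -/

/-- The frequency profile of a real Schwartz function `f`: its inverse Fourier transform, so that
`f` is the half wave generated by it at time `0`. -/
def profile (f : SchwartzMap Plane ℝ) : SchwartzMap Plane ℂ :=
  FourierTransform.fourierInv (f.postcompCLM Complex.ofRealCLM)

theorem rapidDecay_schwartz (f : SchwartzMap Plane ℂ) : RapidDecay f :=
  ⟨f.continuous.measurable, fun n => SchwartzMap.integrable_pow_mul volume f n⟩

theorem halfWave_profile (f : SchwartzMap Plane ℝ) (x : Plane) :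
    halfWave 0 (profile f) 0 x = (f x : ℂ) := by
  have h0 : phased 0 (profile f) 0 = profile f := by ext ξ; simp [phased]
  rw [halfWave_eq_fourier, h0, ← SchwartzMap.fourier_coe]
  unfold profile
  rw [FourierTransform.fourier_fourierInv_eq]
  rfl

theorem halfWave_time_zero (κ : ℝ) (g : Plane → ℂ) (x : Plane) :
    halfWave κ g 0 x = halfWave 0 g 0 x := by
  simp [halfWave]

/-- If `G` is the frequency profile of `F`, the amplitude of the derivative in direction `w` is the
frequency profile of `∂_w F`. -/
theorem halfWave_deriv_zero {G : Plane → ℂ} (hG : RapidDecay G) {F : Plane → ℝ} (hF : Differentiable ℝ F)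
    (h : ∀ x, halfWave 0 G 0 x = (F x : ℂ)) (w x : Plane) :
    halfWave 0 (stSymb 0 G (0, w)) 0 x = (fderiv ℝ F x w : ℂ) := by
  have h1 := hasFDerivAt_slice (contDiff_halfWave_joint 0 hG) 0 x
  simp only [h] at h1
  have h2 := (Complex.ofRealCLM.hasFDerivAt (x := F x)).comp x (hF x).hasFDerivAt
  have h3 := DFunLike.congr_fun (h1.unique h2) w
  have h4 := fderiv_halfWave_joint 0 hG ((0 : ℝ), x) (0, w)
  simp only at h4
  rw [← h4]
  simpa using h3

/-- The amplitude of the half wave with velocity of sign `s` in the solution whose initial density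
and potential have frequency profiles `h` and `G`. -/
def amp (a : ℝ) (h G : Plane → ℂ) (s : ℝ) (ξ : Plane) : ℂ :=
  (1 / 2 : ℂ) * h ξ + (-(s / (2 * a) : ℝ) : ℂ) * stSymb 1 G (1, 0) ξ

theorem RapidDecay.const_mul {g : Plane → ℂ} (hg : RapidDecay g) (c : ℂ) : RapidDecay fun ξ => c * g ξ :=
  hg.of_le (measurable_const.mul hg.meas) ‖c‖ 0 fun ξ => by simp

theorem RapidDecay.amp {h G : Plane → ℂ} (hh : RapidDecay h) (hG : RapidDecay G) (a s : ℝ) :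
    RapidDecay (amp a h G s) :=
  (hh.const_mul _).add ((hG.stSymb 1 (1, 0)).const_mul _)

theorem inner_bv (ξ : Plane) (j : Fin 2) : inner ℝ ξ (bv j) = ξ j := by
  simp [bv, EuclideanSpace.inner_single_right]

/-- A solution is the sum of two half waves of speeds `a/ε` and `-a/ε`: both sides solve the first-order
system and have the same data. -/
theorem acoustic_repr {a ε : ℝ} (ha : 0 < a) (hε : 0 < ε) {ψ Ψ : ℝ → Plane → ℝ} (hs : IsAcousticSolution a ε ψ Ψ)
    {h G : Plane → ℂ} (hh : RapidDecay h) (hG : RapidDecay G) (hψ : ∀ x, halfWave 0 h 0 x = (ψ 0 x : ℂ))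
    (hΨ : ∀ x, halfWave 0 G 0 x = (Ψ 0 x : ℂ)) (t : ℝ) (x : Plane) :
    ψ t x = (halfWave (a / ε) (amp a h G 1) t x).re + 1 * (halfWave (-a / ε) (amp a h G (-1)) t x).re ∧
    ∀ j, fderiv ℝ (Ψ t) x (bv j) = -a * (halfWave (a / ε) (riesz j (amp a h G 1)) t x).re +
      1 * (-(-a) * (halfWave (-a / ε) (riesz j (amp a h G (-1))) t x).re) := by
  have hA := fun s => hh.amp hG a s
  have hd : Differentiable ℝ (Ψ 0) := by
    have := hs.2.1.comp (contDiff_const.prodMk contDiff_id : ContDiff ℝ _ fun x : Plane => ((0 : ℝ), x))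
    exact this.differentiable (by simp)
  refine AcSol.eq ha hε.ne' hs.acSol ((acSol_halfWave (κ := a / ε) (b := a) (by field_simp) rfl (hA 1)).lin
    (acSol_halfWave (κ := -a / ε) (b := -a) (by field_simp) (by ring) (hA (-1))) 1) (fun x => ?_) (fun j x => ?_) t x
  · have h1 := halfWave_lin 0 (hA 1).integrable (hA (-1)).integrable 1 1 0 x
    have h2 : (fun ξ => 1 * amp a h G 1 ξ + 1 * amp a h G (-1) ξ) = h := by
      ext ξ; unfold amp; push_cast; ring
    rw [h2, hψ] at h1
    have h3 := congrArg Complex.re h1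
    simp only [halfWave_time_zero (a / ε), halfWave_time_zero (-a / ε)]
    simpa using h3
  · have h1 := halfWave_lin 0 ((hA 1).riesz j).integrable ((hA (-1)).riesz j).integrable (-a : ℝ) (a : ℝ) 0 x
    have h2 : (fun ξ => ((-a : ℝ) : ℂ) * riesz j (amp a h G 1) ξ + (a : ℝ) * riesz j (amp a h G (-1)) ξ) =
        stSymb 0 G (0, bv j) := by
      ext ξ
      unfold riesz amp stSymb
      simp only [inner_bv, inner_zero_right, mul_zero, add_zero, zero_add, mul_one, zero_mul, one_mul]
      conv_rhs => rw [← riesz_mul_norm j ξ]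
      have : (a : ℂ) ≠ 0 := by exact_mod_cast ha.ne'
      push_cast
      field_simp
      ring
    rw [h2, halfWave_deriv_zero hG hd hΨ] at h1
    have h3 := congrArg Complex.re h1
    simp only [halfWave_time_zero (a / ε), halfWave_time_zero (-a / ε)]
    rw [Complex.add_re, Complex.re_ofReal_mul, Complex.re_ofReal_mul, Complex.ofReal_re] at h3
    rw [h3]
    ring

/-! ### Bounds for superpositions of half waves -/

theorem wn_mono {f g : Plane → ℂ} (h : ∀ ξ, ‖f ξ‖ ≤ ‖g ξ‖) (i : ℕ) : wn i f ≤ wn i g := by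
  unfold wn
  refine eLpNorm_mono_real fun ξ => ?_
  rw [Real.norm_of_nonneg (by positivity)]
  have := h ξ
  gcongr

/-- The potential enters the amplitude only through `|ξ| G(ξ)`, hence through its gradient. -/
theorem wn_amp_le {a : ℝ} (ha : 0 < a) {h G : Plane → ℂ} (hh : Measurable h) (hG : Measurable G) {s : ℝ} (hs : |s| = 1) (i : ℕ) :
    wn i (amp a h G s) ≤ wn i h + ENNReal.ofReal a⁻¹ * (wn i (stSymb 0 G (0, bv 0)) + wn i (stSymb 0 G (0, bv 1))) := by
  have hpi := Real.pi_pos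
  have hm : ∀ j, Measurable (stSymb 0 G (0, bv j)) := fun j => by unfold stSymb; fun_prop
  have e0 : ∀ j ξ, ‖stSymb 0 G (0, bv j) ξ‖ = 2 * Real.pi * (|ξ j| * ‖G ξ‖) := by
    intro j ξ
    unfold stSymb
    simp [inner_bv, abs_of_pos hpi]
  have e1 : ∀ ξ, ‖stSymb 1 G (1, 0) ξ‖ ≤ ‖stSymb 0 G (0, bv 0) ξ‖ + ‖stSymb 0 G (0, bv 1) ξ‖ := by
    intro ξ
    rw [e0, e0]
    have e2 : ‖ξ‖ ≤ |ξ 0| + |ξ 1| := by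
      rw [EuclideanSpace.norm_eq]
      simp only [Fin.sum_univ_two, Real.norm_eq_abs]
      rw [Real.sqrt_le_left (by positivity)]
      nlinarith [abs_nonneg (ξ 0), abs_nonneg (ξ 1)]
    have e3 : ‖stSymb 1 G (1, 0) ξ‖ = 2 * Real.pi * (‖ξ‖ * ‖G ξ‖) := by
      unfold stSymb
      simp [abs_of_pos hpi]
    rw [e3, ← mul_add, ← add_mul]
    gcongr
  have hpt : ∀ ξ, ‖‖ξ‖ ^ i * ‖amp a h G s ξ‖‖ ≤ ((fun ξ => ‖ξ‖ ^ i * ‖h ξ‖) + a⁻¹ •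
      ((fun ξ => ‖ξ‖ ^ i * ‖stSymb 0 G (0, bv 0) ξ‖) + fun ξ => ‖ξ‖ ^ i * ‖stSymb 0 G (0, bv 1) ξ‖)) ξ := by
    intro ξ
    rw [Real.norm_of_nonneg (by positivity)]
    simp only [Pi.add_apply, Pi.smul_apply, smul_eq_mul]
    have e4 : ‖amp a h G s ξ‖ ≤ ‖h ξ‖ + a⁻¹ * (‖stSymb 0 G (0, bv 0) ξ‖ + ‖stSymb 0 G (0, bv 1) ξ‖) := by
      unfold amp
      refine (norm_add_le _ _).trans ?_
      have e5 : ‖(1 / 2 : ℂ)‖ = 1 / 2 := by simp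
      have e9 : ‖s / (2 * a)‖ = 1 / (2 * a) := by
        rw [norm_div, Real.norm_eq_abs, hs, Real.norm_of_nonneg (by positivity)]
      rw [norm_mul, norm_mul, norm_neg, Complex.norm_real, e5, e9]
      have e6 : 1 / (2 * a) ≤ a⁻¹ := by
        rw [one_div]; exact inv_anti₀ ha (by linarith)
      have e7 := norm_nonneg (h ξ)
      have e8 := e1 ξ
      have : 1 / (2 * a) * ‖stSymb 1 G (1, 0) ξ‖ ≤ a⁻¹ * (‖stSymb 0 G (0, bv 0) ξ‖ + ‖stSymb 0 G (0, bv 1) ξ‖) := by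
        gcongr
      linarith
    calc _ ≤ ‖ξ‖ ^ i * (‖h ξ‖ + a⁻¹ * (‖stSymb 0 G (0, bv 0) ξ‖ + ‖stSymb 0 G (0, bv 1) ξ‖)) := by gcongr
      _ = _ := by ring
  have m0 : Measurable fun ξ : Plane => ‖ξ‖ ^ i * ‖h ξ‖ := by fun_prop
  have m1 : ∀ j, Measurable fun ξ : Plane => ‖ξ‖ ^ i * ‖stSymb 0 G (0, bv j) ξ‖ := fun j => by
    have := hm j
    fun_prop
  unfold wn
  refine (eLpNorm_mono_real hpt).trans ((eLpNorm_add_le m0.aestronglyMeasurable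
    (((m1 0).add (m1 1)).const_smul a⁻¹).aestronglyMeasurable (by norm_num)).trans ?_)
  rw [eLpNorm_const_smul, ← ofReal_norm, Real.norm_of_nonneg (by positivity)]
  gcongr
  exact eLpNorm_add_le (m1 0).aestronglyMeasurable (m1 1).aestronglyMeasurable (by norm_num)

/-- Strichartz estimate for a finite superposition of half waves. -/
theorem superposition_strichartz (p q : ℝ) (hp : 2 < p) (hq : 2 / q = 1 / 2 - 1 / p) (k : ℕ) :
    ∃ C : ℝ≥0∞, C ≠ ⊤ ∧ ∀ {F ι : Type} [NormedAddCommGroup F] [NormedSpace ℝ F] [Fintype ι] (L : ι → ℂ →L[ℝ] F)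
      (κ : ι → ℝ) (g : ι → Plane → ℂ), (∀ i, κ i ≠ 0) → (∀ i, RapidDecay (g i)) → ∀ f : ℝ → Plane → F,
      (∀ t x, f t x = ∑ i, L i (halfWave (κ i) (g i) t x)) →
      LqTimeNorm q (fun t => sobNorm k (ENNReal.ofReal p) (f t)) ≤
        ∑ i, ENNReal.ofReal ‖L i‖ * (C * ENNReal.ofReal |(κ i)⁻¹| ^ (1 / q) * ∑ n ∈ Finset.range (k + 2), wn n (g i)) := by
  have hp0 : 0 < p := by linarith
  have hq1 : 1 ≤ q := by
    have h0 : 0 < 2 / q := by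
      rw [hq, sub_pos, one_div_lt_one_div hp0 (by norm_num)]; exact hp
    have h1 : 0 < q := by
      by_contra h
      exact absurd h0 (not_lt.mpr (div_nonpos_of_nonneg_of_nonpos (by norm_num) (not_lt.mp h)))
    have h2 : 2 / q ≤ 1 / 2 := by rw [hq]; have : 0 < 1 / p := by positivity
                                  linarith
    rw [div_le_div_iff₀ h1 (by norm_num)] at h2
    linarith
  have hp1 : 1 ≤ ENNReal.ofReal p := by rw [← ENNReal.ofReal_one]; exact ENNReal.ofReal_le_ofReal (by linarith)
  obtain ⟨C, hC, hest⟩ := halfWave_strichartz p q hp hq k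
  refine ⟨C, hC, fun {F ι} _ _ _ L κ g hκ hg f hf => ?_⟩
  choose M hM hM1 hM2 using fun i => hest (κ i) (hκ i) (g i) (hg i)
  calc _ ≤ LqTimeNorm q (fun t => ∑ i, ENNReal.ofReal ‖L i‖ * M i t) := by
        refine LqTimeNorm_mono q (by linarith) fun t => ?_
        rw [show f t = fun x => ∑ i, L i (halfWave (κ i) (g i) t x) from funext (hf t)]
        have hc : ∀ i, ContDiff ℝ k (halfWave (κ i) (g i) t) := fun i => contDiff_halfWave (κ i) (hg i) t k
        refine (sobNorm_sum_le k _ hp1 Finset.univ _ fun i _ => (L i).contDiff.comp (hc i)).trans ?_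
        refine Finset.sum_le_sum fun i _ => (sobNorm_clm_le k _ (L i) _ (hc i)).trans ?_
        gcongr
        exact hM1 i t
    _ ≤ ∑ i, LqTimeNorm q (fun t => ENNReal.ofReal ‖L i‖ * M i t) :=
        LqTimeNorm_sum_le q hq1 _ _ fun i _ => (hM i).const_mul _
    _ ≤ _ := by
        refine Finset.sum_le_sum fun i _ => ?_
        rw [LqTimeNorm_const_mul q (by linarith) _ _ (hM i)]
        gcongr
        exact hM2 i

/-! ### Bounds in terms of the data and the conclusion -/

theorem norm_bvProj_le (j : Fin 2) : ‖(innerSL ℝ (bv j) : Plane →L[ℝ] ℝ)‖ ≤ 1 := by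
  rw [innerSL_apply_norm, norm_bv]

theorem gradient_inner (u : Plane → ℝ) (x : Plane) (j : Fin 2) : inner ℝ (bv j) (gradient u x) = fderiv ℝ u x (bv j) := by
  rw [real_inner_comm]
  unfold gradient; rw [InnerProductSpace.toDual_symm_apply]

theorem gradient_eq_sum (u : Plane → ℝ) (x : Plane) : gradient u x = ∑ j, fderiv ℝ u x (bv j) • bv j := by
  have h : ∀ j, (gradient u x) j = fderiv ℝ u x (bv j) := fun j => by
    rw [← inner_bv, real_inner_comm, gradient_inner]
  ext i
  rw [h]
  fin_cases i <;> simp [bv]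

/-- Each partial derivative is the gradient composed with a linear functional of norm at most `1`. -/
theorem sobNorm_partial_le {u : SchwartzMap Plane ℝ} (m : ℕ) (j : Fin 2) :
    sobNorm m 2 (fun x => fderiv ℝ u x (bv j)) ≤ sobNorm m 2 (fun x => gradient u x) := by
  have hc : ContDiff ℝ m (fun x => gradient u x) := by
    have h1 : ContDiff ℝ m (fderiv ℝ u) := (u.smooth (m + 1)).fderiv_right (by simp)
    exact (InnerProductSpace.toDual ℝ Plane).symm.toContinuousLinearEquiv.contDiff.comp h1
  have h := sobNorm_clm_le m 2 (innerSL ℝ (bv j) : Plane →L[ℝ] ℝ) _ hc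
  simp only [innerSL_apply_apply, gradient_inner] at h
  refine h.trans (mul_le_of_le_one_left zero_le ?_)
  rw [← ENNReal.ofReal_one]
  exact ENNReal.ofReal_le_ofReal (norm_bvProj_le j)

/-- The weighted norms of the amplitudes in terms of the data `u = ψ₀` and `∇v = ∇_hΨ₀`. -/
theorem sum_wn_amp_le {a : ℝ} (ha : 0 < a) (u v : SchwartzMap Plane ℝ) {k m : ℕ} (hk : k + 1 ≤ m) {s : ℝ} (hs : |s| = 1) :
    ∑ i ∈ Finset.range (k + 2), wn i (amp a (profile u) (profile v) s) ≤
      (k + 2 : ℕ) * (2 + 4 * ENNReal.ofReal a⁻¹) * (sobNorm m 2 u + sobNorm m 2 (fun x => gradient v x)) := by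
  have hv : ∀ i ≤ m, ∀ j, wn i (stSymb 0 (profile v) (0, bv j)) ≤ 2 * sobNorm m 2 (fun x => gradient v x) := by
    intro i hi j
    have h1 := wn_le_sobNorm ((rapidDecay_schwartz (profile v)).stSymb 0 (0, bv j))
      (by have := (profile v).continuous; unfold stSymb; fun_prop)
      (LineDeriv.lineDerivOp (bv j) v) (fun x => by
        rw [halfWave_deriv_zero (rapidDecay_schwartz _) v.differentiable (halfWave_profile v)]
        rfl) hi
    exact h1.trans (mul_le_mul_right (sobNorm_partial_le m j) 2)
  have hterm : ∀ i ∈ Finset.range (k + 2), wn i (amp a (profile u) (profile v) s) ≤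
      (2 + 4 * ENNReal.ofReal a⁻¹) * (sobNorm m 2 u + sobNorm m 2 (fun x => gradient v x)) := by
    intro i hi
    have hi' : i ≤ m := by have := Finset.mem_range.mp hi; omega
    refine (wn_amp_le ha (profile u).continuous.measurable (profile v).continuous.measurable hs i).trans ?_
    calc _ ≤ 2 * sobNorm m 2 u + ENNReal.ofReal a⁻¹ *
          (2 * sobNorm m 2 (fun x => gradient v x) + 2 * sobNorm m 2 (fun x => gradient v x)) := by
          gcongr
          · exact wn_le_sobNorm (rapidDecay_schwartz _) (profile u).continuous u (halfWave_profile u) hi'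
          · exact hv i hi' 0
          · exact hv i hi' 1
      _ = 2 * sobNorm m 2 u + 4 * ENNReal.ofReal a⁻¹ * sobNorm m 2 (fun x => gradient v x) := by ring
      _ ≤ (2 + 4 * ENNReal.ofReal a⁻¹) * sobNorm m 2 u + (2 + 4 * ENNReal.ofReal a⁻¹) * sobNorm m 2 (fun x => gradient v x) := by
          gcongr
          · exact le_self_add
          · exact le_add_self
      _ = _ := by ring
  refine (Finset.sum_le_card_nsmul _ _ _ hterm).trans (le_of_eq ?_)
  rw [Finset.card_range, nsmul_eq_mul]
  ring

/-- **Strichartz (dispersive `L^p–L^q`) estimates for the acoustic system.**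
Let `a > 0`, `m ≥ 1`, `p ∈ (2,∞)`, `2/q = 1/2 − 1/p`, and `0 ≤ k ≤ m−1`.  There is a constant
`c` independent of `ε` such that for every `ε ∈ (0,1)` and every smooth spatially Schwartz
solution `(ψ,Ψ)` of the acoustic system with data `ψ₀, ∇_hΨ₀ ∈ W^{m,2}(ℝ²)`,
`‖ψ‖_{L^q(ℝ;W^{k,p})} + ‖∇_hΨ‖_{L^q(ℝ;W^{k,p})} ≤ c ε^{1/q} (‖ψ₀‖_{W^{m,2}} + ‖∇_hΨ₀‖_{W^{m,2}})`. -/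
theorem acoustic_strichartz (a : ℝ) (ha : 0 < a) (m : ℕ) (hm : 1 ≤ m)
    (p q : ℝ) (hp : 2 < p) (hq : 2 / q = 1 / 2 - 1 / p) (k : ℕ) (hk : k ≤ m - 1) :
    ∃ c : ℝ, 0 < c ∧ ∀ ε : ℝ, ε ∈ Set.Ioo (0:ℝ) 1 → ∀ ψ Ψ : ℝ → Plane → ℝ,
      IsAcousticSolution a ε ψ Ψ →
      sobNorm m 2 (ψ 0) ≠ ⊤ →
      sobNorm m 2 (fun x => gradient (Ψ 0) x) ≠ ⊤ →
      LqTimeNorm q (fun t => sobNorm k (ENNReal.ofReal p) (ψ t))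
          + LqTimeNorm q (fun t => sobNorm k (ENNReal.ofReal p) (fun x => gradient (Ψ t) x))
        ≤ ENNReal.ofReal (c * ε ^ (1 / q)) *
            (sobNorm m 2 (ψ 0) + sobNorm m 2 (fun x => gradient (Ψ 0) x)) := by
  have hq0 : 0 ≤ 1 / q := by
    have h0 : 0 < 2 / q := by
      rw [hq, sub_pos, one_div_lt_one_div (by linarith) (by norm_num)]; exact hp
    have h1 : 1 / q = 2 / q / 2 := by ring
    rw [h1]; positivity
  obtain ⟨C, hC, hest⟩ := superposition_strichartz p q hp hq k
  -- the density is a sum of two half waves, and the gradient a sum of four terms with coefficient of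
  -- size `a`, which gives the factor `2 + 4a`; the factor `a⁻¹ ^ (1/q)` comes from `|κ⁻¹| = ε/a`
  obtain ⟨D, hD⟩ : ∃ D : ℝ≥0∞, D = (2 + 4 * ENNReal.ofReal a) *
      (C * ENNReal.ofReal (a⁻¹ ^ (1 / q)) * ((k + 2 : ℕ) * (2 + 4 * ENNReal.ofReal a⁻¹))) := ⟨_, rfl⟩
  have hDt : D ≠ ⊤ := by
    rw [hD]
    have h1 : ∀ r : ℝ, (2 + 4 * ENNReal.ofReal r) ≠ ⊤ := fun r =>
      ENNReal.add_ne_top.mpr ⟨by norm_num, ENNReal.mul_ne_top (by norm_num) ENNReal.ofReal_ne_top⟩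
    exact ENNReal.mul_ne_top (h1 a) (ENNReal.mul_ne_top (ENNReal.mul_ne_top hC ENNReal.ofReal_ne_top)
      (ENNReal.mul_ne_top (ENNReal.natCast_ne_top _) (h1 _)))
  -- the summand `1` makes the constant positive
  refine ⟨D.toReal + 1, by positivity, ?_⟩
  rintro ε ⟨hε, -⟩ ψ Ψ hs - -
  have hsm : ∀ (φ : ℝ → Plane → ℝ), ContDiff ℝ (⊤ : ℕ∞) (fun p : ℝ × Plane => φ p.1 p.2) →
      ContDiff ℝ (⊤ : ℕ∞) (φ 0) := fun φ h =>
    h.comp (contDiff_const.prodMk contDiff_id : ContDiff ℝ _ fun x : Plane => ((0 : ℝ), x))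
  obtain ⟨u, hu⟩ : ∃ u : SchwartzMap Plane ℝ, (u : Plane → ℝ) = ψ 0 :=
    ⟨⟨ψ 0, hsm ψ hs.1, hs.2.2.1 0⟩, rfl⟩
  obtain ⟨v, hv⟩ : ∃ v : SchwartzMap Plane ℝ, (v : Plane → ℝ) = Ψ 0 :=
    ⟨⟨Ψ 0, hsm Ψ hs.2.1, hs.2.2.2.1 0⟩, rfl⟩
  rw [← hu, ← hv]
  have hru := rapidDecay_schwartz (profile u)
  have hrv := rapidDecay_schwartz (profile v)
  have hrep := acoustic_repr ha hε hs hru hrv (by rw [← hu]; exact halfWave_profile u)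
    (by rw [← hv]; exact halfWave_profile v)
  obtain ⟨A, hA⟩ : ∃ A : ℝ → Plane → ℂ, A = amp a (profile u) (profile v) := ⟨_, rfl⟩
  have hAr : ∀ s, RapidDecay (A s) := fun s => by rw [hA]; exact hru.amp hrv a s
  rw [← hA] at hrep
  obtain ⟨N, hN⟩ : ∃ N, N = sobNorm m 2 u + sobNorm m 2 (fun x => gradient v x) := ⟨_, rfl⟩
  have hsum : ∀ s : ℝ, |s| = 1 → ∑ i ∈ Finset.range (k + 2), wn i (A s) ≤
      (k + 2 : ℕ) * (2 + 4 * ENNReal.ofReal a⁻¹) * N := fun s h => by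
    rw [hA, hN]; exact sum_wn_amp_le ha u v (by omega) h
  have hsumR : ∀ (s : ℝ) (j : Fin 2), |s| = 1 → ∑ i ∈ Finset.range (k + 2), wn i (riesz j (A s)) ≤
      (k + 2 : ℕ) * (2 + 4 * ENNReal.ofReal a⁻¹) * N := fun s j h =>
    (Finset.sum_le_sum fun i _ => wn_mono (norm_riesz_le j (A s)) i).trans (hsum s h)
  have hne : a / ε ≠ 0 := by positivity
  have hpow : ∀ s : Fin 2, ENNReal.ofReal |((![a / ε, -a / ε] : Fin 2 → ℝ) s)⁻¹| ^ (1 / q) =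
      ENNReal.ofReal (a⁻¹ ^ (1 / q)) * ENNReal.ofReal (ε ^ (1 / q)) := by
    intro s
    have h1 : |((![a / ε, -a / ε] : Fin 2 → ℝ) s)⁻¹| = a⁻¹ * ε := by
      fin_cases s
      · simp [abs_of_pos ha, abs_of_pos hε, div_eq_mul_inv, mul_comm]
      · simp [abs_of_pos ha, abs_of_pos hε, div_eq_mul_inv, mul_comm]
    rw [h1, ENNReal.ofReal_rpow_of_nonneg (by positivity) hq0, Real.mul_rpow (by positivity) hε.le,
      ENNReal.ofReal_mul (by positivity)]
  have hκ : ∀ s : Fin 2, (![a / ε, -a / ε] : Fin 2 → ℝ) s ≠ 0 := by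
    intro s
    fin_cases s
    · exact hne
    · simpa using ⟨ha.ne', hε.ne'⟩
  obtain ⟨σ, hσ⟩ : ∃ σ : Fin 2 → ℝ, σ = ![1, -1] := ⟨_, rfl⟩
  have hσ1 : ∀ s, |σ s| = 1 := by intro s; rw [hσ]; fin_cases s <;> simp
  have hre : ‖Complex.reCLM‖ = 1 := Complex.reCLM_norm
  obtain ⟨E, hE⟩ : ∃ E, E = C * (ENNReal.ofReal (a⁻¹ ^ (1 / q)) * ENNReal.ofReal (ε ^ (1 / q))) *
      ((k + 2 : ℕ) * (2 + 4 * ENNReal.ofReal a⁻¹) * N) := ⟨_, rfl⟩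
  have hψ : LqTimeNorm q (fun t => sobNorm k (ENNReal.ofReal p) (ψ t)) ≤ 2 * E := by
    refine (hest (ι := Fin 2) (fun _ => Complex.reCLM) ![a / ε, -a / ε] (fun s => A (σ s)) hκ (fun s => hAr _) ψ
      fun t x => ?_).trans ?_
    · rw [(hrep t x).1, Fin.sum_univ_two, hσ]
      simp
    · calc _ ≤ ∑ _s : Fin 2, E := by
            refine Finset.sum_le_sum fun s _ => ?_
            rw [hre, ENNReal.ofReal_one, one_mul, hpow, hE]
            gcongr
            exact hsum _ (hσ1 s)
        _ = 2 * E := by simp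
  have hΨ : LqTimeNorm q (fun t => sobNorm k (ENNReal.ofReal p) (fun x => gradient (Ψ t) x)) ≤
      4 * ENNReal.ofReal a * E := by
    refine (hest (ι := Fin 2 × Fin 2) (fun i => Complex.reCLM.smulRight ((-(σ i.1 * a)) • bv i.2))
      (fun i => (![a / ε, -a / ε] : Fin 2 → ℝ) i.1) (fun i => riesz i.2 (A (σ i.1))) (fun i => hκ i.1)
      (fun i => (hAr _).riesz i.2) (fun t x => gradient (Ψ t) x) fun t x => ?_).trans ?_
    · rw [gradient_eq_sum, Fintype.sum_prod_type_right]
      refine Finset.sum_congr rfl fun j _ => ?_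
      rw [(hrep t x).2 j, Fin.sum_univ_two, hσ]
      simp only [ContinuousLinearMap.smulRight_apply, smul_smul, ← add_smul, Complex.reCLM_apply]
      congr 1
      simp
      ring
    · calc _ ≤ ∑ _i : Fin 2 × Fin 2, ENNReal.ofReal a * E := by
            refine Finset.sum_le_sum fun i _ => ?_
            have h1 : ‖Complex.reCLM.smulRight ((-(σ i.1 * a)) • bv i.2)‖ = a := by
              rw [ContinuousLinearMap.norm_smulRight_apply, hre, norm_smul, norm_bv, norm_neg, norm_mul,
                Real.norm_eq_abs, hσ1, Real.norm_of_nonneg ha.le]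
              ring
            rw [h1, hpow, hE]
            gcongr
            exact hsumR _ _ (hσ1 i.1)
        _ = 4 * ENNReal.ofReal a * E := by
            simp [Fintype.card_prod]; ring
  calc _ ≤ 2 * E + 4 * ENNReal.ofReal a * E := add_le_add hψ hΨ
    _ = D * ENNReal.ofReal (ε ^ (1 / q)) * N := by rw [hE, hD]; ring
    _ ≤ ENNReal.ofReal ((D.toReal + 1) * ε ^ (1 / q)) * N := by
        rw [ENNReal.ofReal_mul (by positivity)]
        gcongr
        rw [ENNReal.le_ofReal_iff_toReal_le hDt (by positivity)]
        linarith
    _ = _ := by rw [hN]
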